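/- arXiv:2601.11083 — 2 statements merged into one kernel-verified Lean document; each statement's English description precedes it below -/
import Mathlib

section
/- Let t ≥ 0 be an integer, let a_0,…,a_t ≥ 0 and b_1,…,b_t ≥ 3 be integers, and define the sequence (c_1,…,c_n) = ([2]^{a_0}, b_1, [2]^{a_1}, b_2, …, b_t, [2]^{a_t}), where [x]^a denotes the entry x repeated a times (so n = t + a_0 + ⋯ + a_t), and assume n ≥ 1. Let p > q > 0 be the coprime integers with p/q = [c_1,…,c_n]⁻. Define the sequence (d_1,…,d_{n'}) = (a_0+1, [0]^{b_1−3}, a_1+1, [0]^{b_2−3}, …, [0]^{b_t−3}, a_t+1), so that n' = t + 1 + (b_1−3) + ⋯ + (b_t−3). Then p/(p−q) = [w_1,…,w_{n'}]⁻, where w_j = d_j + 2 if 1 < j < n', w_j = d_j + 1 if n' > 1 and j ∈ {1, n'}, and w_1 = d_1 if n' = 1. -/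
namespace LensPaper

/-- Negative continued fraction `[a₁,…,aₙ]⁻ = a₁ - 1/[a₂,…,aₙ]⁻` (the empty list is sent
to `0`; with the junk value `1/0 = 0` this gives `[aₙ]⁻ = aₙ`). -/
def negCF : List ℤ → ℚ
  | [] => 0
  | a :: l => (a : ℚ) - 1 / negCF l

/-- inner weights -/
def fw : List ℤ → List ℤ
  | [] => []
  | x :: l => (x + (if l = [] then 1 else 2)) :: fw l

/-- full weights -/
def gw : List ℤ → List ℤ
  | [] => []
  | x :: l => (x + (if l = [] then 0 else 1)) :: fw l

/-- tail of c -/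
def CT (L : List (ℤ × ℕ)) : List ℤ :=
  (L.map fun x => x.1 :: List.replicate x.2 (2 : ℤ)).flatten

/-- tail of d -/
def DT (L : List (ℤ × ℕ)) : List ℤ :=
  (L.map fun x => List.replicate (x.1 - 3).toNat (0 : ℤ) ++ [(x.2 : ℤ) + 1]).flatten

lemma fw_length (l : List ℤ) : (fw l).length = l.length := by
  induction l with
  | nil => rfl
  | cons x l ih => simp [fw, ih]

lemma gw_length (l : List ℤ) : (gw l).length = l.length := by
  cases l with
  | nil => rfl
  | cons x l => simp [gw, fw_length]

lemma fw_get (l : List ℤ) (j : ℕ) (h : j < (fw l).length) (h' : j < l.length) :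
    (fw l)[j] = l[j] + (if j = l.length - 1 then 1 else 2) := by
  induction l generalizing j with
  | nil => simp at h'
  | cons x l ih =>
    cases j with
    | zero => cases l <;> simp [fw]
    | succ j =>
      have h2 : j < l.length := by simpa using h'
      have := ih j (by rw [fw_length]; exact h2) h2
      simp only [fw, List.getElem_cons_succ, this, List.length_cons]
      congr 1
      have : (j = l.length - 1) ↔ (j + 1 = l.length + 1 - 1) := by omega
      simp only [this]

lemma gw_get (l : List ℤ) (j : ℕ) (h : j < (gw l).length) (h' : j < l.length) :
    (gw l)[j] = l[j] + (if l.length = 1 then 0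
         else if j = 0 ∨ j = l.length - 1 then 1 else 2) := by
  cases l with
  | nil => simp at h'
  | cons x l =>
    cases j with
    | zero => cases l <;> simp [gw]
    | succ j =>
      have h2 : j < l.length := by simpa using h'
      have := fw_get l j (by rw [fw_length]; exact h2) h2
      simp only [gw, List.getElem_cons_succ, this, List.length_cons]
      congr 1
      have h3 : ¬ (l.length + 1 = 1) := by omega
      have : (j = l.length - 1) ↔ (j + 1 = 0 ∨ j + 1 = l.length + 1 - 1) := by omega
      simp only [this, h3, if_false]

lemma fw_rep (k : ℕ) (x : ℤ) (l : List ℤ) :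
    fw (List.replicate k 0 ++ x :: l) = List.replicate k 2 ++ fw (x :: l) := by
  induction k with
  | zero => simp
  | succ k ih => simp [List.replicate_succ, fw, ih]

/-- the statement `1/v = 1 - u` -/
def Dual (u v : ℚ) : Prop := 0 ≤ u ∧ u < 1 ∧ v = 1 / (1 - u)

lemma dual_two (u v : ℚ) (h : Dual u v) : Dual (1 / (2 - u)) (v + 1) := by
  obtain ⟨h0, h1, rfl⟩ := h
  have h2 : (0:ℚ) < 1 - u := by linarith
  have h3 : (0:ℚ) < 2 - u := by linarith
  have e : 1 - 1 / (2 - u) = (1 - u) / (2 - u) := by field_simp; ring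
  refine ⟨by positivity, ?_, ?_⟩
  · rw [div_lt_one h3]; linarith
  · rw [e, one_div_div]; field_simp; ring

lemma dual_inc (x v : ℚ) (hx : 1 < x) (h : Dual (1 / x) v) : Dual (1 / (x + 1)) (2 - 1 / v) := by
  obtain ⟨h0, h1, rfl⟩ := h
  have h3 : (0:ℚ) < x := by linarith
  have e : 1 - 1 / (x + 1) = x / (x + 1) := by field_simp; ring
  refine ⟨by positivity, ?_, ?_⟩
  · rw [div_lt_one (by linarith)]; linarith
  · rw [e, one_div_div, one_div_div, div_one]; field_simp; ring

lemma dual_rep (u : ℚ) (hu : 0 ≤ u) (hu1 : u < 1) (l : List ℤ) (k : ℕ)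
    (h : Dual (1 / (2 - u)) (negCF l)) :
    Dual (1 / ((k : ℚ) + 2 - u)) (negCF (List.replicate k 2 ++ l)) := by
  induction k with
  | zero => simpa using h
  | succ k ih =>
    have hk : (0:ℚ) ≤ k := by positivity
    have := dual_inc _ _ (by linarith) ih
    simp only [List.replicate_succ, List.cons_append, negCF]
    push_cast
    convert this using 2
    ring

lemma DT_nil (L : List (ℤ × ℕ)) : DT L = [] ↔ L = [] := by
  cases L <;> simp [DT]

lemma main (L : List (ℤ × ℕ)) (hL : ∀ x ∈ L, 3 ≤ x.1) (a : ℕ) :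
    Dual (1 / negCF (List.replicate a 2 ++ CT L)) (negCF (gw (((a : ℤ) + 1) :: DT L))) := by
  induction L generalizing a with
  | nil =>
    induction a with
    | zero => simp [CT, DT, gw, fw, negCF, Dual]
    | succ a ih =>
      have := dual_two _ _ ih
      simp only [List.replicate_succ, List.cons_append, negCF, gw] at this ⊢
      convert this using 1
      all_goals (push_cast; ring)
  | cons y L ih =>
    obtain ⟨b, a'⟩ := y
    have hb : 3 ≤ b := hL (b, a') (by simp)
    induction a with
    | zero =>
      have h := ih (fun x hx => hL x (by simp [hx])) a'
      have h2 := dual_two _ _ h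
      obtain ⟨k, hk⟩ := Int.eq_ofNat_of_zero_le (show 0 ≤ b - 3 by omega)
      obtain rfl : b = k + 3 := by omega
      have e1 : negCF (gw (((a' : ℤ) + 1) :: DT L)) + 1 = negCF (fw (((a' : ℤ) + 1) :: DT L)) := by
        simp only [gw, fw, negCF]
        split_ifs <;> push_cast <;> ring
      rw [e1] at h2
      have h3 := dual_rep _ h.1 h.2.1 _ (k + 1) h2
      have e2 : DT (((k:ℤ) + 3, a') :: L) = List.replicate k 0 ++ ((a' : ℤ) + 1) :: DT L := by
        simp [DT]
      have e3 : CT (((k:ℤ) + 3, a') :: L) = ((k:ℤ) + 3) :: (List.replicate a' 2 ++ CT L) := by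
        simp [CT]
      rw [e2, e3]
      simp only [gw, fw_rep]
      simp only [List.replicate_succ, List.cons_append, negCF, List.replicate_zero, List.nil_append] at h3 ⊢
      convert h3 using 2
      · push_cast; ring
      · simp
    | succ a ih =>
      have := dual_two _ _ ih
      simp only [List.replicate_succ, List.cons_append, negCF, gw] at this ⊢
      convert this using 1
      all_goals (push_cast; ring)

/-- Lemma 3.5 (Riemenschneider duality), with the dual weights read off from the
adjusted-weight sequence `d`. -/
theorem statement0 (t : ℕ) (a : Fin (t + 1) → ℕ) (b : Fin t → ℤ)
    (hb : ∀ i, 3 ≤ b i)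
    (c : List ℤ)
    (hc : c = List.replicate (a 0) (2 : ℤ) ++
      (List.ofFn fun i : Fin t => b i :: List.replicate (a i.succ) (2 : ℤ)).flatten)
    (hn : c ≠ [])
    (p q : ℤ) (hq : 0 < q) (hqp : q < p) (hcop : Int.gcd p q = 1)
    (hcf : negCF c = (p : ℚ) / (q : ℚ))
    (d : List ℤ)
    (hd : d = ((a 0 : ℤ) + 1) :: (List.ofFn fun i : Fin t =>
      List.replicate (b i - 3).toNat (0 : ℤ) ++ [(a i.succ : ℤ) + 1]).flatten)
    (wseq : List ℤ) (hlen : wseq.length = d.length)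
    (hw : ∀ j : Fin wseq.length, wseq.get j =
      d.get (Fin.cast hlen j) +
        (if d.length = 1 then 0
         else if (j : ℕ) = 0 ∨ (j : ℕ) = d.length - 1 then 1 else 2)) :
    negCF wseq = (p : ℚ) / ((p : ℚ) - (q : ℚ)) := by
  set L : List (ℤ × ℕ) := List.ofFn fun i : Fin t => (b i, a i.succ) with hLdef
  have hL : ∀ x ∈ L, 3 ≤ x.1 := by
    intro x hx
    rw [hLdef, List.mem_ofFn] at hx
    obtain ⟨i, rfl⟩ := hx
    exact hb i
  have hc' : c = List.replicate (a 0) 2 ++ CT L := by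
    rw [hc, CT, hLdef, List.map_ofFn]; rfl
  have hd' : d = ((a 0 : ℤ) + 1) :: DT L := by
    rw [hd, DT, hLdef, List.map_ofFn]; rfl
  have hwg : wseq = gw d := by
    apply List.ext_getElem
    · rw [gw_length, hlen]
    · intro j h1 h2
      rw [gw_get d j h2 (by omega)]
      simpa using hw ⟨j, h1⟩
  obtain ⟨-, -, h⟩ := main L hL (a 0)
  rw [hwg, hd', h, ← hc', hcf, one_div_div]
  have hp : (p : ℚ) ≠ 0 := by exact_mod_cast (by omega : p ≠ 0)
  have : 1 - (q : ℚ) / p = (p - q) / p := by field_simp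
  rw [this, one_div_div]

end LensPaper
end

section
/- Suppose Γ is a configuration satisfying the Working Conditions with at least one bad vertex, and let φ be an embedding of Γ into ℤ^N. If every screw of Γ (with respect to φ) is clean, then the restriction of φ to the vertices of the outside part of Γ is standard. -/
namespace LensPaper

/-- A finite weighted simple graph: the combinatorial data underlying a configuration
(a disjoint union of weighted linear graphs).  The fact that every connected component
is a path is recorded separately by `Config.IsLinear`. -/
structure Config where
  V : Type
  fin : Fintype V
  deq : DecidableEq V
  graph : SimpleGraph V
  adjDec : DecidableRel graph.Adj
  w : V → ℤ

attribute [instance] Config.fin Config.deq Config.adjDec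

namespace Config

/-- The degree of a vertex. -/
noncomputable def deg (C : Config) (v : C.V) : ℕ := (C.graph.neighborSet v).ncard

/-- A configuration: every component is a path, i.e. all degrees are at most `2` and the
graph is acyclic. -/
def IsLinear (C : Config) : Prop :=
  (∀ v : C.V, C.deg v ≤ 2) ∧ C.graph.IsAcyclic

/-- The adjusted weight `w'(v) = w(v) - deg(v)`. -/
noncomputable def adjw (C : Config) (v : C.V) : ℤ := C.w v - C.deg v

/-- A vertex is bad if it is adjacent to two distinct vertices of positive adjusted
weight. -/
def IsBad (C : Config) (x : C.V) : Prop :=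
  ∃ u v : C.V, u ≠ v ∧ C.graph.Adj x u ∧ C.graph.Adj x v ∧ 0 < C.adjw u ∧ 0 < C.adjw v

/-- A leaf: a vertex of degree at most one. -/
def IsLeaf (C : Config) (v : C.V) : Prop := C.deg v ≤ 1

/-- `v 0, v 1, …, v m` is a chain of consecutive (distinct) vertices. -/
def IsChain (C : Config) (m : ℕ) (v : ℕ → C.V) : Prop :=
  (∀ i ≤ m, ∀ j ≤ m, v i = v j → i = j) ∧ ∀ i < m, C.graph.Adj (v i) (v (i + 1))

/-- The chain `v 0, …, v m` has the list `p` as its sequence of adjusted weights. -/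
def ChainPattern (C : Config) (m : ℕ) (v : ℕ → C.V) (p : List ℤ) : Prop :=
  C.IsChain m v ∧ m + 1 = p.length ∧ ∀ i : Fin p.length, C.adjw (v i) = p.get i

/-- `Γ` contains a chain of consecutive vertices whose adjusted weights, read in order,
form the list `p`. -/
def HasPattern (C : Config) (p : List ℤ) : Prop := ∃ m v, C.ChainPattern m v p

/-- A chain realizing a bad-part pattern `p` (each entry of `p` is an adjusted weight
together with a flag marking the bad positions): the chain has the prescribed adjusted
weights, and the bad vertices of the configuration are exactly the vertices of the chain
in the flagged positions. -/
def IsBadPartChain (C : Config) (p : List (ℤ × Bool)) (m : ℕ) (v : ℕ → C.V) : Prop :=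
  C.IsChain m v ∧ m + 1 = p.length ∧
  (∀ i : Fin p.length, C.adjw (v i) = (p.get i).1) ∧
  (∀ x : C.V, C.IsBad x ↔ ∃ i : Fin p.length, (p.get i).2 = true ∧ v i = x)

end Config

/-- The chains of adjusted weights forbidden by Working Condition VI. -/
def forbiddenPatterns : List (List ℤ) :=
  [[1, 0, 0, 2], [1, 0, 0, 3], [1, 0, 0, 0, 3], [1, 1, 0, 0, 1, 2], [3, 1, 0, 0, 1],
   [1, 0, 1, 2], [1, 0, 1, 3], [1, 1, 0, 2], [1, 1, 0, 1, 1, 2]]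

/-- The bad-part patterns of Working Condition VII; `true` marks the bad positions. -/
def badPatterns : List (List (ℤ × Bool)) :=
  [[(1, false), (0, true), (1, false)],
   [(1, false), (0, true), (2, false)],
   [(1, false), (0, true), (3, false)],
   [(1, false), (1, true), (1, false)],
   [(1, false), (1, true), (2, false)],
   [(1, false), (2, true), (1, false)],
   [(1, false), (0, true), (1, false), (0, true), (1, false)],
   [(1, false), (0, true), (1, false), (0, true), (2, false)],
   [(1, false), (0, true), (1, false), (1, true), (1, false)],
   [(1, false), (0, true), (1, false), (1, true), (2, false)],
   [(1, false), (1, true), (1, true), (1, false)],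
   [(1, false), (1, true), (1, true), (1, true), (1, false)],
   [(1, false), (1, true), (2, true), (1, false)]]

namespace Config

/-- The Working Conditions (I)–(VII). -/
def WorkingConditions (C : Config) : Prop :=
  (∀ v : C.V, 2 ≤ C.w v) ∧
  (∀ v : C.V, C.adjw v ≤ 3) ∧
  (∀ u v : C.V, 1 < C.adjw u → 1 < C.adjw v → u = v) ∧
  (∀ v x : C.V, 1 < C.adjw v → C.IsBad x → C.adjw x = 1 → C.graph.Adj x v) ∧
  ((∃ v : C.V, C.adjw v = 3) →
     ∀ u u' : C.V, C.graph.Adj u u' → C.adjw u = 1 → C.adjw u' = 1 → False) ∧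
  (∀ u v x : C.V, C.graph.Adj u v → C.adjw u = 1 → C.adjw v = 1 →
     C.IsBad x → C.adjw x = 2 → C.graph.Adj x u ∨ C.graph.Adj x v) ∧
  (∀ p ∈ forbiddenPatterns, ¬ C.HasPattern p) ∧
  ((∃ x : C.V, C.IsBad x) → ∃ p ∈ badPatterns, ∃ m v, C.IsBadPartChain p m v)

end Config

/-- The standard inner product on `ℤ^N`. -/
def dot {N : ℕ} (x y : Fin N → ℤ) : ℤ := ∑ i, x i * y i

/-- The support of a vector of `ℤ^N` with respect to the standard orthonormal basis. -/
def supp {N : ℕ} (x : Fin N → ℤ) : Finset (Fin N) :=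
  Finset.univ.filter fun i => x i ≠ 0

namespace Config

/-- An embedding of a configuration into `ℤ^N`. -/
def IsEmbedding (C : Config) (N : ℕ) (φ : C.V → Fin N → ℤ) : Prop :=
  ∀ u v : C.V, dot (φ u) (φ v) =
    if u = v then C.w u else if C.graph.Adj u v then -1 else 0

/-- The restriction of `φ` to `S` is standard. -/
def IsStandardOn (C : Config) (N : ℕ) (φ : C.V → Fin N → ℤ) (S : Set C.V) : Prop :=
  ∀ u ∈ S, ∀ v ∈ S,
    ((supp (φ u) ∩ supp (φ v)).card : ℤ) =
      if u = v then C.w v else if C.graph.Adj u v then 1 else 0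

/-- A standard embedding. -/
def IsStandard (C : Config) (N : ℕ) (φ : C.V → Fin N → ℤ) : Prop :=
  C.IsStandardOn N φ Set.univ

/-- The restriction of `φ` to `S` is semi-standard at `x`. -/
def IsSemiStandardAtOn (C : Config) (N : ℕ) (φ : C.V → Fin N → ℤ) (x : C.V)
    (S : Set C.V) : Prop :=
  (∀ u ∈ S, ∀ v ∈ S,
    ((supp (φ u) ∩ supp (φ v)).card : ℤ) =
      if u = v then C.w v
      else if C.graph.Adj u v then 1
      else if C.graph.Adj x u ∧ C.graph.Adj x v then 2
      else 0) ∧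
  (∀ u ∈ S, ∀ v ∈ S, u ≠ v → C.graph.Adj x u → C.graph.Adj x v →
    (supp (φ u) ∩ supp (φ x) ∩ supp (φ v)).card = 1)

/-- A semi-standard embedding: semi-standard at some bad vertex. -/
def IsSemiStandard (C : Config) (N : ℕ) (φ : C.V → Fin N → ℤ) : Prop :=
  ∃ x : C.V, C.IsBad x ∧ C.IsSemiStandardAtOn N φ x Set.univ

/-- A candidate for the extended bad part: a chain containing the bad part whose two
ends are either leaves or preceded by two consecutive vertices of vanishing adjusted
weight. -/
def IsEBPCand (C : Config) (m : ℕ) (v : ℕ → C.V) : Prop :=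
  C.IsChain m v ∧
  (∀ p ∈ badPatterns, ∀ mb vb, C.IsBadPartChain p mb vb →
     ∀ i ≤ mb, ∃ j ≤ m, v j = vb i) ∧
  (C.IsLeaf (v 0) ∨ (2 ≤ m ∧ C.adjw (v 1) = 0 ∧ C.adjw (v 2) = 0)) ∧
  (C.IsLeaf (v m) ∨ (2 ≤ m ∧ C.adjw (v (m - 1)) = 0 ∧ C.adjw (v (m - 2)) = 0))

/-- The extended bad part: a candidate with the fewest vertices. -/
def IsExtBadPart (C : Config) (m : ℕ) (v : ℕ → C.V) : Prop :=
  C.IsEBPCand m v ∧ ∀ m' v', C.IsEBPCand m' v' → m ≤ m'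

/-- The set of vertices of the chain `v 0, …, v m`. -/
def ebpSet (C : Config) (m : ℕ) (v : ℕ → C.V) : Set C.V := {y | ∃ i ≤ m, v i = y}

/-- The outside part of `Γ` relative to the extended bad part `v 0, …, v m`. -/
def OutsidePart (C : Config) (m : ℕ) (v : ℕ → C.V) : Set C.V :=
  {x | ∀ i ≤ m, v i ≠ x}
  ∪ {x | ¬ C.IsLeaf (v 0) ∧ (x = v 0 ∨ x = v 1 ∨ x = v 2)}
  ∪ {x | ¬ C.IsLeaf (v m) ∧ (x = v m ∨ x = v (m - 1) ∨ x = v (m - 2))}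

/-- A screw at the front end of the extended bad part. -/
def IsFrontScrew (C : Config) (N : ℕ) (φ : C.V → Fin N → ℤ) (m : ℕ) (v : ℕ → C.V)
    (e : Fin N) : Prop :=
  ¬ C.IsLeaf (v 0) ∧ 3 ≤ m ∧ φ (v 2) e ≠ 0 ∧ φ (v 3) e ≠ 0

/-- A screw at the back end of the extended bad part. -/
def IsBackScrew (C : Config) (N : ℕ) (φ : C.V → Fin N → ℤ) (m : ℕ) (v : ℕ → C.V)
    (e : Fin N) : Prop :=
  ¬ C.IsLeaf (v m) ∧ 3 ≤ m ∧ φ (v (m - 2)) e ≠ 0 ∧ φ (v (m - 3)) e ≠ 0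

/-- All screws of `Γ` (with respect to `φ`) are clean. -/
def AllScrewsClean (C : Config) (N : ℕ) (φ : C.V → Fin N → ℤ) (m : ℕ)
    (v : ℕ → C.V) : Prop :=
  (∀ e : Fin N, C.IsFrontScrew N φ m v e →
    ∀ u : C.V, u ≠ v 2 → u ≠ v 3 → φ u e = 0) ∧
  (∀ e : Fin N, C.IsBackScrew N φ m v e →
    ∀ u : C.V, u ≠ v (m - 2) → u ≠ v (m - 3) → φ u e = 0)

end Config

section
/-! ### Integer inner products -/

def ip {ι : Type*} [Fintype ι] (x y : ι → ℤ) : ℤ := ∑ i, x i * y i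

section ipsec
variable {ι : Type*} [Fintype ι] (x y z : ι → ℤ)

theorem ip_comm : ip x y = ip y x := by simp [ip, mul_comm]
theorem ip_add_left : ip (x + y) z = ip x z + ip y z := by
  simp [ip, add_mul, Finset.sum_add_distrib]
theorem ip_add_right : ip x (y + z) = ip x y + ip x z := by
  simp [ip, mul_add, Finset.sum_add_distrib]
theorem ip_neg_left : ip (-x) y = - ip x y := by simp [ip]
theorem ip_neg_right : ip x (-y) = - ip x y := by simp [ip]
theorem ip_sub_left : ip (x - y) z = ip x z - ip y z := by
  simp [sub_eq_add_neg, ip_add_left, ip_neg_left]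
theorem ip_sub_right : ip x (y - z) = ip x y - ip x z := by
  simp [sub_eq_add_neg, ip_add_right, ip_neg_right]
theorem ip_zero_left : ip 0 x = 0 := by simp [ip]
theorem ip_zero_right : ip x 0 = 0 := by simp [ip]
theorem ip_smul_left (c : ℤ) : ip (c • x) y = c * ip x y := by
  simp [ip, Finset.mul_sum, mul_assoc]
theorem ip_smul_right (c : ℤ) : ip x (c • y) = c * ip x y := by
  rw [ip_comm, ip_smul_left, ip_comm]
theorem ip_sum_right {α : Type*} (t : Finset α) (f : α → ι → ℤ) :
    ip x (∑ a ∈ t, f a) = ∑ a ∈ t, ip x (f a) := by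
  classical
  induction t using Finset.induction_on with
  | empty => simp [ip_zero_right]
  | insert a t ha ih => rw [Finset.sum_insert ha, Finset.sum_insert ha, ip_add_right, ih]
theorem ip_nn : 0 ≤ ip x x := Finset.sum_nonneg fun i _ => mul_self_nonneg _
theorem ip_nadd : ip (x + y) (x + y) = ip x x + 2 * ip x y + ip y y := by
  rw [ip_add_left, ip_add_right, ip_add_right, ip_comm y x]; ring
theorem ip_nsub : ip (x - y) (x - y) = ip x x - 2 * ip x y + ip y y := by
  rw [ip_sub_left, ip_sub_right, ip_sub_right, ip_comm y x]; ring
variable {x y z}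
theorem ip_eq_zero (h : ip x x ≤ 0) : x = 0 := by
  have h0 : ip x x = 0 := le_antisymm h (ip_nn x)
  rw [ip, Finset.sum_eq_zero_iff_of_nonneg (fun i _ => mul_self_nonneg _)] at h0
  funext i
  simpa using h0 i (Finset.mem_univ i)
theorem ip_eq_of (hx : ip x x ≤ 1) (hy : ip y y ≤ 1) (h : 1 ≤ ip x y) : x = y := by
  have := ip_nsub x y
  exact sub_eq_zero.1 (ip_eq_zero (by omega))
theorem ip_neg_of (hx : ip x x ≤ 1) (hy : ip y y ≤ 1) (h : ip x y ≤ -1) : x = -y := by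
  have := ip_nadd x y
  exact eq_neg_of_add_eq_zero_left (ip_eq_zero (by omega))
theorem bess1 (hy : ip y y = 1) : ip x y ^ 2 ≤ ip x x := by
  have := ip_nn (x - ip x y • y)
  rw [ip_nsub, ip_smul_right, ip_smul_left, ip_smul_right, hy] at this
  nlinarith
theorem bess2 (hy : ip y y = 1) (hz : ip z z = 1) (hyz : ip y z = 0) :
    ip x y ^ 2 + ip x z ^ 2 ≤ ip x x := by
  have h := bess1 (x := x - ip x y • y) hz
  rw [ip_nsub, ip_sub_left, ip_smul_right, ip_smul_left, ip_smul_left, ip_smul_right, hy, hyz] at h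
  nlinarith
theorem bess3 {t : ι → ℤ} (hy : ip y y = 1) (hz : ip z z = 1) (ht : ip t t = 1)
    (hyz : ip y z = 0) (hyt : ip y t = 0) (hzt : ip z t = 0) :
    ip x y ^ 2 + ip x z ^ 2 + ip x t ^ 2 ≤ ip x x := by
  have h := bess2 (x := x - ip x y • y) hz ht hzt
  rw [ip_nsub, ip_sub_left, ip_sub_left, ip_smul_right, ip_smul_left, ip_smul_left, ip_smul_left,
    ip_smul_right, hy, hyz, hyt] at h
  nlinarith
theorem ip_split [DecidableEq ι] (h : ip x x = 2) :
    ∃ f g : ι → ℤ, ip f f = 1 ∧ ip g g = 1 ∧ ip f g = 0 ∧ x = f + g := by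
  have : ∃ i, x i ≠ 0 := by
    by_contra hc
    push Not at hc
    have : x = 0 := funext hc
    rw [this, ip_zero_left] at h; omega
  obtain ⟨i, hi⟩ := this
  have key : ∀ c : ℤ, ∀ y : ι → ℤ, ip y (Pi.single i c) = y i * c := by
    intro c y; simp [ip, Pi.single_apply]
  have h1 : x i * x i = 1 := by
    have hb := bess1 (x := x) (y := Pi.single i 1) (by rw [key]; simp)
    rw [key, h] at hb
    have : x i < 2 := by nlinarith
    have : -2 < x i := by nlinarith
    interval_cases hx : x i <;> simp_all
  refine ⟨Pi.single i (x i), x - Pi.single i (x i), ?_, ?_, ?_, by simp⟩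
  · rw [key]; simpa using h1
  · rw [ip_nsub, key, key, h]; simp; linarith
  · rw [ip_sub_right, ip_comm _ x, key, key]; simp
theorem abs_le_of (n : ℤ) {a : ℤ} (h : a ^ 2 ≤ n) (hn : n < 4) : a = 0 ∨ a = 1 ∨ a = -1 := by
  have : a < 2 := by nlinarith
  have : -2 < a := by nlinarith
  omega
end ipsec
end

section
/-! ### Abstract linear systems -/

structure Sys (V ι : Type) [Fintype ι] where
  adj : V → V → Prop
  pos : V → ℤ
  φ : V → ι → ℤ
  a : V → ℤ
  O : V → ℤ → Prop
  symm : ∀ u v, adj u v → adj v u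
  p1 : ∀ u v, adj u v → pos v = pos u + 1 ∨ pos v = pos u - 1
  p2 : ∀ u v v', adj u v → adj u v' → pos v = pos v' → v = v'
  gadj : ∀ u v, adj u v → ip (φ u) (φ v) = -1
  gnon : ∀ u v, u ≠ v → ¬ adj u v → ip (φ u) (φ v) = 0
  bdd : ∃ B : ℤ, ∀ v, pos v ≤ B ∧ -B ≤ pos v
  deg : V → ℤ → ℤ
  deg1 : ∀ v d, (∃ u, adj v u ∧ pos u = pos v + d) ∨ O v d → deg v d = 1
  deg0 : ∀ v d, ¬ ((∃ u, adj v u ∧ pos u = pos v + d) ∨ O v d) → deg v d = 0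
  wt : ∀ v, ip (φ v) (φ v) = a v + deg v 1 + deg v (-1)
  two : ∀ v, 2 ≤ ip (φ v) (φ v)
  a3 : ∀ v, a v ≤ 3
  big : ∀ u v, 1 < a u → 1 < a v → u = v
  nb : ∀ b u v, adj b u → adj b v → u ≠ v → 0 < a u → 0 < a v → False
  iv : ∀ t u v, a t = 3 → adj u v → a u = 1 → a v = 1 → False
  f1 : ∀ s : ℤ, s = 1 ∨ s = -1 → ∀ z : ℕ → V,
    (∀ i < 3, adj (z i) (z (i+1)) ∧ pos (z (i+1)) = pos (z i) + s) →
    a (z 0) = 1 → a (z 1) = 0 → a (z 2) = 0 → 2 ≤ a (z 3) → False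
  f2 : ∀ s : ℤ, s = 1 ∨ s = -1 → ∀ z : ℕ → V,
    (∀ i < 4, adj (z i) (z (i+1)) ∧ pos (z (i+1)) = pos (z i) + s) →
    a (z 0) = 1 → a (z 1) = 0 → a (z 2) = 0 → a (z 3) = 0 → a (z 4) = 3 → False
  f3 : ∀ s : ℤ, s = 1 ∨ s = -1 → ∀ z : ℕ → V,
    (∀ i < 5, adj (z i) (z (i+1)) ∧ pos (z (i+1)) = pos (z i) + s) →
    a (z 0) = 1 → a (z 1) = 1 → a (z 2) = 0 → a (z 3) = 0 → a (z 4) = 1 → a (z 5) = 2 → False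
  f4 : ∀ s : ℤ, s = 1 ∨ s = -1 → ∀ z : ℕ → V,
    (∀ i < 4, adj (z i) (z (i+1)) ∧ pos (z (i+1)) = pos (z i) + s) →
    a (z 0) = 1 → a (z 1) = 0 → a (z 2) = 0 → a (z 3) = 1 → a (z 4) = 3 → False
  o1 : ∀ v d, O v d → d = 1 ∨ d = -1
  o2 : ∀ v d u, O v d → adj v u → pos u ≠ pos v + d
  o3 : ∀ v d, O v d → a v = 0
  o4 : ∀ v d d', O v d → O v d' → d = d'
  o5 : ∀ v d, O v d → ∃ e : ι → ℤ, ip e e = 1 ∧ ip (φ v) e = -1 ∧ ∀ u, u ≠ v → ip (φ u) e = 0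

namespace Sys
variable {V ι : Type} [Fintype ι] (S : Sys V ι)

/-- oriented adjacency -/
def step (s : ℤ) (u v : V) : Prop := S.adj u v ∧ S.pos v = S.pos u + s

variable {S}

theorem step_symm {s u v} (h : S.step s u v) : S.step (-s) v u :=
  ⟨S.symm _ _ h.1, by have := h.2; omega⟩
theorem step_uniq {s u v v'} (h : S.step s u v) (h' : S.step s u v') : v = v' :=
  S.p2 u v v' h.1 h'.1 (by rw [h.2, h'.2])
theorem adj_step {u v} (h : S.adj u v) : ∃ s : ℤ, (s = 1 ∨ s = -1) ∧ S.step s u v := by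
  rcases S.p1 u v h with h1 | h1
  · exact ⟨1, .inl rfl, h, h1⟩
  · exact ⟨-1, .inr rfl, h, by omega⟩
theorem ne_of_adj {u v} (h : S.adj u v) : u ≠ v := by
  rintro rfl; have := S.p1 _ _ h; omega
theorem g01 {u v} (h : u ≠ v) : ip (S.φ u) (S.φ v) = 0 ∧ ¬ S.adj u v ∨
    ip (S.φ u) (S.φ v) = -1 ∧ S.adj u v := by
  by_cases h' : S.adj u v
  · exact .inr ⟨S.gadj _ _ h', h'⟩
  · exact .inl ⟨S.gnon _ _ h h', h'⟩
theorem far {u v} (h0 : S.pos v ≠ S.pos u) (h1 : S.pos v ≠ S.pos u + 1)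
    (h2 : S.pos v ≠ S.pos u - 1) : ip (S.φ u) (S.φ v) = 0 :=
  S.gnon _ _ (by rintro rfl; exact h0 rfl) (fun h => by have := S.p1 _ _ h; omega)
theorem deg01 (v : V) (d : ℤ) : S.deg v d = 0 ∨ S.deg v d = 1 := by
  by_cases h : (∃ u, S.adj v u ∧ S.pos u = S.pos v + d) ∨ S.O v d
  · exact .inr (S.deg1 v d h)
  · exact .inl (S.deg0 v d h)
theorem a_nn (v : V) : 0 ≤ S.a v := by
  have := S.wt v; have := S.two v
  have := deg01 (S := S) v 1; have := deg01 (S := S) v (-1); omega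
theorem w_le (v : V) : ip (S.φ v) (S.φ v) ≤ S.a v + 2 := by
  have := S.wt v
  have := deg01 (S := S) v 1; have := deg01 (S := S) v (-1); omega
theorem w_zero {v : V} (h : S.a v = 0) : ip (S.φ v) (S.φ v) = 2 := by
  have := S.two v; have := w_le (S := S) v; omega
theorem w5 (v : V) : ip (S.φ v) (S.φ v) ≤ 5 := by
  have := w_le (S := S) v; have := S.a3 v; omega
theorem three_ne {u v x y : V} (h1 : S.adj x u) (h2 : S.adj x v) (h3 : S.adj x y) (h : u ≠ v)
    (h' : u ≠ y) : v = y := by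
  have a1 := S.p1 _ _ h1; have a2 := S.p1 _ _ h2; have a3 := S.p1 _ _ h3
  have : S.pos u ≠ S.pos v := fun h4 => h (S.p2 _ _ _ h1 h2 h4)
  have : S.pos u ≠ S.pos y := fun h4 => h' (S.p2 _ _ _ h1 h3 h4)
  exact S.p2 _ _ _ h2 h3 (by omega)

theorem ex_step (hO : ∀ v d, ¬ S.O v d) {s v} (hs : s = 1 ∨ s = -1) (h : S.a v + 2 ≤ ip (S.φ v) (S.φ v)) :
    ∃ u, S.step s v u := by
  by_contra hc
  have h1 : S.deg v s = 0 := S.deg0 v s (by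
    rintro (⟨u, h1, h2⟩ | h1)
    · exact hc ⟨u, h1, h2⟩
    · exact hO _ _ h1)
  have := S.wt v
  have := deg01 (S := S) v 1; have := deg01 (S := S) v (-1)
  rcases hs with rfl | rfl <;> omega
theorem ex_adj (hO : ∀ v d, ¬ S.O v d) {v} (h : S.a v + 1 ≤ ip (S.φ v) (S.φ v)) : ∃ u, S.adj v u := by
  by_contra hc
  have h1 : ∀ s, S.deg v s = 0 := fun s => S.deg0 v s (by
    rintro (⟨u, h1, h2⟩ | h1)
    · exact hc ⟨u, h1⟩
    · exact hO _ _ h1)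
  have := S.wt v
  rw [h1, h1] at this; omega
theorem ex_other (hO : ∀ v d, ¬ S.O v d) {v u} (hu : S.adj v u) (h : S.a v + 2 ≤ ip (S.φ v) (S.φ v)) :
    ∃ x, S.adj v x ∧ x ≠ u := by
  obtain ⟨s, hs, h1⟩ := adj_step hu
  obtain ⟨x, hx⟩ := ex_step hO (s := -s) (v := v) (by omega) h
  refine ⟨x, hx.1, ?_⟩
  rintro rfl
  have := hx.2; have := h1.2; omega
theorem ex_other0 (hO : ∀ v d, ¬ S.O v d) {v u} (hu : S.adj v u) (h : S.a v = 0) : ∃ x, S.adj v x ∧ x ≠ u :=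
  ex_other hO hu (by rw [w_zero h]; omega)

theorem walk (hO : ∀ v d, ¬ S.O v d) (s : ℤ) (hs : s = 1 ∨ s = -1) : ∃ B : ℤ, ∀ n : ℕ, ∀ v, S.a v = 0 → B - s * S.pos v ≤ n →
    ∃ (m : ℕ) (c : ℕ → V), 1 ≤ m ∧ c 0 = v ∧ (∀ i < m, S.step s (c i) (c (i+1))) ∧
      (∀ i < m, S.a (c i) = 0) ∧ 0 < S.a (c m) := by
  obtain ⟨B, hB⟩ := S.bdd
  refine ⟨B, fun n => ?_⟩
  induction n with
  | zero =>
    intro v hv hn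
    obtain ⟨u, hu⟩ := ex_step hO hs (v := v) (by rw [w_zero hv]; omega)
    have := hB u; have := hu.2
    rcases hs with rfl | rfl <;> norm_num at hn <;> omega
  | succ n ih =>
    intro v hv hn
    obtain ⟨u, hu⟩ := ex_step hO hs (v := v) (by rw [w_zero hv]; omega)
    by_cases h0 : S.a u = 0
    · obtain ⟨m, c, h1, h2, h3, h4, h5⟩ := ih u h0 (by
        have := hu.2
        rcases hs with rfl | rfl <;> push_cast at hn <;> omega)
      refine ⟨m + 1, fun i => if i = 0 then v else c (i - 1), by omega, by simp, ?_, ?_, ?_⟩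
      · intro i hi
        rcases i with _ | i
        · simpa [h2] using hu
        · simpa using h3 i (by omega)
      · intro i hi
        rcases i with _ | i
        · simpa using hv
        · simpa using h4 i (by omega)
      · simpa using h5
    · refine ⟨1, fun i => if i = 0 then v else u, le_refl _, by simp, ?_, ?_, ?_⟩
      · intro i hi
        obtain rfl : i = 0 := by omega
        simpa using hu
      · intro i hi
        obtain rfl : i = 0 := by omega
        simpa using hv
      · have := a_nn (S := S) u; simp; omega

/-- A maximal run of zeros `z 1, …, z k` between positive vertices `z 0` and `z (k+1)`. -/
structure Run (S : Sys V ι) (s : ℤ) (k : ℕ) (z : ℕ → V) : Prop where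
  hs : s = 1 ∨ s = -1
  k2 : 2 ≤ k
  st : ∀ i ≤ k, S.step s (z i) (z (i + 1))
  zero : ∀ i, 1 ≤ i → i ≤ k → S.a (z i) = 0
  p : 0 < S.a (z 0)
  q : 0 < S.a (z (k + 1))

theorem ex_run (hO : ∀ v d, ¬ S.O v d) {s : ℤ} (hs : s = 1 ∨ s = -1) {v : V} (hv : S.a v = 0) :
    ∃ k z, Run S s k z ∧ ∃ j, 1 ≤ j ∧ j ≤ k ∧ z j = v := by
  obtain ⟨B, hB⟩ := walk hO s hs
  obtain ⟨m, c, h1, h2, h3, h4, h5⟩ := hB (B - s * S.pos v).toNat v hv (Int.self_le_toNat _)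
  obtain ⟨B', hB'⟩ := walk hO (-s) (by omega)
  obtain ⟨m', c', h1', h2', h3', h4', h5'⟩ :=
    hB' (B' - -s * S.pos v).toNat v hv (Int.self_le_toNat _)
  have hst : ∀ i < m + m', S.step s (if i ≤ m' then c' (m' - i) else c (i - m'))
      (if i + 1 ≤ m' then c' (m' - (i+1)) else c (i + 1 - m')) := by
    intro i hi
    by_cases hi1 : i + 1 ≤ m'
    · rw [if_pos (by omega), if_pos hi1]
      have := step_symm (h3' (m' - (i+1)) (by omega))
      rwa [neg_neg, show m' - (i+1) + 1 = m' - i by omega] at this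
    · rw [if_neg hi1]
      by_cases hi2 : i ≤ m'
      · obtain rfl : i = m' := by omega
        rw [if_pos le_rfl, Nat.sub_self, h2', ← h2, show i + 1 - i = 0 + 1 by omega]
        exact h3 0 (by omega)
      · rw [if_neg hi2, show i + 1 - m' = i - m' + 1 by omega]
        exact h3 _ (by omega)
  have hz : ∀ i, 1 ≤ i → i ≤ m + m' - 1 → S.a (if i ≤ m' then c' (m' - i) else c (i - m')) = 0 := by
    intro i hi1 hi2
    split_ifs
    · exact h4' _ (by omega)
    · exact h4 _ (by omega)
  have hp : 0 < S.a (if 0 ≤ m' then c' (m' - 0) else c (0 - m')) := by simpa using h5'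
  have hq : 0 < S.a (if m + m' - 1 + 1 ≤ m' then c' (m' - (m + m' - 1 + 1))
      else c (m + m' - 1 + 1 - m')) := by
    rw [if_neg (by omega), show m + m' - 1 + 1 - m' = m by omega]; exact h5
  refine ⟨m + m' - 1, fun i => if i ≤ m' then c' (m' - i) else c (i - m'),
    ⟨hs, ?_, fun i hi => hst i (by omega), hz, hp, hq⟩, m', h1', by omega, by simp [h2']⟩
  by_contra hk
  have e1 : m = 1 := by omega
  have e2 : m' = 1 := by omega
  subst e1 e2
  have g0 := hst 0 (by omega)
  have g1 := hst 1 (by omega)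
  refine S.nb _ _ _ (S.symm _ _ g0.1) g1.1 ?_ hp hq
  intro h
  have a1 := g0.2
  have a2 := g1.2
  have a3 := congrArg S.pos h
  simp at a1 a2 a3
  omega

namespace Run
variable {s : ℤ} {k : ℕ} {z : ℕ → V}

theorem pos (h : Run S s k z) : ∀ i ≤ k + 1, S.pos (z i) = S.pos (z 0) + s * i := by
  intro i
  induction i with
  | zero => simp
  | succ i ih =>
    intro hi
    rw [(h.st i (by omega)).2, ih (by omega)]; push_cast; ring

theorem posne (h : Run S s k z) {i j} (hi : i ≤ k + 1) (hj : j ≤ k + 1) :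
    S.pos (z i) - S.pos (z j) = i - j ∨ S.pos (z i) - S.pos (z j) = j - i := by
  have h1 := h.pos i hi; have h2 := h.pos j hj
  rcases h.hs with rfl | rfl
  · left; rw [h1, h2]; ring
  · right; rw [h1, h2]; ring

theorem rev (h : Run S s k z) : Run S (-s) k (fun i => z (k + 1 - i)) := by
  refine ⟨by have := h.hs; omega, h.k2, fun i hi => ?_, fun i h1 h2 => h.zero _ (by omega) (by omega),
    by simpa using h.q, by simpa using h.p⟩
  have := step_symm (h.st (k - i) (by omega))
  rwa [show k - i + 1 = k + 1 - i by omega, show k - i = k + 1 - (i + 1) by omega] at this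

theorem gram (h : Run S s k z) {i j} (hi : i ≤ k + 1) (hj : j ≤ k + 1) :
    ip (S.φ (z i)) (S.φ (z j)) =
      if i = j then ip (S.φ (z i)) (S.φ (z i)) else if i + 1 = j ∨ j + 1 = i then -1 else 0 := by
  split_ifs with h1 h2
  · rw [h1]
  · rcases h2 with rfl | rfl
    · exact S.gadj _ _ (h.st i (by omega)).1
    · exact S.gadj _ _ (S.symm _ _ (h.st j (by omega)).1)
  · have := h.posne hi hj
    apply far <;> omega

/-- A neighbour of a vertex outside the closed run is not in the open run. -/
theorem nbr_out (h : Run S s k z) {v u} (hv : ∀ i ≤ k + 1, v ≠ z i) (ha : S.adj v u) :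
    ∀ i, 1 ≤ i → i ≤ k → u ≠ z i := by
  rintro i h1 h2 rfl
  have b1 := (h.st (i - 1) (by omega)); have b2 := h.st i h2
  rw [show i - 1 + 1 = i by omega] at b1
  have c1 := b1.2; have c2 := b2.2
  have c3 : z (i - 1) ≠ z (i + 1) := by
    intro hh
    rw [← hh] at c2
    have := h.hs; omega
  have := three_ne (S.symm _ _ b1.1) b2.1 (S.symm _ _ ha) c3 (hv (i-1) (by omega)).symm
  exact hv (i+1) (by omega) this.symm

theorem nbr_out' (h : Run S s k z) {v u} (hv : ∀ i ≤ k + 1, v ≠ z i) (ha : S.adj v u)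
    (hp : u ≠ z 0) (hq : u ≠ z (k + 1)) : ∀ i ≤ k + 1, u ≠ z i := by
  intro i hi
  rcases Nat.eq_zero_or_pos i with rfl | h1
  · exact hp
  rcases Nat.lt_or_ge k i with h2 | h2
  · obtain rfl : i = k + 1 := by omega
    exact hq
  · exact h.nbr_out hv ha i h1 h2
end Run

/-- Orthonormal data for a run. -/
structure RE (S : Sys V ι) (s : ℤ) (k : ℕ) (z : ℕ → V) (e : ℕ → ι → ℤ) : Prop extends Run S s k z where
  e1 : ∀ i ≤ k, ip (e i) (e i) = 1
  e0 : ∀ i j, i < j → j ≤ k → ip (e i) (e j) = 0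
  ez : ∀ i, 1 ≤ i → i ≤ k → S.φ (z i) = e (i - 1) - e i

theorem ex_RE [DecidableEq ι] {s : ℤ} {k : ℕ} {z : ℕ → V} (h : Run S s k z) : ∃ e, RE S s k z e := by
  have k2 := h.k2
  have hw : ∀ i, 1 ≤ i → i ≤ k → ip (S.φ (z i)) (S.φ (z i)) = 2 :=
    fun i h1 h2 => w_zero (h.zero i h1 h2)
  have hE : ∃ E, ip E E = 1 ∧ ip (S.φ (z 1)) E = 1 ∧
      ∀ j, 2 ≤ j → j ≤ k → ip (S.φ (z j)) E = 0 := by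
    obtain ⟨f, g, hf, hg, hfg, hx⟩ := ip_split (hw 1 le_rfl (by omega))
    wlog hfz : ip (S.φ (z 2)) f = 0 ∧ ip (S.φ (z 2)) g = -1 generalizing f g
    · refine this g f hg hf (by rw [ip_comm]; exact hfg) (by rw [hx, add_comm]) ?_
      have h1 := h.gram (i := 2) (j := 1) (by omega) (by omega)
      rw [hx] at h1
      simp only [ip_add_right] at h1
      norm_num at h1
      have h2 := bess2 (x := S.φ (z 2)) hf hg hfg
      rw [hw 2 (by norm_num) k2] at h2
      have h3 := abs_le_of 2 (a := ip (S.φ (z 2)) f) (by nlinarith) (by norm_num)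
      have h4 := abs_le_of 2 (a := ip (S.φ (z 2)) g) (by nlinarith) (by norm_num)
      omega
    refine ⟨f, hf, by rw [hx, ip_add_left, hf, ip_comm, hfg]; rfl, ?_⟩
    intro j h2 hj
    rcases Nat.eq_or_lt_of_le h2 with rfl | h3
    · exact hfz.1
    by_contra hne
    have h1 := h.gram (i := j) (j := 1) (by omega) (by omega)
    rw [if_neg (by omega), if_neg (by omega), hx, ip_add_right] at h1
    have hb := bess2 (x := S.φ (z j)) hf hg hfg
    rw [hw j (by omega) hj] at hb
    have hc := abs_le_of 2 (a := ip (S.φ (z j)) f) (by nlinarith) (by norm_num)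
    set t := ip (S.φ (z j)) f with ht
    have hgt : ip (S.φ (z j)) g = -t := by omega
    have hzj : S.φ (z j) = t • f - t • g := by
      rw [← sub_eq_zero]
      apply ip_eq_zero
      have tt : t * t = 1 := by
        rcases hc with hc | hc | hc
        · exact absurd hc hne
        · rw [hc]; rfl
        · rw [hc]; rfl
      rw [ip_comm] at ht
      have hgt' := hgt
      rw [ip_comm] at hgt'
      have hgf := hfg
      rw [ip_comm] at hgf
      simp only [ip_nsub, ip_sub_left, ip_sub_right, ip_smul_left, ip_smul_right,
        hw j (by omega) hj, ← ht, hgt, hgt', hf, hg, hfg, hgf, ip_comm (S.φ (z j)) f]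
      nlinarith
    have h5 := h.gram (i := 2) (j := j) (by omega) (by omega)
    rw [hzj, if_neg (by omega)] at h5
    simp only [ip_sub_right, ip_smul_right, hfz.1, hfz.2] at h5
    by_cases hj3 : j = 3
    · subst hj3
      norm_num at h5
      have t1 : t = -1 := by omega
      have h6 := h.gram (i := 0) (j := 3) (by omega) (by omega)
      have h7 := h.gram (i := 0) (j := 1) (by omega) (by omega)
      rw [hzj, t1] at h6
      rw [hx] at h7
      norm_num at h6 h7
      simp only [ip_add_right, ip_neg_right] at h6 h7
      omega
    · rw [if_neg (by omega)] at h5; omega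
  obtain ⟨E, E1, Ez, Ej⟩ := hE
  let e : ℕ → ι → ℤ := fun i => E - ∑ j ∈ Finset.Ioc 0 i, S.φ (z j)
  have hdiff : ∀ i n, e i = e (i + n) + ∑ j ∈ Finset.Ioc i (i + n), S.φ (z j) := by
    intro i n
    simp only [e]
    rw [← Finset.sum_Ioc_consecutive (fun j => S.φ (z j)) (Nat.zero_le i) (Nat.le_add_right i n)]
    abel
  -- norms of consecutive sums
  have hlast : ∀ n i, i + n + 1 ≤ k → ip (S.φ (z (i + n + 1))) (∑ j ∈ Finset.Ioc i (i + n), S.φ (z j))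
      = if n = 0 then 0 else -1 := by
    intro n i hin
    rw [ip_sum_right]
    rcases n with _ | n
    · simp
    · rw [← add_assoc, Finset.sum_Ioc_succ_top (by omega), Finset.sum_eq_zero, h.gram (by omega) (by omega)]
      · simp
      · intro j hj
        simp only [Finset.mem_Ioc] at hj
        rw [h.gram (by omega) (by omega), if_neg (by omega), if_neg (by omega)]
  have hns : ∀ n i, i + n + 1 ≤ k → ip (∑ j ∈ Finset.Ioc i (i + (n + 1)), S.φ (z j))
      (∑ j ∈ Finset.Ioc i (i + (n + 1)), S.φ (z j)) = 2 := by
    intro n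
    induction n with
    | zero => intro i hi; simp [hw (i+1) (by omega) hi]
    | succ n ih =>
      intro i hi
      rw [← add_assoc, Finset.sum_Ioc_succ_top (by omega), ip_nadd, ih i (by omega), ip_comm,
        hlast (n + 1) i (by omega), hw _ (by omega) hi]; simp
  have hES : ∀ n, n + 1 ≤ k → ip E (∑ j ∈ Finset.Ioc 0 (n + 1), S.φ (z j)) = 1 := by
    intro n hn
    induction n with
    | zero => simp [ip_comm E, Ez]
    | succ n ih =>
      rw [Finset.sum_Ioc_succ_top (by omega), ip_add_right, ih (by omega), ip_comm E,
        Ej _ (by omega) (by omega)]; rfl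
  have hu : ∀ i ≤ k, ip (e i) (e i) = 1 := by
    intro i hi
    rcases i with _ | i
    · simp [e, E1]
    · simp only [e, ip_nsub, E1, hES i hi]
      have := hns i 0 (by omega)
      rw [zero_add] at this
      rw [this]; rfl
  refine ⟨e, h, hu, ?_, ?_⟩
  · intro i j hij hj
    obtain ⟨n, rfl⟩ : ∃ n, j = i + (n + 1) := ⟨j - i - 1, by omega⟩
    have h1 := hdiff i (n + 1)
    have h2 : e i - e (i + (n+1)) = ∑ j ∈ Finset.Ioc i (i + (n + 1)), S.φ (z j) := by
      rw [sub_eq_iff_eq_add']; exact h1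
    have h3 := ip_nsub (e i) (e (i + (n + 1)))
    rw [h2, hns n i hj, hu i (by omega), hu _ hj] at h3
    omega
  · intro i h1 h2
    obtain ⟨i, rfl⟩ : ∃ n, i = n + 1 := ⟨i - 1, by omega⟩
    have := hdiff i 1
    simp at this
    simp [this]

namespace RE
variable {s : ℤ} {k : ℕ} {z : ℕ → V} {e : ℕ → ι → ℤ}

theorem out (h : RE S s k z e) {v} (hv : ∀ i ≤ k + 1, v ≠ z i) :
    ∀ i ≤ k, ip (S.φ v) (e i) = ip (S.φ v) (e 0) := by
  intro i
  induction i with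
  | zero => simp
  | succ i ih =>
    intro hi
    have h1 : ip (S.φ v) (S.φ (z (i+1))) = 0 := by
      refine S.gnon _ _ (hv _ (by omega)) fun ha => ?_
      exact h.toRun.nbr_out hv ha (i+1) (by omega) hi rfl
    rw [h.ez (i+1) (by omega) hi, ip_sub_right, Nat.add_sub_cancel, ih (by omega)] at h1
    omega
theorem onz (h : RE S s k z e) {j} (hj : j ≤ k + 1) {i} (h1 : 1 ≤ i) (hi : i ≤ k) :
    ip (S.φ (z j)) (e (i - 1)) - ip (S.φ (z j)) (e i) =
    if j = i then 2 else if j + 1 = i ∨ i + 1 = j then -1 else 0 := by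
  have := h.toRun.gram hj (show i ≤ k + 1 by omega)
  rw [← ip_sub_right, ← h.ez i h1 hi, this]
  split_ifs with h2
  · subst h2; exact w_zero (h.zero j h1 hi)
  · rfl
  · rfl
theorem onp (h : RE S s k z e) : ∀ i, 1 ≤ i → i ≤ k → ip (S.φ (z 0)) (e i) = ip (S.φ (z 0)) (e 0) + 1 := by
  intro i h1
  induction i, h1 using Nat.le_induction with
  | base =>
    intro hi
    have := h.onz (j := 0) (i := 1) (by omega) le_rfl hi
    norm_num at this; omega
  | succ i h1 ih =>
    intro hi
    have := h.onz (j := 0) (i := i+1) (by omega) (by omega) hi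
    rw [Nat.add_sub_cancel, ih (by omega), if_neg (by omega), if_neg (by omega)] at this
    omega
theorem onq (h : RE S s k z e) : ∀ i, i < k → ip (S.φ (z (k+1))) (e i) = ip (S.φ (z (k+1))) (e 0) := by
  intro i
  induction i with
  | zero => simp
  | succ i ih =>
    intro hi
    have := h.onz (j := k+1) (i := i+1) (by omega) (by omega) hi.le
    rw [Nat.add_sub_cancel, ih (by omega), if_neg (by omega), if_neg (by omega)] at this
    omega
theorem onqk (h : RE S s k z e) : ip (S.φ (z (k+1))) (e k) = ip (S.φ (z (k+1))) (e 0) + 1 := by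
  have k2 := h.k2
  have := h.onz (j := k+1) (i := k) (by omega) (by omega) le_rfl
  rw [h.onq (k-1) (by omega), if_neg (by omega), if_pos (by omega)] at this
  omega
end RE

/-- Summarised run data. -/
structure RD (S : Sys V ι) (s : ℤ) (k : ℕ) (z : ℕ → V) (A M B : ι → ℤ) : Prop
    extends Run S s k z where
  nA : ip A A = 1
  nM : ip M M = k - 1
  nB : ip B B = 1
  oAM : ip A M = 0
  oAB : ip A B = 0
  oMB : ip M B = 0
  out : ∀ v, (∀ i ≤ k + 1, v ≠ z i) →
    ip (S.φ v) M = (k - 1) * ip (S.φ v) A ∧ ip (S.φ v) B = ip (S.φ v) A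
  pp : ip (S.φ (z 0)) M = (k - 1) * (ip (S.φ (z 0)) A + 1) ∧
    ip (S.φ (z 0)) B = ip (S.φ (z 0)) A + 1
  qq : ip (S.φ (z (k+1))) M = (k - 1) * ip (S.φ (z (k+1))) A ∧
    ip (S.φ (z (k+1))) B = ip (S.φ (z (k+1))) A + 1

theorem RE.toRD {s : ℤ} {k : ℕ} {z : ℕ → V} {e : ℕ → ι → ℤ} (h : RE S s k z e) :
    RD S s k z (e 0) (∑ i ∈ Finset.Ico 1 k, e i) (e k) := by
  have k2 := h.k2
  have hc : ((Finset.Ico 1 k).card : ℤ) = k - 1 := by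
    rw [Nat.card_Ico]; omega
  have key : ∀ (x : ι → ℤ) (c : ℤ), (∀ i, 1 ≤ i → i < k → ip x (e i) = c) →
      ip x (∑ i ∈ Finset.Ico 1 k, e i) = (k - 1) * c := by
    intro x c hx
    rw [ip_sum_right, Finset.sum_congr rfl (g := fun _ => c)
      (fun i hi => hx i (Finset.mem_Ico.1 hi).1 (Finset.mem_Ico.1 hi).2), Finset.sum_const, ← hc]
    simp
  refine ⟨h.toRun, h.e1 0 (by omega), ?_, h.e1 k le_rfl, ?_, h.e0 0 k (by omega) le_rfl, ?_, ?_, ?_, ?_⟩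
  · rw [key _ 1]
    · ring
    · intro i h1 h2
      rw [ip_comm, ip_sum_right, Finset.sum_eq_single i]
      · exact h.e1 i (by omega)
      · intro j hj hne
        simp only [Finset.mem_Ico] at hj
        rcases Nat.lt_or_gt_of_ne hne with h3 | h3
        · rw [ip_comm]; exact h.e0 _ _ h3 (by omega)
        · exact h.e0 _ _ h3 (by omega)
      · intro h3; exact absurd (Finset.mem_Ico.2 ⟨h1, h2⟩) h3
  · rw [key _ 0]
    · ring
    · intro i h1 h2; exact h.e0 _ _ (by omega) (by omega)
  · rw [ip_comm, key _ 0]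
    · ring
    · intro i h1 h2; rw [ip_comm]; exact h.e0 _ _ (by omega) (by omega)
  · intro v hv
    exact ⟨key _ _ fun i _ h2 => h.out hv i (by omega), h.out hv k le_rfl⟩
  · exact ⟨key _ _ fun i h1 h2 => h.onp i h1 (by omega), h.onp k (by omega) le_rfl⟩
  · exact ⟨key _ _ fun i h1 h2 => h.onq i h2, h.onqk⟩

theorem RD.rev {s : ℤ} {k : ℕ} {z : ℕ → V} {A M B : ι → ℤ} (h : RD S s k z A M B) :
    RD S (-s) k (fun i => z (k + 1 - i)) (-B) (-M) (-A) := by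
  obtain ⟨h0, nA, nM, nB, oAM, oAB, oMB, out, pp, qq⟩ := h
  refine ⟨h0.rev, ?_, ?_, ?_, ?_, ?_, ?_, ?_, ?_, ?_⟩ <;>
    simp only [ip_neg_left, ip_neg_right, neg_neg, nA, nM, nB]
  · rw [ip_comm]; exact oMB
  · rw [ip_comm]; exact oAB
  · rw [ip_comm]; exact oAM
  · intro v hv
    obtain ⟨h1, h2⟩ := out v (fun i hi => by
      have := hv (k + 1 - i) (by omega)
      rwa [show k + 1 - (k + 1 - i) = i by omega] at this)
    rw [h1, h2]; exact ⟨by ring, rfl⟩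
  · rw [Nat.sub_zero, qq.1, qq.2]; exact ⟨by ring, by ring⟩
  · rw [Nat.sub_self, pp.1, pp.2]; exact ⟨by ring, by ring⟩

end Sys
end

section
section
variable {ι : Type} [Fintype ι]
theorem nn2 (c : ℤ) (x : ι → ℤ) (d : ℤ) (y : ι → ℤ) :
    0 ≤ c*c*ip x x + d*d*ip y y + 2*c*d*ip x y := by
  have := ip_nn (c•x + d•y)
  simp only [ip_add_left, ip_add_right, ip_smul_left, ip_smul_right, ip_comm y x] at this
  linarith
theorem zz2 (c : ℤ) (x : ι → ℤ) (d : ℤ) (y : ι → ℤ)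
    (h : c*c*ip x x + d*d*ip y y + 2*c*d*ip x y ≤ 0) (u : ι → ℤ) : c * ip u x + d * ip u y = 0 := by
  have h1 : c•x + d•y = 0 := ip_eq_zero (by
    simp only [ip_add_left, ip_add_right, ip_smul_left, ip_smul_right, ip_comm y x]
    linarith)
  have := congrArg (ip u) h1
  simpa only [ip_add_right, ip_smul_right, ip_zero_right] using this
theorem nn3 (c : ℤ) (x : ι → ℤ) (d : ℤ) (y : ι → ℤ) (e : ℤ) (z : ι → ℤ) :
    0 ≤ c*c*ip x x + d*d*ip y y + e*e*ip z z + 2*c*d*ip x y + 2*c*e*ip x z + 2*d*e*ip y z := by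
  have := nn2 1 (c•x + d•y) e z
  simp only [ip_add_left, ip_add_right, ip_smul_left, ip_smul_right, ip_comm y x] at this
  linarith
theorem zz3 (c : ℤ) (x : ι → ℤ) (d : ℤ) (y : ι → ℤ) (e : ℤ) (z : ι → ℤ)
    (h : c*c*ip x x + d*d*ip y y + e*e*ip z z + 2*c*d*ip x y + 2*c*e*ip x z + 2*d*e*ip y z ≤ 0)
    (u : ι → ℤ) : c * ip u x + d * ip u y + e * ip u z = 0 := by
  have := zz2 1 (c•x + d•y) e z (by
    simp only [ip_add_left, ip_add_right, ip_smul_left, ip_smul_right, ip_comm y x]; linarith) u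
  simp only [ip_add_right, ip_smul_right] at this
  linarith
theorem nn4 (c : ℤ) (x : ι → ℤ) (d : ℤ) (y : ι → ℤ) (e : ℤ) (z : ι → ℤ) (f : ℤ) (t : ι → ℤ) :
    0 ≤ c*c*ip x x + d*d*ip y y + e*e*ip z z + f*f*ip t t + 2*c*d*ip x y + 2*c*e*ip x z
      + 2*d*e*ip y z + 2*c*f*ip x t + 2*d*f*ip y t + 2*e*f*ip z t := by
  have := nn3 1 (c•x + d•y) e z f t
  simp only [ip_add_left, ip_add_right, ip_smul_left, ip_smul_right, ip_comm y x] at this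
  linarith
theorem zz4 (c : ℤ) (x : ι → ℤ) (d : ℤ) (y : ι → ℤ) (e : ℤ) (z : ι → ℤ) (f : ℤ) (t : ι → ℤ)
    (h : c*c*ip x x + d*d*ip y y + e*e*ip z z + f*f*ip t t + 2*c*d*ip x y + 2*c*e*ip x z
      + 2*d*e*ip y z + 2*c*f*ip x t + 2*d*f*ip y t + 2*e*f*ip z t ≤ 0)
    (u : ι → ℤ) : c * ip u x + d * ip u y + e * ip u z + f * ip u t = 0 := by
  have := zz3 1 (c•x + d•y) e z f t (by
    simp only [ip_add_left, ip_add_right, ip_smul_left, ip_smul_right, ip_comm y x]; linarith) u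
  simp only [ip_add_right, ip_smul_right] at this
  linarith
theorem nn5 (c : ℤ) (x : ι → ℤ) (d : ℤ) (y : ι → ℤ) (e : ℤ) (z : ι → ℤ) (f : ℤ) (t : ι → ℤ)
    (g : ℤ) (r : ι → ℤ) :
    0 ≤ c*c*ip x x + d*d*ip y y + e*e*ip z z + f*f*ip t t + 2*c*d*ip x y + 2*c*e*ip x z
      + 2*d*e*ip y z + 2*c*f*ip x t + 2*d*f*ip y t + 2*e*f*ip z t + g*g*ip r r + 2*c*g*ip x r
      + 2*d*g*ip y r + 2*e*g*ip z r + 2*f*g*ip t r := by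
  have := nn4 1 (c•x + d•y) e z f t g r
  simp only [ip_add_left, ip_add_right, ip_smul_left, ip_smul_right, ip_comm y x] at this
  linarith
theorem zz5 (c : ℤ) (x : ι → ℤ) (d : ℤ) (y : ι → ℤ) (e : ℤ) (z : ι → ℤ) (f : ℤ) (t : ι → ℤ)
    (g : ℤ) (r : ι → ℤ)
    (h : c*c*ip x x + d*d*ip y y + e*e*ip z z + f*f*ip t t + 2*c*d*ip x y + 2*c*e*ip x z
      + 2*d*e*ip y z + 2*c*f*ip x t + 2*d*f*ip y t + 2*e*f*ip z t + g*g*ip r r + 2*c*g*ip x r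
      + 2*d*g*ip y r + 2*e*g*ip z r + 2*f*g*ip t r ≤ 0)
    (u : ι → ℤ) : c * ip u x + d * ip u y + e * ip u z + f * ip u t + g * ip u r = 0 := by
  have := zz4 1 (c•x + d•y) e z f t g r (by
    simp only [ip_add_left, ip_add_right, ip_smul_left, ip_smul_right, ip_comm y x]; linarith) u
  simp only [ip_add_right, ip_smul_right] at this
  linarith
theorem int_small {a n : ℤ} (h : a * a ≤ n) (hn : n < 4) : a = 0 ∨ a = 1 ∨ a = -1 :=
  abs_le_of n (by nlinarith) hn
end

namespace Sys
variable {V ι : Type} [Fintype ι] {S : Sys V ι}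

/-- two vertices with a common neighbour -/
theorem two_apart {u v x : V} (h1 : S.adj x u) (h2 : S.adj x v) (h : u ≠ v) :
    S.pos v = S.pos u + 2 ∨ S.pos v = S.pos u - 2 := by
  have := S.p1 _ _ h1; have := S.p1 _ _ h2
  have : S.pos u ≠ S.pos v := fun h4 => h (S.p2 _ _ _ h1 h2 h4)
  omega
theorem ip_two_apart {u v x : V} (h1 : S.adj x u) (h2 : S.adj x v) (h : u ≠ v) :
    ip (S.φ u) (S.φ v) = 0 := by
  have := two_apart h1 h2 h
  apply far <;> omega
/-- path steps all go the same way -/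
theorem step_next {s : ℤ} (hs : s = 1 ∨ s = -1) {u v x : V} (h1 : S.step s u v) (h2 : S.adj v x) (h : x ≠ u) :
    S.step s v x := by
  refine ⟨h2, ?_⟩
  have := two_apart (S.symm _ _ h1.1) h2 h.symm
  have := h1.2; have := S.p1 _ _ h2; omega
theorem f1' {a b c d : V} (h1 : S.adj a b) (h2 : S.adj b c) (h3 : S.adj c d) (hac : c ≠ a) (hbd : d ≠ b)
    (wa : S.a a = 1) (wb : S.a b = 0) (wc : S.a c = 0) (wd : 2 ≤ S.a d) : False := by
  obtain ⟨s, hs, t1⟩ := adj_step h1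
  have t2 := step_next hs t1 h2 hac
  have t3 := step_next hs t2 h3 hbd
  refine S.f1 s hs (fun i => if i = 0 then a else if i = 1 then b else if i = 2 then c else d) ?_ ?_ ?_ ?_ ?_
  · intro i hi
    interval_cases i
    · exact t1
    · exact t2
    · exact t3
  all_goals simpa
variable {s : ℤ} {k : ℕ} {z : ℕ → V} {A M B : ι → ℤ}

theorem Run.f4 (h : Run S s k z) (hk : k = 2) {y : V} (hy : ∀ i ≤ k + 1, y ≠ z i)
    (ha : S.adj (z (k + 1)) y) (h3 : S.a y = 3) : False := by
  subst hk
  have hb : ∀ v, v ≠ y → S.a v ≤ 1 := fun v hv => by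
    by_contra hc; exact hv (S.big _ _ (by omega) (by omega))
  have t3 := step_next h.hs (h.st 2 (by omega)) ha (hy 2 (by omega))
  have := hb _ (hy 0 (by omega)).symm
  have := hb _ (hy 3 (by omega)).symm
  have := h.p; have := h.q
  refine S.f4 s h.hs (fun i => if i = 4 then y else z i) ?_ ?_ ?_ ?_ ?_ ?_
  · intro i hi
    interval_cases i
    · exact h.st 0 (by omega)
    · exact h.st 1 (by omega)
    · exact h.st 2 (by omega)
    · exact t3
  · simp; omega
  · simpa using h.zero 1 (by omega) (by omega)
  · simpa using h.zero 2 (by omega) (by omega)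
  · simp at *; omega
  · simpa

theorem Run.apart (h : Run S s k z) : S.pos (z (k+1)) - S.pos (z 0) = k + 1 ∨
    S.pos (z (k+1)) - S.pos (z 0) = -(k + 1) := by
  have := h.posne (i := k+1) (j := 0) le_rfl (by omega)
  push_cast at this; omega
theorem Run.pq (h : Run S s k z) : ip (S.φ (z 0)) (S.φ (z (k+1))) = 0 := by
  have := h.apart; have := h.k2
  apply far <;> omega
theorem Run.nocommon (h : Run S s k z) {u : V} (h1 : S.adj u (z 0)) (h2 : S.adj u (z (k+1))) : False := by
  have := h.apart; have := h.k2
  have := S.p1 _ _ h1; have := S.p1 _ _ h2; omega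

namespace RD

theorem pcase (h : RD S s k z A M B) : ip (S.φ (z 0)) A = 0 ∨ ip (S.φ (z 0)) A = -1 := by
  have k2 : (2:ℤ) ≤ k := by exact_mod_cast h.k2
  have w := w5 (S := S) (z 0)
  have n := nn4 1 (S.φ (z 0)) (-(ip (S.φ (z 0)) A)) A (-(ip (S.φ (z 0)) A + 1)) M (-(ip (S.φ (z 0)) A + 1)) B
  rw [h.nA, h.nM, h.nB, h.oAM, h.oAB, h.oMB, h.pp.1, h.pp.2] at n
  generalize ip (S.φ (z 0)) A = t at *
  have n2 : t*t + k * ((t+1)*(t+1)) ≤ 5 := by nlinarith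
  have n3 : t*t + 2 * ((t+1)*(t+1)) ≤ 5 := by nlinarith [mul_self_nonneg (t+1)]
  have t1 : -2 < t := by nlinarith
  have t2 : t < 1 := by nlinarith
  omega
theorem qcase (h : RD S s k z A M B) : ip (S.φ (z (k+1))) A = 0 ∨ ip (S.φ (z (k+1))) A = -1 := by
  have := h.rev.pcase
  simp only [Nat.sub_zero, ip_neg_right, h.qq.2] at this
  omega

/-- the sum vector relation -/
theorem small_out (h : RD S s k z A M B) {v : V} (hv : ∀ i ≤ k + 1, v ≠ z i)
    (hw : ip (S.φ v) (S.φ v) ≤ 3 ∨ ip (S.φ v) (S.φ v) ≤ k + 1) : ip (S.φ v) A = 0 := by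
  have k2 : (2:ℤ) ≤ k := by exact_mod_cast h.k2
  have w := w5 (S := S) v
  obtain ⟨o1, o2⟩ := h.out v hv
  have n := nn4 1 (S.φ v) (-(ip (S.φ v) A)) A (-(ip (S.φ v) A)) M (-(ip (S.φ v) A)) B
  rw [h.nA, h.nM, h.nB, h.oAM, h.oAB, h.oMB, o1, o2] at n
  have n2 : (k+1) * (ip (S.φ v) A * ip (S.φ v) A) ≤ ip (S.φ v) (S.φ v) := by nlinarith
  have n3 : 3 * (ip (S.φ v) A * ip (S.φ v) A) ≤ ip (S.φ v) (S.φ v) := by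
    nlinarith [mul_self_nonneg (ip (S.φ v) A)]
  have gp := g01 (S := S) (hv 0 (by omega)).symm
  have gq := g01 (S := S) (hv (k+1) (by omega)).symm
  have pc := h.pcase
  have qc := h.qcase
  have P := h.pp
  have Q := h.qq
  rcases int_small (a := ip (S.φ v) A) (n := 3) (by omega) (by omega) with h0 | h0 | h0
  · exact h0
  · rw [h0] at n2 o1 o2
    have := zz4 1 (S.φ v) (-1) A (-1) M (-1) B (by
      rw [h.nA, h.nM, h.nB, h.oAM, h.oAB, h.oMB, o1, o2, h0]; linarith [show ip (S.φ v) (S.φ v) ≤ k + 1 by omega])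
      (S.φ (z (k+1)))
    rw [Q.1, Q.2] at this
    rcases qc with qc | qc <;> rw [qc] at this <;> omega
  · rw [h0] at n2 o1 o2
    have := zz4 1 (S.φ v) (1) A (1) M (1) B (by
      rw [h.nA, h.nM, h.nB, h.oAM, h.oAB, h.oMB, o1, o2, h0]; linarith [show ip (S.φ v) (S.φ v) ≤ k + 1 by omega])
      (S.φ (z 0))
    rw [P.1, P.2] at this
    rcases pc with pc | pc <;> rw [pc] at this <;> omega
end RD
end Sys
end

section
namespace Sys
variable {V ι : Type} [Fintype ι] {S : Sys V ι}
variable {s : ℤ} {k : ℕ} {z : ℕ → V} {A M B : ι → ℤ}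
theorem quad1 {t u : ℤ} (h : t + u = -1) (h2 : t * t + u * u ≤ 2) : t = 0 ∨ t = -1 := by
  obtain rfl : u = -1 - t := by omega
  have t1 : -2 < t := by nlinarith
  have t2 : t < 1 := by nlinarith
  omega
theorem quad2 {t u : ℤ} (h : t + u = 1) (h2 : t * t + u * u ≤ 2) : t = 0 ∨ t = 1 := by
  have := quad1 (t := -t) (u := -u) (by omega) (by linarith)
  omega
namespace RD

set_option maxHeartbeats 1600000 in
/-- the last configuration of stage one, with `Y = f + f'` of norm two -/
theorem st1c (hO : ∀ v d, ¬ S.O v d) (h : Run S s k z) {y : V} {f f' : ι → ℤ}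
    (hy : ∀ i ≤ k + 1, y ≠ z i) (nA : ip A A = 1) (nB : ip B B = 1) (oAB : ip A B = 0)
    (ay : S.a y = 3) (wy : ip (S.φ y) (S.φ y) = 5)
    (pA : ip (S.φ (z 0)) A = -1) (pB : ip (S.φ (z 0)) B = 0)
    (qA : ip (S.φ (z (k+1))) A = 0) (qB : ip (S.φ (z (k+1))) B = 1)
    (py : ¬ S.adj (z 0) y) (qy : ¬ S.adj (z (k+1)) y)
    (nf : ip f f = 1) (nf' : ip f' f' = 1) (off : ip f f' = 0)
    (oAf : ip A f = 0) (oAf' : ip A f' = 0) (oBf : ip B f = 0) (oBf' : ip B f' = 0)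
    (pf : ip (S.φ (z 0)) f = 1) (pf' : ip (S.φ (z 0)) f' = 0)
    (qff : ip (S.φ (z (k+1))) f + ip (S.φ (z (k+1))) f' = -1)
    (out : ∀ v, v ≠ y → (∀ i ≤ k + 1, v ≠ z i) → ip (S.φ v) A = 0 ∧ ip (S.φ v) B = 0 ∧
      ip (S.φ v) f + ip (S.φ v) f' = ip (S.φ v) (S.φ y)) : False := by
  have hb : ∀ v, v ≠ y → S.a v ≤ 1 ∧ ip (S.φ v) (S.φ v) ≤ 3 := fun v hv => by
    have : S.a v ≤ 1 := by by_contra hc; exact hv (S.big _ _ (by omega) (by omega))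
    have := w_le (S := S) v
    omega
  have hpy := (hy 0 (by omega)).symm
  have hqy := (hy (k+1) (by omega)).symm
  have bp := hb _ hpy
  have bq := hb _ hqy
  have hp := h.p
  have hq := h.q
  have hpq := h.pq
  have hnb : ∀ u v b, S.adj b u → S.adj b v → u ≠ v → 0 < S.a u → S.a v = 0 := fun u v b h1 h2 h3 h4 => by
    have := a_nn (S := S) v
    by_contra hc
    exact S.nb b u v h1 h2 h3 h4 (by omega)
  -- neighbours of y
  obtain ⟨x1, x2, yx1, yx2, x12, ax1⟩ : ∃ x1 x2, S.adj y x1 ∧ S.adj y x2 ∧ x1 ≠ x2 ∧ S.a x1 = 0 := by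
    obtain ⟨u, hu⟩ := ex_adj hO (v := y) (by omega)
    obtain ⟨u', hu', hne⟩ := ex_other hO hu (by omega)
    by_cases h0 : S.a u = 0
    · exact ⟨u, u', hu, hu', hne.symm, h0⟩
    · have := a_nn (S := S) u
      exact ⟨u', u, hu', hu, hne, hnb u u' y hu hu' hne.symm (by omega)⟩
  have ynb : ∀ x, S.adj y x → x ≠ y ∧ ∀ i ≤ k + 1, x ≠ z i := fun x hx =>
    ⟨(ne_of_adj hx).symm, h.nbr_out' hy hx (by rintro rfl; exact py (S.symm _ _ hx))
      (by rintro rfl; exact qy (S.symm _ _ hx))⟩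
  obtain ⟨x1y, x1C⟩ := ynb x1 yx1
  obtain ⟨x2y, x2C⟩ := ynb x2 yx2
  have o1 := out x1 x1y x1C
  have o2 := out x2 x2y x2C
  rw [S.gadj _ _ (S.symm _ _ yx1)] at o1
  rw [S.gadj _ _ (S.symm _ _ yx2)] at o2
  have wx1 := w_zero ax1
  obtain ⟨u, hu, uy⟩ := ex_other0 hO (S.symm _ _ yx1) ax1
  have au := hnb y u x1 (S.symm _ _ yx1) hu uy.symm (by omega)
  have wu := w_zero au
  have ux1 := S.gadj _ _ (S.symm _ _ hu)
  have uy0 := ip_two_apart hu (S.symm _ _ yx1) uy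
  have gx1p := g01 (S := S) (x1C 0 (by omega)).symm
  have gx1q := g01 (S := S) (x1C (k+1) (by omega)).symm
  have hqf : ip (S.φ (z (k+1))) f = 0 ∨ ip (S.φ (z (k+1))) f = -1 := by
    have n := nn4 1 (S.φ (z (k+1))) (-1) B (-(ip (S.φ (z (k+1))) f)) f (-(ip (S.φ (z (k+1))) f')) f'
    rw [nB, nf, nf', off, oBf, oBf', qB] at n
    exact quad1 qff (by linarith only [n, bq.2])
  rcases hqf with qf | qf
  · -- different
    have qf' : ip (S.φ (z (k+1))) f' = -1 := by omega
    have hx1 : ip (S.φ x1) f = 0 ∨ ip (S.φ x1) f = -1 := by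
      have n := nn3 1 (S.φ x1) (-(ip (S.φ x1) f)) f (-(ip (S.φ x1) f')) f'
      rw [nf, nf', off] at n
      exact quad1 o1.2.2 (by linarith only [n, wx1])
    rcases hx1 with xf | xf
    · have xf' : ip (S.φ x1) f' = -1 := by omega
      rw [ip_comm] at gx1q
      have n := nn4 1 (S.φ x1) 1 (S.φ (z (k+1))) (-1) B 2 f'
      have zr := zz4 1 (S.φ x1) 1 (S.φ (z (k+1))) (-1) B 2 f' (by omega)
      have hup : u ≠ z 0 := by
        rintro rfl
        have := zr (S.φ (z 0)); omega
      have huq : u ≠ z (k+1) := by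
        rintro rfl
        rw [ip_comm] at ux1
        omega
      have ou := out u uy (h.nbr_out' x1C hu hup huq)
      have gq := g01 (S := S) huq
      have := zr (S.φ u)
      have haq : S.adj u (z (k+1)) := by
        rcases gq with gq | gq
        · omega
        · exact gq.2
      exact f1' (S.symm _ _ haq) (S.symm _ _ hu) (S.symm _ _ yx1) (x1C _ le_rfl) uy.symm (by omega) au ax1 (by omega)
    · have xp : ip (S.φ x1) (S.φ (z 0)) = 0 := by
        apply S.gnon _ _ (x1C 0 (by omega))
        intro hc
        exact S.nb x1 y (z 0) (S.symm _ _ yx1) hc hpy.symm (by omega) hp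
      have zr := zz4 1 (S.φ x1) (-1) (S.φ (z 0)) (-1) A 2 f (by omega)
      have hup : u ≠ z 0 := by
        rintro rfl
        rw [ip_comm] at ux1
        omega
      have huq : u ≠ z (k+1) := by
        rintro rfl
        have := zr (S.φ (z (k+1)))
        rw [ip_comm (S.φ (z (k+1))) (S.φ (z 0))] at this; omega
      have ou := out u uy (h.nbr_out' x1C hu hup huq)
      have gq := g01 (S := S) hup
      have := zr (S.φ u)
      have haq : S.adj u (z 0) := by
        rcases gq with gq | gq
        · omega
        · exact gq.2
      exact f1' (S.symm _ _ haq) (S.symm _ _ hu) (S.symm _ _ yx1) (x1C _ (by omega)) uy.symm (by omega) au ax1 (by omega)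
  · have qf' : ip (S.φ (z (k+1))) f' = 0 := by omega
    have zr := zz5 1 (S.φ (z 0)) (-1) (S.φ (z (k+1))) 1 A 1 B (-2) f (by omega)
    have key : ∀ v, v ≠ y → (∀ i ≤ k + 1, v ≠ z i) → ip (S.φ v) f = 0 := fun v h1 h2 => by
      have := zr (S.φ v)
      have := out v h1 h2
      have g1 := g01 (S := S) (h2 0 (by omega))
      have g2 := g01 (S := S) (h2 (k+1) (by omega))
      omega
    have xf := key x1 x1y x1C
    have xf2 := key x2 x2y x2C
    have hup : u ≠ z 0 := by
      rintro rfl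
      have := zr (S.φ x1); rw [ip_comm] at ux1
      rcases g01 (S := S) (x1C (k+1) (by omega)) with gq | gq
      · omega
      · exact h.nocommon hu gq.2
    have huq : u ≠ z (k+1) := by
      rintro rfl
      have := zr (S.φ x1); rw [ip_comm] at ux1
      rcases g01 (S := S) (x1C 0 (by omega)) with gq | gq
      · omega
      · exact h.nocommon gq.2 hu
    have uC := h.nbr_out' x1C hu hup huq
    have uf := key u uy uC
    have ou := out u uy uC
    have b2 := hb x2 x2y
    have t1 := two_apart hu (S.symm _ _ yx1) uy
    have t2 := two_apart yx1 yx2 x12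
    have t3 := S.p1 _ _ yx1
    have t4 := S.p1 _ _ yx2
    have t5 := S.p1 _ _ hu
    have t6 := ip_two_apart yx2 yx1 x12.symm
    have ux2 : ip (S.φ x2) (S.φ u) = 0 := by apply far <;> omega
    have zr2 := zz4 1 (S.φ x2) 1 (S.φ u) 2 (S.φ x1) 3 f' (by omega)
    obtain ⟨u', hu', u'x1⟩ := ex_other0 hO (S.symm _ _ hu) au
    have t7 := two_apart (S.symm _ _ hu) hu' u'x1.symm
    have t8 := S.p1 _ _ hu'
    have := zr2 (S.φ u')
    have := ip_two_apart hu' (S.symm _ _ hu) u'x1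
    have := S.gadj _ _ (S.symm _ _ hu')
    have := g01 (S := S) (show u' ≠ x2 by rintro rfl; omega)
    omega

variable [DecidableEq ι]

set_option maxHeartbeats 1600000 in
theorem st1 (hO : ∀ v d, ¬ S.O v d) (h : RD S s k z A M B) {y : V} (hy : ∀ i ≤ k + 1, y ≠ z i)
    (hc : ip (S.φ y) A = 1) : False := by
  have k2 : (2:ℤ) ≤ k := by exact_mod_cast h.k2
  obtain ⟨yM, yB⟩ := h.out y hy
  rw [hc] at yM yB
  have hw : (k:ℤ) + 2 ≤ ip (S.φ y) (S.φ y) := by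
    by_contra hcc
    have := h.small_out hy (.inr (by omega)); omega
  have ay : 2 ≤ S.a y := by have := w_le (S := S) y; omega
  have w5y := w5 (S := S) y
  have hb : ∀ v, v ≠ y → S.a v ≤ 1 ∧ ip (S.φ v) (S.φ v) ≤ 3 := fun v hv => by
    have : S.a v ≤ 1 := by by_contra hc; exact hv (S.big _ _ (by omega) (by omega))
    have := w_le (S := S) v
    omega
  have hpy := (hy 0 (by omega)).symm
  have hqy := (hy (k+1) (by omega)).symm
  have bp := hb _ hpy
  have bq := hb _ hqy
  have hp := h.p
  have hq := h.q
  have hpq := h.toRun.pq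
  obtain ⟨pM, pB⟩ := h.pp
  obtain ⟨qM, qB⟩ := h.qq
  have nA := h.nA
  have nM := h.nM
  have nB := h.nB
  have oAM := h.oAM
  have oAB := h.oAB
  have oMB := h.oMB
  obtain ⟨Y, hY⟩ : ∃ Y : ι → ℤ, ∀ v, ip v Y = ip v (S.φ y) - ip v A - ip v M - ip v B :=
    ⟨S.φ y - A - M - B, fun v => by simp only [ip_sub_right]⟩
  have hA := hY A
  have hM := hY M
  have hB := hY B
  have hyY := hY (S.φ y)
  have hYY := hY Y
  rw [ip_comm Y (S.φ y), ip_comm Y A, ip_comm Y M, ip_comm Y B] at hYY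
  rw [ip_comm A (S.φ y)] at hA
  rw [ip_comm M (S.φ y), ip_comm M A] at hM
  rw [ip_comm B (S.φ y), ip_comm B A, ip_comm B M] at hB
  have AY : ip A Y = 0 := by omega
  have BY : ip B Y = 0 := by omega
  have MY : ip M Y = 0 := by omega
  have nY : ip Y Y = ip (S.φ y) (S.φ y) - (k + 1) := by omega
  clear hA hM hB hyY hYY
  have pY := hY (S.φ (z 0))
  have qY := hY (S.φ (z (k+1)))
  have gp := g01 (S := S) hpy
  have gq := g01 (S := S) hqy
  -- pa = -1
  have pA : ip (S.φ (z 0)) A = -1 := by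
    refine h.pcase.resolve_left fun h0 => ?_
    rw [h0] at pM pB pY
    have := nn4 1 (S.φ (z 0)) (-1) M (-1) B 1 Y
    omega
  rw [pA] at pM pB pY
  have out : ∀ v, v ≠ y → (∀ i ≤ k + 1, v ≠ z i) → ip (S.φ v) A = 0 ∧ ip (S.φ v) B = 0 ∧
      ip (S.φ v) Y = ip (S.φ v) (S.φ y) := fun v h1 h2 => by
    have h3 := h.small_out h2 (.inl (hb v h1).2)
    obtain ⟨h4, h5⟩ := h.out v h2
    have := hY (S.φ v)
    rw [h3] at h4 h5
    refine ⟨h3, h5, by omega⟩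
  rcases h.qcase with qA | qA <;> rw [qA] at qM qB qY
  swap
  · -- β = -1
    have n := nn4 1 (S.φ (z (k+1))) 1 A 1 M (-1) Y
    have hk : k = 2 := by omega
    subst hk
    have hqa : S.adj (z 3) y := by
      rcases gq with gq | gq
      · omega
      · exact gq.2
    have hnp : ¬ S.adj (z 0) y := fun h1 => h.toRun.nocommon (S.symm _ _ h1) (S.symm _ _ hqa)
    simp only [hqa, hnp] at gp gq
    by_cases hw5 : ip (S.φ y) (S.φ y) = 5
    · exact h.toRun.f4 rfl hy hqa (by have := w_le (S := S) y; have := S.a3 y; omega)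
    · have := zz4 1 (S.φ (z (2+1))) 1 A 1 M (-1) Y (by omega) (S.φ (z 0))
      omega
  have hw5 : ip Y Y = 1 ∨ ip Y Y = 2 ∧ k = 2 ∧ S.a y = 3 ∧ ip (S.φ y) (S.φ y) = 5 := by
    have := w_le (S := S) y; have := S.a3 y; omega
  by_cases hqa : S.adj (z (k+1)) y
  · have n := nn3 1 (S.φ (z (k+1))) (-1) B 1 Y
    have := S.gadj _ _ hqa
    exact h.toRun.f4 (by omega) hy hqa (by omega)
  simp only [hqa, not_false_eq_true, and_true, and_false, or_false] at gq
  by_cases hpa : S.adj (z 0) y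
  · have py1 := S.gadj _ _ hpa
    have nY1 : ip Y Y = 1 := by
      refine hw5.resolve_right fun hh => ?_
      have := h.toRun.rev.f4 hh.2.1 (y := y) (fun i hi => hy _ (by omega)) (by simpa using hpa) hh.2.2.1
      exact this
    have hw2 : S.a y + 2 ≤ ip (S.φ y) (S.φ y) := by
      have := S.a3 y
      by_contra hcc
      have := h.toRun.rev.f4 (by omega) (y := y) (fun i hi => hy _ (by omega)) (by simpa using hpa) (by omega)
      exact this
    obtain ⟨x, yx, xp⟩ := ex_other hO (S.symm _ _ hpa) hw2
    have ax : S.a x = 0 := by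
      have := a_nn (S := S) x
      by_contra hcc
      exact S.nb y (z 0) x (S.symm _ _ hpa) yx xp.symm hp (by omega)
    have wx := w_zero ax
    have xC := h.toRun.nbr_out' hy yx xp (by rintro rfl; exact hqa (S.symm _ _ yx))
    have ox := out x (ne_of_adj yx).symm xC
    have xy := S.gadj _ _ (S.symm _ _ yx)
    have gx := g01 (S := S) (xC (k+1) le_rfl)
    have xp0 := ip_two_apart yx (S.symm _ _ hpa) xp
    have n := nn4 1 (S.φ x) 1 (S.φ (z (k+1))) (-1) B 2 Y
    have zr := zz4 1 (S.φ x) 1 (S.φ (z (k+1))) (-1) B 2 Y (by omega)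
    obtain ⟨x', xx', x'y⟩ := ex_other0 hO (S.symm _ _ yx) ax
    have xx1 := S.gadj _ _ xx'
    have x'q : x' ≠ z (k+1) := by rintro rfl; omega
    have x'C := h.toRun.nbr_out' xC xx' (by rintro rfl; omega) x'q
    have ox' := out x' x'y x'C
    have := ip_two_apart xx' (S.symm _ _ yx) x'y
    have := zr (S.φ x')
    rw [ip_comm (S.φ x') (S.φ x)] at this
    have := g01 (S := S) x'q
    omega
  simp only [hpa, not_false_eq_true, and_true, and_false, or_false] at gp
  rcases hw5 with nY1 | ⟨nY2, hk, a3, w5⟩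
  · have zr := zz5 1 (S.φ (z 0)) (-1) (S.φ (z (k+1))) 1 A 1 B (-2) Y (by omega)
    obtain ⟨x, yx⟩ := ex_adj hO (v := y) (by have := S.a3 y; omega)
    have xC := h.toRun.nbr_out' hy yx (by rintro rfl; exact hpa (S.symm _ _ yx)) (by rintro rfl; exact hqa (S.symm _ _ yx))
    have ox := out x (ne_of_adj yx).symm xC
    have := zr (S.φ x)
    have := S.gadj _ _ (S.symm _ _ yx)
    have := g01 (S := S) (xC 0 (by omega))
    have := g01 (S := S) (xC (k+1) (by omega))
    omega
  · obtain ⟨f, f', nf, nf', off, rfl⟩ := ip_split nY2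
    simp only [ip_add_right] at pY qY AY BY out hY
    have orth : ∀ E : ι → ℤ, ip E E = 1 → ip E f + ip E f' = 0 → ip E f = 0 ∧ ip E f' = 0 := fun E h1 h2 => by
      have := bess2 (x := E) nf nf' off
      have h3 : ip E f' = - ip E f := by omega
      rw [h3, h1] at this
      have : ip E f = 0 := by
        rcases int_small (a := ip E f) (n := 1) (by nlinarith) (by omega) with h | h | h
        · exact h
        · rw [h] at this; norm_num at this
        · rw [h] at this; norm_num at this
      omega
    obtain ⟨oAf, oAf'⟩ := orth A nA AY
    obtain ⟨oBf, oBf'⟩ := orth B nB BY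
    have hpf : ip (S.φ (z 0)) f = 0 ∨ ip (S.φ (z 0)) f = 1 := by
      have n := nn4 1 (S.φ (z 0)) (1) A (-(ip (S.φ (z 0)) f)) f (-(ip (S.φ (z 0)) f')) f'
      rw [nA, nf, nf', off, oAf, oAf', pA] at n
      exact quad2 (u := ip (S.φ (z 0)) f') (by omega) (by linarith only [n, bp.2])
    rcases hpf with hpf | hpf
    · exact st1c hO h.toRun hy nA nB oAB a3 w5 pA (by omega) qA (by omega) hpa hqa nf' nf (by rw [ip_comm]; exact off)
        oAf' oAf oBf' oBf (by omega) hpf (by omega)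
        (fun v h1 h2 => by have := out v h1 h2; refine ⟨this.1, this.2.1, by omega⟩)
    · exact st1c hO h.toRun hy nA nB oAB a3 w5 pA (by omega) qA (by omega) hpa hqa nf nf' off
        oAf oAf' oBf oBf' hpf (by omega) (by omega) out

theorem outA (hO : ∀ v d, ¬ S.O v d) (h : RD S s k z A M B) {y : V} (hy : ∀ i ≤ k + 1, y ≠ z i) :
    ip (S.φ y) A = 0 := by
  have k2 : (2:ℤ) ≤ k := by exact_mod_cast h.k2
  have w := w5 (S := S) y
  obtain ⟨o1, o2⟩ := h.out y hy
  have n := nn4 1 (S.φ y) (-(ip (S.φ y) A)) A (-(ip (S.φ y) A)) M (-(ip (S.φ y) A)) B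
  rw [h.nA, h.nM, h.nB, h.oAM, h.oAB, h.oMB, o1, o2] at n
  have n2 : (k+1) * (ip (S.φ y) A * ip (S.φ y) A) ≤ ip (S.φ y) (S.φ y) := by nlinarith
  have n3 : 3 * (ip (S.φ y) A * ip (S.φ y) A) ≤ ip (S.φ y) (S.φ y) := by
    nlinarith [mul_self_nonneg (ip (S.φ y) A)]
  rcases int_small (a := ip (S.φ y) A) (n := 3) (by omega) (by omega) with h0 | h0 | h0
  · exact h0
  · exact (h.st1 hO hy h0).elim
  · exact (h.rev.st1 hO (y := y) (fun i hi => hy _ (by omega)) (by rw [ip_neg_right, o2, h0]; rfl)).elim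
end RD
end Sys
end

section
namespace Sys
variable {V ι : Type} [Fintype ι] {S : Sys V ι}
variable {s : ℤ} {k : ℕ} {z : ℕ → V} {A M B : ι → ℤ}

theorem sne (hs : s = 1 ∨ s = -1) {u v : V} {X i j : ℤ} (hu : S.pos u = X + s * i) (hv : S.pos v = X + s * j)
    (hij : i ≠ j) : u ≠ v := by
  rintro rfl
  rcases hs with rfl | rfl <;> omega
theorem sfar (hs : s = 1 ∨ s = -1) {u v : V} {X i j : ℤ} (hu : S.pos u = X + s * i) (hv : S.pos v = X + s * j)
    (hij : i + 2 ≤ j ∨ j + 2 ≤ i) : ip (S.φ u) (S.φ v) = 0 := by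
  rcases hs with rfl | rfl <;> apply far <;> omega
theorem spos {u v : V} {X i : ℤ} (hu : S.pos u = X + s * i) (h : S.step s u v) : S.pos v = X + s * (i + 1) := by
  rw [h.2, hu]; ring
theorem spos' {u v : V} {X i : ℤ} (hu : S.pos u = X + s * i) (h : S.step (-s) u v) : S.pos v = X + s * (i - 1) := by
  rw [h.2, hu]; ring
theorem Run.outp (h : Run S s k z) {v : V} {i : ℤ} (hv : S.pos v = S.pos (z 0) + s * i) (hi : i < 0 ∨ k + 1 < i) :
    ∀ j ≤ k + 1, v ≠ z j := fun j hj => sne h.hs hv (h.pos j hj) (by omega)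

namespace RD

theorem f1r (h : Run S s k z) (hk : k = 2) (ap : S.a (z 0) = 1) (aq : 2 ≤ S.a (z (k+1))) : False := by
  subst hk
  exact S.f1 s h.hs z (fun i hi => h.st i (by omega)) ap (h.zero 1 (by omega) (by omega)) (h.zero 2 (by omega) (by omega)) aq
theorem f2r (h : Run S s k z) (hk : k = 3) (ap : S.a (z 0) = 1) (aq : S.a (z (k+1)) = 3) : False := by
  subst hk
  exact S.f2 s h.hs z (fun i hi => h.st i (by omega)) ap (h.zero 1 (by omega) (by omega)) (h.zero 2 (by omega) (by omega))
    (h.zero 3 (by omega) (by omega)) aq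
theorem f3r (h : Run S s k z) (hk : k = 2) {x r : V} (hx : S.step (-s) (z 0) x) (hr : S.step s (z (k+1)) r)
    (ax : S.a x = 1) (ap : S.a (z 0) = 1) (aq : S.a (z (k+1)) = 1) (ar : S.a r = 2) : False := by
  subst hk
  have hx' := step_symm hx
  rw [neg_neg] at hx'
  refine S.f3 s h.hs (fun i => if i = 0 then x else if i = 5 then r else z (i - 1)) ?_ ?_ ?_ ?_ ?_ ?_ ?_
  · intro i hi
    interval_cases i
    · exact hx'
    · exact h.st 0 (by omega)
    · exact h.st 1 (by omega)
    · exact h.st 2 (by omega)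
    · exact hr
  · simpa
  · simpa
  · simpa using h.zero 1 (by omega) (by omega)
  · simpa using h.zero 2 (by omega) (by omega)
  · simpa using aq
  · simpa

variable [DecidableEq ι]
set_option maxHeartbeats 1600000 in
theorem st2 (hO : ∀ v d, ¬ S.O v d) (h : RD S s k z A M B) (pA : ip (S.φ (z 0)) A = 0) : False := by
  have k2 : (2:ℤ) ≤ k := by exact_mod_cast h.k2
  have hs := h.hs
  have hrun := h.toRun
  have hp := h.p
  have hq := h.q
  have hpq := hrun.pq
  have posp : S.pos (z 0) = S.pos (z 0) + s * 0 := by ring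
  have posq : S.pos (z (k+1)) = S.pos (z 0) + s * (k + 1) := by
    have := hrun.pos (k+1) le_rfl
    push_cast at this; exact this
  have pneq : z 0 ≠ z (k+1) := sne hs posp posq (by omega)
  obtain ⟨pM, pB⟩ := h.pp
  rw [pA] at pM pB
  obtain ⟨qM, qB⟩ := h.qq
  have nA := h.nA
  have nM := h.nM
  have nB := h.nB
  have oAM := h.oAM
  have oAB := h.oAB
  have oMB := h.oMB
  have out : ∀ v, (∀ i ≤ k + 1, v ≠ z i) → ip (S.φ v) A = 0 ∧ ip (S.φ v) M = 0 ∧ ip (S.φ v) B = 0 := fun v hv => by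
    have h1 := h.outA hO hv
    obtain ⟨h2, h3⟩ := h.out v hv
    rw [h1] at h2 h3
    exact ⟨h1, by omega, h3⟩
  have w5p := w5 (S := S) (z 0)
  have wlp := w_le (S := S) (z 0)
  have a3p := S.a3 (z 0)
  have hbig : ∀ u v, u ≠ v → 1 < S.a u → S.a v ≤ 1 := fun u v h1 h2 => by
    by_contra hc; exact h1 (S.big _ _ h2 (by omega))
  have hnb : ∀ u v b, S.adj b u → S.adj b v → u ≠ v → 0 < S.a u → S.a v = 0 := fun u v b h1 h2 h3 h4 => by
    have := a_nn (S := S) v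
    by_contra hc
    exact S.nb b u v h1 h2 h3 h4 (by omega)
  have e1 : ¬ (k = 2 ∧ 2 ≤ S.a (z 0)) := fun ⟨h1, h2⟩ =>
    f1r hrun.rev h1 (by have := hbig _ _ pneq (by omega); simp; omega) (by simpa using h2)
  have e2 : ¬ (k = 3 ∧ S.a (z 0) = 3) := fun ⟨h1, h2⟩ =>
    f2r hrun.rev h1 (by have := hbig _ _ pneq (by omega); simp; omega) (by simpa using h2)
  obtain ⟨P, hP⟩ : ∃ P : ι → ℤ, ∀ v, ip v P = ip v (S.φ (z 0)) - ip v M - ip v B :=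
    ⟨S.φ (z 0) - M - B, fun v => by simp only [ip_sub_right]⟩
  have hA := hP A
  have hM := hP M
  have hB := hP B
  have hpP := hP (S.φ (z 0))
  have hPP := hP P
  rw [ip_comm P (S.φ (z 0)), ip_comm P M, ip_comm P B] at hPP
  rw [ip_comm A (S.φ (z 0))] at hA
  rw [ip_comm M (S.φ (z 0))] at hM
  rw [ip_comm B (S.φ (z 0)), ip_comm B M] at hB
  have AP : ip A P = 0 := by omega
  have BP : ip B P = 0 := by omega
  have MP : ip M P = 0 := by omega
  have nP : ip P P = ip (S.φ (z 0)) (S.φ (z 0)) - k := by omega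
  clear hA hM hB hpP hPP
  have qP := hP (S.φ (z (k+1)))
  rw [ip_comm (S.φ (z (k+1))) (S.φ (z 0)), hpq] at qP
  have nP0 : 1 ≤ ip P P := by
    by_contra hc
    have := zz2 1 P 0 P (by omega) (S.φ (z (k+1)))
    rcases h.qcase with qA | qA <;> rw [qA] at qM qB <;> omega
  have hp2 : S.a (z 0) + 2 ≤ ip (S.φ (z 0)) (S.φ (z 0)) := by
    have h1 : S.deg (z 0) s = 1 := S.deg1 _ _ (.inl ⟨_, (h.st 0 (by omega)).1, (h.st 0 (by omega)).2⟩)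
    have h2 := deg01 (S := S) (z 0) s
    have h3 := deg01 (S := S) (z 0) (-s)
    have h4 := S.wt (z 0)
    have : S.deg (z 0) 1 + S.deg (z 0) (-1) = S.deg (z 0) s + S.deg (z 0) (-s) := by
      rcases hs with rfl | rfl
      · rfl
      · rw [neg_neg, add_comm]
    omega
  have hwp : ip (S.φ (z 0)) (S.φ (z 0)) = k + 1 := by omega
  have nP1 : ip P P = 1 := by omega
  have aq : S.a (z (k+1)) = 1 := by
    by_cases hk : k = 2
    · by_contra hc
      exact f1r hrun hk (by omega) (by omega)
    · have := hbig _ _ pneq (by omega); omega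
  have wq := w_le (S := S) (z (k+1))
  obtain ⟨x, hx⟩ := ex_step hO (s := -s) (v := z 0) (by omega) hp2
  have posx := spos' posp hx
  have xC := hrun.outp posx (by omega)
  have ox := out x xC
  have xq := sfar hs posx posq (by omega)
  have xp := S.gadj _ _ (S.symm _ _ hx.1)
  have xP := hP (S.φ x)
  rcases h.qcase with qA | qA <;> rw [qA] at qM qB
  swap
  · have := nn4 1 (S.φ (z (k+1))) 1 A 1 M (-1) P
    have hk : k = 2 := by omega
    subst hk
    have := zz4 1 (S.φ (z (2+1))) 1 A 1 M (-1) P (by omega) (S.φ x)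
    omega
  have wq3 : ip (S.φ (z (k+1))) (S.φ (z (k+1))) = 3 := by
    have := nn3 1 (S.φ (z (k+1))) (-1) B 1 P
    by_contra hc
    have := zz3 1 (S.φ (z (k+1))) (-1) B 1 P (by omega) (S.φ x)
    omega
  obtain ⟨g, hg⟩ : ∃ g : ι → ℤ, ∀ v, ip v g = ip v B - ip v P - ip v (S.φ (z (k+1))) :=
    ⟨B - P - S.φ (z (k+1)), fun v => by simp only [ip_sub_right]⟩
  have hg1 := hg P
  have hg2 := hg g
  have hg3 := hg B
  have hg4 := hg (S.φ (z (k+1)))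
  rw [ip_comm g P, ip_comm g B, ip_comm g (S.φ (z (k+1)))] at hg2
  rw [ip_comm P B, ip_comm P (S.φ (z (k+1)))] at hg1
  rw [ip_comm B (S.φ (z (k+1)))] at hg3
  have Pg : ip P g = 0 := by omega
  have ng : ip g g = 1 := by omega
  clear hg1 hg2 hg3 hg4
  obtain ⟨r, hr⟩ := ex_step hO hs (v := z (k+1)) (by omega)
  have posr := spos posq hr
  have orr := out r (hrun.outp posr (by omega))
  have rp := sfar hs posr posp (by omega)
  have rx := sfar hs posr posx (by omega)
  have rq := S.gadj _ _ (S.symm _ _ hr.1)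
  have rP := hP (S.φ r)
  have rg := hg (S.φ r)
  have xg := hg (S.φ x)
  have wx3 : 3 ≤ ip (S.φ x) (S.φ x) := by
    by_contra hc
    have := zz3 1 (S.φ x) 1 P (-1) g (by omega) (S.φ r)
    omega
  have ax : 0 < S.a x := by have := w_le (S := S) x; omega
  have xne : z 0 ≠ x := sne hs posp posx (by omega)
  have rne : z 0 ≠ r := sne hs posp posr (by omega)
  have xr : x ≠ r := sne hs posx posr (by omega)
  have rC := hrun.outp posr (by omega)
  have e3 : ¬ (k = 2 ∧ S.a x = 3) := fun ⟨h1, h2⟩ =>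
    hrun.rev.f4 h1 (y := x) (fun i hi => xC _ (by omega)) (by simpa using hx.1) h2
  have e4 : ¬ (k = 2 ∧ S.a r = 3) := fun ⟨h1, h2⟩ => hrun.f4 h1 rC hr.1 h2
  have e5 : ¬ (k = 2 ∧ S.a x = 1 ∧ S.a r = 2) := fun ⟨h1, h2, h3⟩ =>
    f3r hrun h1 hx hr h2 (by omega) aq h3
  have e6 : ¬ (k = 2 ∧ S.a x = 2 ∧ S.a r = 1) := fun ⟨h1, h2, h3⟩ =>
    f3r hrun.rev h1 (x := r) (r := x) (by simpa using hr) (by simpa using hx) h3 (by simpa using aq)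
      (by simp; omega) h2
  have e7 : ¬ (k = 4 ∧ S.a r = 1) := fun ⟨h1, h2⟩ =>
    S.iv (z 0) _ _ (by omega) hr.1 aq h2
  have b1 := hbig _ _ xne
  have b2 := hbig _ _ rne
  have b3 := hbig _ _ xr
  have wlx := w_le (S := S) x
  have wlr := w_le (S := S) r
  have arn := a_nn (S := S) r
  have a3x := S.a3 x
  have a3r := S.a3 r
  have hax : (S.a x = 1 ∨ k = 2 ∧ S.a x = 2) := by omega
  have har : S.a r = 0 ∨ S.a x = 1 ∧ S.a r = 1 := by omega
  clear e1 e2 e3 e4 e5 e6 e7 b1 b2 b3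
  rcases har with ar | ⟨ax1, ar1⟩
  · have wr := w_zero ar
    obtain ⟨h', hh⟩ : ∃ g' : ι → ℤ, ∀ v, ip v g' = ip v (S.φ r) - ip v g :=
      ⟨S.φ r - g, fun v => by simp only [ip_sub_right]⟩
    have h1 := hh P
    have h2 := hh g
    have h3 := hh h'
    have h4 := hh (S.φ r)
    rw [ip_comm P (S.φ r)] at h1
    rw [ip_comm g (S.φ r)] at h2
    rw [ip_comm h' (S.φ r), ip_comm h' g] at h3
    have Ph : ip P h' = 0 := by omega
    have gh : ip g h' = 0 := by omega
    have nh : ip h' h' = 1 := by omega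
    clear h1 h2 h3 h4
    have xh := hh (S.φ x)
    rw [ip_comm (S.φ x) (S.φ r)] at xh
    obtain ⟨r', hr'⟩ := ex_step hO hs (v := r) (by omega)
    have posr' := spos posr hr'
    have r'x := sfar hs posr' posx (by omega)
    have r'p := sfar hs posr' posp (by omega)
    have r'q := sfar hs posr' posq (by omega)
    have r'r := S.gadj _ _ (S.symm _ _ hr'.1)
    have or' := out r' (hrun.outp posr' (by omega))
    have r'P := hP (S.φ r')
    have r'g := hg (S.φ r')
    have r'h := hh (S.φ r')
    have wx4 : 4 ≤ ip (S.φ x) (S.φ x) := by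
      by_contra hc
      have := zz4 1 (S.φ x) 1 P (-1) g 1 h' (by omega) (S.φ r')
      omega
    have hk : k = 2 := by omega
    have ax2 : S.a x = 2 := by omega
    obtain ⟨i, hi⟩ : ∃ i : ι → ℤ, ∀ v, ip v i = ip v (S.φ x) + ip v P - ip v g + ip v h' :=
      ⟨S.φ x + P - g + h', fun v => by simp only [ip_sub_right, ip_add_right]⟩
    have i1 := hi P
    have i2 := hi g
    have i3 := hi h'
    have i4 := hi i
    have i5 := hi (S.φ x)
    rw [ip_comm P (S.φ x)] at i1
    rw [ip_comm g (S.φ x), ip_comm g P] at i2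
    rw [ip_comm h' (S.φ x), ip_comm h' P, ip_comm h' g] at i3
    rw [ip_comm i (S.φ x), ip_comm i P, ip_comm i g, ip_comm i h'] at i4
    have hi0 : ip h' i = 0 := by omega
    have ni : ip i i = 1 := by omega
    clear i1 i2 i3 i4 i5
    have r'i := hi (S.φ r')
    obtain ⟨t, ht⟩ := ex_step hO (s := -s) (v := x) (by omega) (by omega)
    have post := spos' posx ht
    have ot := out t (hrun.outp post (by omega))
    have at0 : S.a t = 0 := hnb (z 0) t x (S.symm _ _ hx.1) ht.1 (sne hs posp post (by omega)) hp
    have wt := w_zero at0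
    have tp := sfar hs post posp (by omega)
    have tq := sfar hs post posq (by omega)
    have tr := sfar hs post posr (by omega)
    have r't := sfar hs posr' post (by omega)
    have tx := S.gadj _ _ (S.symm _ _ ht.1)
    have tP := hP (S.φ t)
    have tg := hg (S.φ t)
    have th := hh (S.φ t)
    have ti := hi (S.φ t)
    have br' := hbig x r' (sne hs posx posr' (by omega)) (by omega)
    have wr' := w_le (S := S) r'
    have zr := zz4 1 (S.φ r') 1 (S.φ t) 1 h' 2 i (by omega)
    obtain ⟨t', ht'⟩ := ex_step hO (s := -s) (v := t) (by omega) (by omega)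
    have post' := spos' post ht'
    have ot' := out t' (hrun.outp post' (by omega))
    have t'p := sfar hs post' posp (by omega)
    have t'q := sfar hs post' posq (by omega)
    have t'r := sfar hs post' posr (by omega)
    have t'r' := sfar hs post' posr' (by omega)
    have t'x := sfar hs post' posx (by omega)
    have t't := S.gadj _ _ (S.symm _ _ ht'.1)
    have t'P := hP (S.φ t')
    have t'g := hg (S.φ t')
    have t'h := hh (S.φ t')
    have t'i := hi (S.φ t')
    have := zr (S.φ t')
    omega
  · obtain ⟨h', hh⟩ : ∃ g' : ι → ℤ, ∀ v, ip v g' = ip v g - ip v P - ip v (S.φ x) :=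
      ⟨g - P - S.φ x, fun v => by simp only [ip_sub_right]⟩
    have h1 := hh P
    have h2 := hh g
    have h3 := hh h'
    have h4 := hh (S.φ x)
    rw [ip_comm P (S.φ x)] at h1
    rw [ip_comm g (S.φ x), ip_comm g P] at h2
    rw [ip_comm h' (S.φ x), ip_comm h' g, ip_comm h' P] at h3
    have gh : ip g h' = 0 := by omega
    have nh : ip h' h' = 1 := by omega
    clear h1 h2 h3 h4
    have rh := hh (S.φ r)
    obtain ⟨t, ht⟩ := ex_step hO (s := -s) (v := x) (by omega) (by omega)
    have post := spos' posx ht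
    have ot := out t (hrun.outp post (by omega))
    have at0 : S.a t = 0 := hnb (z 0) t x (S.symm _ _ hx.1) ht.1 (sne hs posp post (by omega)) hp
    have wt := w_zero at0
    have tp := sfar hs post posp (by omega)
    have tq := sfar hs post posq (by omega)
    have tr := sfar hs post posr (by omega)
    have tx := S.gadj _ _ (S.symm _ _ ht.1)
    have tP := hP (S.φ t)
    have tg := hg (S.φ t)
    have th := hh (S.φ t)
    have wr3 : ip (S.φ r) (S.φ r) = 3 := by
      have := nn3 1 (S.φ r) (-1) g (-1) h'
      by_contra hc
      have := zz3 1 (S.φ r) (-1) g (-1) h' (by omega) (S.φ t)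
      omega
    rw [ip_comm] at tr
    have zr := zz4 1 (S.φ r) 1 (S.φ t) (-1) g (-2) h' (by omega)
    obtain ⟨r', hr'⟩ := ex_step hO hs (v := r) (by omega)
    have posr' := spos posr hr'
    have r'x := sfar hs posr' posx (by omega)
    have r'p := sfar hs posr' posp (by omega)
    have r'q := sfar hs posr' posq (by omega)
    have r't := sfar hs posr' post (by omega)
    have r'r := S.gadj _ _ (S.symm _ _ hr'.1)
    have or' := out r' (hrun.outp posr' (by omega))
    have r'P := hP (S.φ r')
    have r'g := hg (S.φ r')
    have r'h := hh (S.φ r')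
    have := zr (S.φ r')
    omega

end RD
end Sys
end

section
section
variable {ι : Type} [Fintype ι] [DecidableEq ι]
theorem ip_single (x : ι → ℤ) (l : ι) : ip x (Pi.single l 1) = x l := by
  simp [ip, Pi.single_apply]
theorem unit_coord {E : ι → ℤ} (h : ip E E = 1) {l : ι} (hl : E l ≠ 0) :
    (E l = 1 ∨ E l = -1) ∧ ∀ x : ι → ℤ, ip x E = x l * E l := by
  have h1 := nn2 1 E (-(E l)) (Pi.single l 1)
  rw [h, ip_single, ip_single, Pi.single_eq_same] at h1
  have h2 : E l = 1 ∨ E l = -1 := (int_small (a := E l) (n := 1) (by nlinarith) (by norm_num)).resolve_left hl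
  refine ⟨h2, fun x => ?_⟩
  have := zz2 1 E (-(E l)) (Pi.single l 1) (by
    rw [h, ip_single, ip_single, Pi.single_eq_same]; rcases h2 with h2 | h2 <;> rw [h2] <;> norm_num) x
  rw [ip_single] at this
  linarith
end

namespace Sys
variable {V ι : Type} [Fintype ι] {S : Sys V ι} [DecidableEq ι]
variable {s : ℤ} {k : ℕ} {z : ℕ → V} {e : ℕ → ι → ℤ}

theorem RE.pA (hO : ∀ v d, ¬ S.O v d) (h : RE S s k z e) : ip (S.φ (z 0)) (e 0) = -1 :=
  h.toRD.pcase.resolve_left fun h0 => h.toRD.st2 hO h0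
theorem RE.qA (hO : ∀ v d, ¬ S.O v d) (h : RE S s k z e) : ip (S.φ (z (k+1))) (e 0) = 0 := by
  refine h.toRD.qcase.resolve_right fun h0 => h.toRD.rev.st2 hO ?_
  rw [Nat.sub_zero, ip_neg_right, h.toRD.qq.2, h0]; rfl

/-- all inner products with the frame of a run -/
theorem RE.vals (hO : ∀ v d, ¬ S.O v d) (h : RE S s k z e) (v : V) :
    ((∀ j ≤ k, ip (S.φ v) (e j) = 0) ∧ ∀ i ≤ k + 1, v ≠ z i) ∨
    ∃ i ≤ k + 1, v = z i ∧ ∀ j ≤ k, ip (S.φ v) (e j) = if j = i then -1 else if j + 1 = i then 1 else 0 := by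
  by_cases hv : ∀ i ≤ k + 1, v ≠ z i
  · left
    refine ⟨fun j hj => ?_, hv⟩
    rw [h.out hv j hj]; exact h.toRD.outA hO hv
  · right
    push Not at hv
    obtain ⟨i, hi, rfl⟩ := hv
    refine ⟨i, hi, rfl, fun j hj => ?_⟩
    rcases Nat.eq_zero_or_pos i with rfl | h1
    · rcases Nat.eq_zero_or_pos j with rfl | h2
      · simp [h.pA hO]
      · rw [h.onp j h2 hj, h.pA hO, if_neg (by omega), if_neg (by omega)]; rfl
    rcases Nat.lt_or_ge k i with h2 | h2
    · obtain rfl : i = k + 1 := by omega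
      rw [if_neg (by omega)]
      split_ifs with h3
      · obtain rfl : j = k := by omega
        rw [h.onqk, h.qA hO]; rfl
      · rw [h.onq j (by omega), h.qA hO]
    · rw [h.ez i h1 h2, ip_sub_left]
      have on : ∀ a b, a ≤ k → b ≤ k → ip (e a) (e b) = if a = b then 1 else 0 := fun a b ha hb => by
        split_ifs with hab
        · subst hab; exact h.e1 a ha
        · rcases Nat.lt_or_gt_of_ne hab with hc | hc
          · exact h.e0 _ _ hc hb
          · rw [ip_comm]; exact h.e0 _ _ hc ha
      rw [on _ _ (by omega) hj, on _ _ h2 hj]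
      split_ifs <;> omega

theorem zero_split (hO : ∀ v d, ¬ S.O v d) {u : V} (hu : S.a u = 0) : ∃ E F : ι → ℤ, ip E E = 1 ∧ ip F F = 1 ∧
    ip E F = 0 ∧ S.φ u = E - F ∧ ∀ v, v ≠ u → ip (S.φ v) E ≤ 0 ∧ 0 ≤ ip (S.φ v) F := by
  obtain ⟨k, z, hr, i, h1, hk, rfl⟩ := ex_run hO (s := 1) (.inl rfl) hu
  obtain ⟨e, he⟩ := ex_RE hr
  refine ⟨e (i-1), e i, he.e1 _ (by omega), he.e1 _ hk, he.e0 _ _ (by omega) hk, he.ez i h1 hk, fun v hv => ?_⟩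
  rcases he.vals hO v with ⟨h2, -⟩ | ⟨j, hj, rfl, h2⟩
  · rw [h2 _ (by omega), h2 _ hk]; simp
  · have hij : i ≠ j := by rintro rfl; exact hv rfl
    rw [h2 _ (by omega), h2 _ hk]
    constructor <;> split_ifs <;> omega

theorem link (hO : ∀ v d, ¬ S.O v d) {d : ℤ} (hd : d = 1 ∨ d = -1) {u y : V} (hu : 0 < S.a u) (hy : S.a y = 0)
    (hs : S.step d u y) : ∃ g : ι → ℤ, ip g g = 1 ∧ ip (S.φ u) g = -1 ∧ ip (S.φ y) g = 1 ∧
    ∀ v, v ≠ u → v ≠ y → ip (S.φ v) g = 0 := by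
  obtain ⟨k, z, hr, i, h1, hk, rfl⟩ := ex_run hO (s := d) hd hy
  have hst := hr.st (i-1) (by omega)
  rw [Nat.sub_add_cancel h1] at hst
  have hu' : u = z (i - 1) := step_uniq (step_symm hs) (step_symm hst)
  obtain rfl : i = 1 := by
    by_contra hc
    have := hr.zero (i-1) (by omega) (by omega)
    rw [hu'] at hu; omega
  simp only [Nat.sub_self] at hu'
  subst hu'
  obtain ⟨e, he⟩ := ex_RE hr
  have zne : ∀ i j, i ≤ k + 1 → j ≤ k + 1 → z i = z j → i = j := fun i j hi hj hz => by
    have := hr.posne hi hj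
    rw [hz] at this; omega
  refine ⟨e 0, he.e1 _ (by omega), he.pA hO, ?_, ?_⟩
  · rw [he.ez 1 le_rfl hk, ip_sub_left, he.e1 0 (by omega), ip_comm, he.e0 0 1 (by omega) hk]; rfl
  · intro v h2 h3
    rcases he.vals hO v with ⟨h4, -⟩ | ⟨j, hj, rfl, h4⟩
    · exact h4 0 (by omega)
    · rw [h4 0 (by omega), if_neg (by rintro rfl; exact h2 rfl), if_neg (by rintro rfl; exact h3 rfl)]

theorem dirc (hO : ∀ v d, ¬ S.O v d) {d : ℤ} (hd : d = 1 ∨ d = -1) {u : V} (hu : 0 < S.a u) :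
    ∃ (c : ι → ℤ) (n π : ℤ), ip c c = n ∧ ip (S.φ u) c = -n ∧ S.deg u d = n + π ∧
      (π = 0 ∨ π = 1 ∧ ∃ u', S.step d u u' ∧ 0 < S.a u') ∧
      (∀ l, c l = 0 ∨ (c l = - S.φ u l ∧ S.φ u l * S.φ u l ≤ 1 ∧ ∀ v, v ≠ u → 0 < S.a v → S.φ v l = 0)) ∧
      (c = 0 ∨ ip c c = 1 ∧ ∃ y, S.step d u y ∧ ip (S.φ y) c = 1 ∧ ∀ v, v ≠ u → v ≠ y → ip (S.φ v) c = 0) := by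
  by_cases hex : ∃ y, S.step d u y
  · obtain ⟨y, hy⟩ := hex
    have hdeg : S.deg u d = 1 := S.deg1 u d (.inl ⟨y, hy.1, hy.2⟩)
    have := a_nn (S := S) y
    rcases eq_or_ne (S.a y) 0 with ay | ay
    · obtain ⟨g, g1, g2, g3, g4⟩ := link hO hd hu ay hy
      refine ⟨g, 1, 0, g1, g2, by omega, .inl rfl, fun l => ?_, .inr ⟨g1, y, hy, g3, g4⟩⟩
      by_cases hl : g l = 0
      · exact .inl hl
      · right
        obtain ⟨h1, h2⟩ := unit_coord g1 hl
        rw [h2] at g2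
        refine ⟨?_, ?_, fun v hv hav => ?_⟩
        · rcases h1 with h1 | h1 <;> rw [h1] at g2 ⊢ <;> omega
        · rcases h1 with h1 | h1 <;> rw [h1] at g2
          · have : S.φ u l = -1 := by omega
            rw [this]; norm_num
          · have : S.φ u l = 1 := by omega
            rw [this]; norm_num
        · have := g4 v hv (by rintro rfl; omega)
          rw [h2] at this
          rcases h1 with h1 | h1 <;> rw [h1] at this <;> omega
    · exact ⟨0, 0, 1, ip_zero_left _, ip_zero_right _, by omega, .inr ⟨rfl, y, hy, by omega⟩, fun l => .inl rfl, .inl rfl⟩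
  · have hdeg : S.deg u d = 0 := S.deg0 u d (by
      rintro (⟨y, h1, h2⟩ | h1)
      · exact hex ⟨y, h1, h2⟩
      · exact hO _ _ h1)
    exact ⟨0, 0, 0, ip_zero_left _, ip_zero_right _, by omega, .inl rfl, fun l => .inl rfl, .inl rfl⟩

theorem resid (hO : ∀ v d, ¬ S.O v d) {u : V} (hu : 0 < S.a u) : ∃ R : ι → ℤ,
    (∀ l, R l = S.φ u l ∨ R l = 0 ∧ S.φ u l * S.φ u l ≤ 1 ∧ ∀ v, v ≠ u → 0 < S.a v → S.φ v l = 0) ∧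
    (ip R R = S.a u ∨ ip R R = S.a u + 1 ∧ ∃ u', S.adj u u' ∧ 0 < S.a u') := by
  obtain ⟨c, n, π, h1, h2, h3, h4, h5, h6⟩ := dirc hO (.inl rfl) hu
  obtain ⟨c', n', π', h1', h2', h3', h4', h5', h6'⟩ := dirc hO (.inr rfl) hu
  have orth : ∀ l, c l = 0 ∨ c' l = 0 := by
    intro l
    by_contra hc
    push Not at hc
    obtain ⟨hc1, hc2⟩ := hc
    obtain ⟨g1, y, hy, hy1, hy2⟩ := h6.resolve_left (by rintro rfl; exact hc1 rfl)
    obtain ⟨g1', y', hy', hy1', hy2'⟩ := h6'.resolve_left (by rintro rfl; exact hc2 rfl)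
    have hyy : y ≠ y' := by rintro rfl; have := hy.2; have := hy'.2; omega
    have := hy2' y (ne_of_adj hy.1).symm hyy
    rw [(unit_coord g1' hc2).2] at this
    rw [(unit_coord g1 hc1).2] at hy1
    rcases mul_eq_zero.1 this with h | h
    · rw [h] at hy1; omega
    · exact hc2 h
  have occ : ip c c' = 0 := Finset.sum_eq_zero fun l _ => by
    rcases orth l with h | h <;> rw [h] <;> ring
  refine ⟨S.φ u + c + c', fun l => ?_, ?_⟩
  · simp only [Pi.add_apply]
    rcases h5 l with a1 | a1
    · rcases h5' l with a2 | a2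
      · left; omega
      · right; exact ⟨by omega, a2.2⟩
    · rcases orth l with h | h
      · rcases h5' l with a2 | a2
        · left; omega
        · right; exact ⟨by omega, a2.2⟩
      · right; exact ⟨by omega, a1.2⟩
  · have hn : ip (S.φ u + c + c') (S.φ u + c + c') = S.a u + (π + π') := by
      have := S.wt u
      rw [ip_nadd, ip_nadd, ip_add_left, occ]; omega
    rw [hn]
    rcases h4 with rfl | ⟨rfl, y, hy, ay⟩
    · rcases h4' with rfl | ⟨rfl, y, hy, ay⟩
      · left; omega
      · right; exact ⟨by omega, y, hy.1, ay⟩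
    · rcases h4' with rfl | ⟨rfl, y', hy', ay'⟩
      · right; exact ⟨by omega, y, hy.1, ay⟩
      · exact (S.nb u y y' hy.1 hy'.1 (by rintro rfl; have := hy.2; have := hy'.2; omega) ay ay').elim

set_option maxHeartbeats 800000 in
theorem posprod (hO : ∀ v d, ¬ S.O v d) {u v : V} (hu : S.a u = 1) (hv : 0 < S.a v) (huv : u ≠ v) (l : ι) :
    S.φ u l * S.φ v l ≤ 0 := by
  by_contra hpos
  push Not at hpos
  choose R hR1 hR2 using fun (w : {w // 0 < S.a w}) => resid hO w.2
  have hG : ∀ a b : {w // 0 < S.a w}, a ≠ b → ip (R a) (R b) = ip (S.φ a.1) (S.φ b.1) := fun a b hab => by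
    have hab' : a.1 ≠ b.1 := fun h => hab (Subtype.ext h)
    refine Finset.sum_congr rfl fun l _ => ?_
    rcases hR1 a l with h1 | ⟨h1, -, h2⟩
    · rcases hR1 b l with h3 | ⟨h3, -, h4⟩
      · rw [h1, h3]
      · rw [h3, h4 a.1 hab' a.2]; ring
    · rw [h1, h2 b.1 hab'.symm b.2]; ring
  have hl : ∀ a b : {w // 0 < S.a w}, a ≠ b → S.φ b.1 l ≠ 0 → R a l = S.φ a.1 l := fun a b hab hb => by
    rcases hR1 a l with h1 | ⟨h1, -, h2⟩
    · exact h1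
    · exact (hb (h2 b.1 (fun h => hab (Subtype.ext h).symm) b.2)).elim
  obtain ⟨u, rfl⟩ : ∃ U : {w // 0 < S.a w}, U.1 = u := ⟨⟨u, by omega⟩, rfl⟩
  obtain ⟨v, rfl⟩ : ∃ U : {w // 0 < S.a w}, U.1 = v := ⟨⟨v, hv⟩, rfl⟩
  have huv' : u ≠ v := fun h => huv (by rw [h])
  have hnu : S.φ u.1 l ≠ 0 := by intro h; rw [h] at hpos; simp at hpos
  have hnv : S.φ v.1 l ≠ 0 := by intro h; rw [h] at hpos; simp at hpos
  rw [← hl u v huv' hnv, ← hl v u huv'.symm hnu] at hpos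
  have ul0 : R u l ≠ 0 := by rw [hl u v huv' hnv]; exact hnu
  have guv := g01 (S := S) huv
  rw [← hG u v huv', ip_comm] at guv
  have a3v := S.a3 v.1
  rcases hR2 u with nu | ⟨nu, u', auu, hu'⟩
  · rw [hu] at nu
    have := (unit_coord nu ul0).2 (R v)
    have : R v l * R u l = R u l * R v l := by ring
    omega
  rw [hu] at nu
  have ul1 : R u l = 1 ∨ R u l = -1 := by
    have := bess1 (x := R u) (y := Pi.single l 1) (by rw [ip_single, Pi.single_eq_same])
    rw [ip_single, nu] at this
    exact (abs_le_of 2 this (by norm_num)).resolve_left ul0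
  have ul2 : R u l * R u l = 1 := by rcases ul1 with h | h <;> rw [h] <;> rfl
  obtain ⟨E, hE⟩ : ∃ E : ι → ℤ, ∀ x, ip x E = R u l * x l :=
    ⟨R u l • Pi.single l 1, fun x => by rw [ip_smul_right, ip_single]⟩
  obtain ⟨f, hf⟩ : ∃ f : ι → ℤ, ∀ x, ip x f = ip x (R u) - ip x E :=
    ⟨R u - E, fun x => by rw [ip_sub_right]⟩
  have uE : ip (R u) E = 1 := by rw [hE, ul2]
  have nE : ip E E = 1 := by
    rw [hE]
    have := hE (Pi.single l 1)
    rw [ip_comm, ip_single, Pi.single_eq_same] at this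
    rw [this, mul_one, ul2]
  have Ef : ip E f = 0 := by rw [hf, nE, ip_comm, uE]; rfl
  have nf : ip f f = 1 := by
    rw [hf, ip_comm f E, Ef, ip_comm, hf, nu, uE]; rfl
  have vE := hE (R v)
  have vf := hf (R v)
  set d := R u l * R v l with hd
  rw [vE] at vf
  have n3 := nn3 1 (R v) (-d) E (d + 1) f
  rw [nE, nf, Ef, vE, vf] at n3
  have n4 := nn3 1 (R v) (-d) E d f
  rw [nE, nf, Ef, vE, vf] at n4
  have nv4 : ip (R v) (R v) ≤ 4 := by rcases hR2 v with h | h <;> omega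
  by_cases hadj : S.adj u.1 v.1
  · simp only [hadj, not_true_eq_false, and_false, and_true, false_or] at guv
    rw [guv] at n3
    nlinarith
  simp only [hadj, not_false_eq_true, and_true, and_false, or_false] at guv
  rw [guv] at n4 vf
  have hd1 : d = 1 := by
    have : d < 2 := by nlinarith
    omega
  rw [hd1] at vE vf
  clear_value d
  -- u'
  obtain ⟨u', rfl⟩ : ∃ U : {w // 0 < S.a w}, U.1 = u' := ⟨⟨u', hu'⟩, rfl⟩
  have u'v : u'.1 ≠ v.1 := by intro h; rw [h] at auu; exact hadj auu
  have u'u : u'.1 ≠ u.1 := (ne_of_adj auu).symm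
  have u'v0 : ¬ S.adj u'.1 v.1 := fun h => S.nb u'.1 u.1 v.1 (S.symm _ _ auu) h huv u.2 v.2
  have s1 : ip (R u') (R v) = 0 := by
    rw [hG u' v (fun h => u'v (by rw [h]))]; exact S.gnon _ _ u'v u'v0
  have s2 : ip (R u') (R u) = -1 := by
    rw [hG u' u (fun h => u'u (by rw [h]))]; exact S.gadj _ _ (S.symm _ _ auu)
  have s3 := hf (R u')
  rw [s2] at s3
  have nvl : 3 ≤ ip (R v) (R v) := by
    by_contra hc
    have := zz3 1 (R v) (-1) E 1 f (by omega) (R u')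
    omega
  have av2 : 2 ≤ S.a v.1 := by rcases hR2 v with h | h <;> omega
  have au' : S.a u'.1 = 1 := by
    have := u'.2
    by_contra hc
    exact u'v (S.big _ _ (by omega) (by omega))
  have av3 : S.a v.1 ≠ 3 := fun h => S.iv v.1 u.1 u'.1 h auu hu au'
  rcases hR2 v with nv | ⟨nv, v', avv, hv'⟩
  · omega
  have nv3 : ip (R v) (R v) = 3 := by omega
  obtain ⟨v', rfl⟩ : ∃ U : {w // 0 < S.a w}, U.1 = v' := ⟨⟨v', hv'⟩, rfl⟩
  have v'v : v'.1 ≠ v.1 := (ne_of_adj avv).symm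
  have v'u : v'.1 ≠ u.1 := by intro h; rw [h] at avv; exact hadj (S.symm _ _ avv)
  have v'u' : v'.1 ≠ u'.1 := by intro h; rw [h] at avv; exact u'v0 (S.symm _ _ avv)
  have r1 : ip (R v') (R v) = -1 := by
    rw [hG v' v (fun h => v'v (by rw [h]))]; exact S.gadj _ _ (S.symm _ _ avv)
  have r2 : ip (R v') (R u) = 0 := by
    rw [hG v' u (fun h => v'u (by rw [h]))]
    exact S.gnon _ _ v'u fun h => S.nb v'.1 u.1 v.1 h (S.symm _ _ avv) huv u.2 v.2
  have r3 : ip (R v') (R u') = 0 := by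
    rw [hG v' u' (fun h => v'u' (by rw [h]))]
    exact S.gnon _ _ v'u' fun h => S.nb u'.1 u.1 v'.1 (S.symm _ _ auu) (S.symm _ _ h) v'u.symm u.2 v'.2
  have r4 := hf (R v')
  obtain ⟨h, hh⟩ : ∃ h : ι → ℤ, ∀ x, ip x h = ip x (R v) - ip x E + ip x f :=
    ⟨R v - E + f, fun x => by rw [ip_add_right, ip_sub_right]⟩
  have h1 := hh E
  have h2 := hh f
  have h3 := hh h
  have h4 := hh (R v)
  rw [ip_comm E (R v)] at h1
  rw [ip_comm f (R v), ip_comm f E] at h2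
  rw [ip_comm h (R v), ip_comm h E, ip_comm h f] at h3
  have Eh : ip E h = 0 := by omega
  have fh : ip f h = 0 := by omega
  have nh : ip h h = 1 := by omega
  clear h1 h2 h3 h4
  have r5 := hh (R v')
  have s5 := hh (R u')
  have nu2 : ip (R u') (R u') ≤ 2 := by rcases hR2 u' with h | h <;> omega
  have b3 := bess2 (x := R u') nE nf Ef
  have tt := quad1 (t := ip (R u') E) (u := ip (R u') f) (by omega) (by nlinarith)
  rcases tt with tt | tt
  · have := zz3 1 (R u') 1 f 1 h (by omega) (R v')
    omega
  · have := zz3 1 (R u') 1 E (-1) h (by omega) (R v')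
    omega

theorem main (hO : ∀ v d, ¬ S.O v d) (l : ι) : (∀ u v, u ≠ v → S.φ u l * S.φ v l ≤ 0) ∧
    ∀ u, S.φ u l * S.φ u l ≤ 1 := by
  have zc : ∀ u, S.a u = 0 → (∀ v, v ≠ u → S.φ u l * S.φ v l ≤ 0) ∧ S.φ u l * S.φ u l ≤ 1 := by
    intro u hu
    obtain ⟨E, F, nE, nF, EF, hE, hv⟩ := zero_split hO hu
    rw [hE]
    simp only [Pi.sub_apply]
    by_cases h1 : E l = 0
    · by_cases h2 : F l = 0
      · simp [h1, h2]
      · obtain ⟨c1, c2⟩ := unit_coord nF h2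
        constructor
        · intro v hne
          have := (hv v hne).2
          rw [c2] at this
          rw [h1]; linarith
        · rw [h1]; rcases c1 with c1 | c1 <;> rw [c1] <;> norm_num
    · obtain ⟨c1, c2⟩ := unit_coord nE h1
      have h2 : F l = 0 := by
        have := c2 F
        rw [ip_comm, EF] at this
        rcases mul_eq_zero.1 this.symm with h | h
        · exact h
        · exact (h1 h).elim
      constructor
      · intro v hne
        have := (hv v hne).1
        rw [c2] at this
        rw [h2]; linarith
      · rw [h2]; rcases c1 with c1 | c1 <;> rw [c1] <;> norm_num
  constructor
  · intro u v huv
    have au := a_nn (S := S) u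
    have av := a_nn (S := S) v
    by_cases hu : S.a u = 0
    · exact (zc u hu).1 v huv.symm
    by_cases hv : S.a v = 0
    · rw [mul_comm]; exact (zc v hv).1 u huv
    by_cases hu1 : S.a u = 1
    · exact posprod hO hu1 (by omega) huv l
    · have hv1 : S.a v = 1 := by
        by_contra hc
        exact huv (S.big _ _ (by omega) (by omega))
      rw [mul_comm]; exact posprod hO hv1 (by omega) huv.symm l
  · intro u
    have au := a_nn (S := S) u
    by_cases hu : S.a u = 0
    · exact (zc u hu).2
    have hu0 : 0 < S.a u := by omega
    obtain ⟨R, hR, hR2⟩ := resid hO hu0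
    rcases hR l with h1 | ⟨-, h1, -⟩
    swap
    · exact h1
    have a3 := S.a3 u
    have hb := nn2 1 R (-(R l)) (Pi.single l 1)
    rw [ip_single, ip_single, Pi.single_eq_same] at hb
    have hb' : R l * R l ≤ ip R R := by linarith
    rw [← h1]
    by_contra hc
    have h4 : 4 ≤ R l * R l := by
      have : ¬ (-2 < R l ∧ R l < 2) := by
        rintro ⟨c1, c2⟩
        have : R l = -1 ∨ R l = 0 ∨ R l = 1 := by omega
        rcases this with h | h | h <;> rw [h] at hc <;> omega
      by_cases h : R l ≤ -2
      · nlinarith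
      · have : 2 ≤ R l := by omega
        nlinarith
    rcases hR2 with h | ⟨h, u', huu, hu'⟩
    · omega
    have n4 : ip R R = 4 := by omega
    have l2 : R l = 2 ∨ R l = -2 := by
      have : (R l - 2) * (R l + 2) = 0 := by nlinarith
      rcases mul_eq_zero.1 this with h | h <;> omega
    have zr := zz2 1 R (-(R l)) (Pi.single l 1) (by
      rw [ip_single, ip_single, Pi.single_eq_same]; linarith) (S.φ u')
    have hRu : ip (S.φ u') R = ip (S.φ u') (S.φ u) := Finset.sum_congr rfl fun j _ => by
      rcases hR j with h | ⟨h, -, h'⟩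
      · rw [h]
      · rw [h, h' u' (ne_of_adj huu).symm hu']; ring
    rw [hRu, S.gadj _ _ (S.symm _ _ huu), ip_single] at zr
    rcases l2 with h | h <;> rw [h] at zr <;> omega
end Sys
end

section
set_option linter.unusedSectionVars false
namespace Sys
variable {V ι : Type} [Fintype ι] [DecidableEq ι] (S : Sys V ι)

/-- vertices with a cut edge -/
abbrev T : Type := {v : V // ∃ d, S.O v d}

variable {S}
noncomputable def td (o : S.T) : ℤ := o.2.choose
theorem td_spec (o : S.T) : S.O o.1 (td o) := o.2.choose_spec
noncomputable def te (o : S.T) : ι → ℤ := (S.o5 _ _ (td_spec o)).choose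
theorem te_spec (o : S.T) : ip (te o) (te o) = 1 ∧ ip (S.φ o.1) (te o) = -1 ∧
    ∀ u, u ≠ o.1 → ip (S.φ u) (te o) = 0 := (S.o5 _ _ (td_spec o)).choose_spec
theorem te_ne {o o' : S.T} (h : o ≠ o') : ip (te o) (te o') = 0 := by
  have h1 := te_spec o
  have h2 := te_spec o'
  have hne : o.1 ≠ o'.1 := fun hc => h (Subtype.ext hc)
  have b : ip (te o) (te o') ^ 2 ≤ 1 := by rw [← h1.1]; exact bess1 h2.1
  rcases abs_le_of 1 b (by norm_num) with h | h | h
  · exact h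
  · have := ip_eq_of h1.1.le h2.1.le h.ge
    have h3 := h2.2.2 _ hne
    rw [← this] at h3; omega
  · have := ip_neg_of h1.1.le h2.1.le h.le
    have h3 := h1.2.1
    rw [this, ip_neg_right, h2.2.2 _ hne] at h3; omega

open Classical in
noncomputable def G (o : S.T) : ℕ → (ι ⊕ (S.T × Fin 4)) → ℤ
  | 0 => Sum.elim (te o) 0
  | n + 1 => Sum.elim 0 (fun x => if x.1 = o ∧ x.2.val = n then 1 else 0)

noncomputable def xφ : V ⊕ (S.T × Fin 4) → (ι ⊕ (S.T × Fin 4)) → ℤ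
  | .inl v => Sum.elim (S.φ v) 0
  | .inr x => G x.1 x.2 - G x.1 (x.2 + 1)

def xadj : V ⊕ (S.T × Fin 4) → V ⊕ (S.T × Fin 4) → Prop
  | .inl u, .inl v => S.adj u v
  | .inl u, .inr x => u = x.1.1 ∧ x.2.val = 0
  | .inr x, .inl u => u = x.1.1 ∧ x.2.val = 0
  | .inr x, .inr y => x.1 = y.1 ∧ (y.2.val = x.2.val + 1 ∨ x.2.val = y.2.val + 1)

noncomputable def xpos : V ⊕ (S.T × Fin 4) → ℤ
  | .inl v => S.pos v
  | .inr x => S.pos x.1.1 + td x.1 * (1 + x.2.val)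

def xa : V ⊕ (S.T × Fin 4) → ℤ
  | .inl v => S.a v
  | .inr x => if x.2.val = 3 then 1 else 0

open Classical in
noncomputable def xdeg (v : V ⊕ (S.T × Fin 4)) (d : ℤ) : ℤ :=
  if ∃ u, xadj v u ∧ xpos u = xpos v + d then 1 else 0

theorem td_cases (o : S.T) : td o = 1 ∨ td o = -1 := S.o1 _ _ (td_spec o)

theorem xa_lr {u : V} {x : S.T × Fin 4} (h : xadj (S := S) (.inl u) (.inr x)) : S.a u = 0 := by
  rw [h.1]; exact S.o3 _ _ (td_spec x.1)

section
variable [Fintype S.T]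

theorem ip_elim (f g : ι → ℤ) (f' g' : S.T × Fin 4 → ℤ) :
    ip (Sum.elim f f') (Sum.elim g g') = ip f g + ip f' g' := by
  simp [ip, Fintype.sum_sum_type]

open Classical in
theorem ipG (o o' : S.T) (i j : ℕ) (hi : i ≤ 4) (hj : j ≤ 4) :
    ip (G o i) (G o' j) = if o = o' ∧ i = j then 1 else 0 := by
  rcases i with _ | i <;> rcases j with _ | j
  · simp only [G, ip_elim, ip_zero_left]
    by_cases h : o = o'
    · subst h; simp [(te_spec o).1]
    · simp [h, te_ne h]
  · simp [G, ip_elim, ip_zero_left, ip_zero_right]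
  · simp [G, ip_elim, ip_zero_left, ip_zero_right]
  · simp only [G, ip_elim, ip_zero_left]
    rw [ip]
    by_cases h : o = o' ∧ i = j
    · obtain ⟨rfl, rfl⟩ := h
      rw [Finset.sum_eq_single (o, ⟨i, by omega⟩)]
      · simp
      · rintro ⟨b, c⟩ - hb
        have : ¬ (b = o ∧ c.val = i) := by
          rintro ⟨rfl, h⟩; exact hb (by simp [← h])
        simp [this]
      · simp
    · rw [Finset.sum_eq_zero]
      · rw [if_neg (fun q => h ⟨q.1, Nat.succ.inj q.2⟩)]; rfl
      · rintro ⟨b, c⟩ -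
        by_cases h1 : b = o ∧ c.val = i
        · have : ¬ (b = o' ∧ c.val = j) := by
            rintro ⟨rfl, h2⟩; exact h ⟨h1.1.symm, by omega⟩
          simp [this]
        · simp [h1]

open Classical in
theorem ipvG (v : V) (o : S.T) (j : ℕ) :
    ip (xφ (.inl v)) (G o j) = if v = o.1 ∧ j = 0 then -1 else 0 := by
  rcases j with _ | j
  · simp only [G, xφ, ip_elim, ip_zero_left]
    by_cases h : v = o.1
    · subst h; simp [(te_spec o).2.1]
    · simp [h, (te_spec o).2.2 v h]
  · simp [G, xφ, ip_elim, ip_zero_left, ip_zero_right]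

open Classical in
theorem ip_lr (v : V) (x : S.T × Fin 4) :
    ip (xφ (.inl v)) (xφ (.inr x)) = if v = x.1.1 ∧ x.2.val = 0 then -1 else 0 := by
  rw [xφ.eq_2, ip_sub_right, ipvG, ipvG]; simp

open Classical in
theorem ip_rr (x y : S.T × Fin 4) :
    ip (xφ (.inr x)) (xφ (.inr y)) = if x.1 = y.1 then
      (if x.2.val = y.2.val then 2 else if (y.2.val = x.2.val + 1 ∨ x.2.val = y.2.val + 1) then -1 else 0) else 0 := by
  have h1 := x.2.2
  have h2 := y.2.2
  rw [xφ.eq_2, xφ.eq_2, ip_sub_right, ip_sub_left, ip_sub_left, ipG, ipG, ipG, ipG] <;> try omega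
  by_cases h : x.1 = y.1
  · simp only [h, true_and, if_true]
    split_ifs <;> omega
  · simp [h]
theorem ip_ll (u v : V) : ip (xφ (S := S) (.inl u)) (xφ (.inl v)) = ip (S.φ u) (S.φ v) := by
  rw [xφ.eq_1, xφ.eq_1, ip_elim]; simp [ip_zero_left]
end

theorem xsymm (u v : V ⊕ (S.T × Fin 4)) (h : xadj u v) : xadj v u := by
  rcases u with u | x <;> rcases v with v | y
  · exact S.symm _ _ h
  · exact h
  · exact h
  · exact ⟨h.1.symm, by have := h.2; omega⟩

theorem xp1 (u v : V ⊕ (S.T × Fin 4)) (h : xadj u v) : xpos v = xpos u + 1 ∨ xpos v = xpos u - 1 := by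
  rcases u with u | ⟨o, i⟩ <;> rcases v with v | ⟨o', j⟩
  · exact S.p1 _ _ h
  · obtain ⟨rfl, h⟩ := h
    simp only at h
    have := td_cases o'
    simp [xpos, h]; omega
  · obtain ⟨rfl, h⟩ := h
    simp only at h
    have := td_cases o
    simp [xpos, h]; omega
  · obtain ⟨h1, h⟩ := h
    simp only at h h1
    subst h1
    have := td_cases o
    simp only [xpos]
    rcases this with h' | h' <;> rw [h'] <;> omega

theorem xp2 (u v v' : V ⊕ (S.T × Fin 4)) (h : xadj u v) (h' : xadj u v') (e : xpos v = xpos v') : v = v' := by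
  rcases u with u | ⟨o, i⟩ <;> rcases v with v | ⟨o1, j⟩ <;> rcases v' with v' | ⟨o2, k⟩
  · exact congrArg _ (S.p2 _ _ _ h h' e)
  · obtain ⟨rfl, h'⟩ := h'
    simp only [xpos] at h' e
    exact (S.o2 _ _ _ (td_spec o2) h (by simpa [h'] using e)).elim
  · obtain ⟨rfl, h⟩ := h
    simp only [xpos] at h e
    exact (S.o2 _ _ _ (td_spec o1) h' (by simpa [h] using e.symm)).elim
  · obtain ⟨h1, h⟩ := h
    obtain ⟨h2, h'⟩ := h'
    simp only at h h' h1 h2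
    have : o1 = o2 := Subtype.ext (h1.symm.trans h2)
    have : j = k := Fin.ext (by omega)
    simp [*]
  · rw [h.1, h'.1]
  · obtain ⟨rfl, h⟩ := h
    obtain ⟨h1, h'⟩ := h'
    simp only [xpos] at h h' h1 e
    subst h1
    rcases td_cases o with h' | h' <;> rw [h'] at e <;> omega
  · obtain ⟨rfl, h'⟩ := h'
    obtain ⟨h1, h⟩ := h
    simp only [xpos] at h h' h1 e
    subst h1
    rcases td_cases o with h' | h' <;> rw [h'] at e <;> omega
  · obtain ⟨h1, h⟩ := h
    obtain ⟨h2, h'⟩ := h'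
    simp only [xpos] at h h' h1 h2 e
    subst h1; subst h2
    have : j = k := Fin.ext (by rcases td_cases o with h' | h' <;> rw [h'] at e <;> omega)
    rw [this]

theorem xdeg_l (v : V) (d : ℤ) : xdeg (S := S) (.inl v) d = S.deg v d := by
  have key : (∃ u, xadj (S := S) (.inl v) u ∧ xpos u = xpos (S := S) (.inl v) + d) ↔
      ((∃ u, S.adj v u ∧ S.pos u = S.pos v + d) ∨ S.O v d) := by
    constructor
    · rintro ⟨u | ⟨o, i⟩, h1, h2⟩
      · exact .inl ⟨u, h1, h2⟩
      · right
        obtain ⟨rfl, h⟩ := h1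
        simp only [xpos] at h h2
        have : d = td o := by rw [h] at h2; push_cast at h2; linarith
        rw [this]; exact td_spec o
    · rintro (⟨u, h⟩ | h)
      · exact ⟨.inl u, h⟩
      · refine ⟨.inr (⟨v, d, h⟩, 0), ⟨rfl, rfl⟩, ?_⟩
        have := S.o4 _ _ _ h (td_spec ⟨v, d, h⟩)
        simp only [xpos]
        rw [← this]; simp
  rw [xdeg]
  split_ifs with h
  · rw [S.deg1 _ _ (key.1 h)]
  · rw [S.deg0 _ _ (fun h' => h (key.2 h'))]

theorem xdeg_r (o : S.T) (i : Fin 4) : xdeg (S := S) (.inr (o, i)) (td o) = (if i.val = 3 then 0 else 1) ∧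
    xdeg (S := S) (.inr (o, i)) (- td o) = 1 := by
  constructor
  · rw [xdeg]
    by_cases h : i.val = 3
    · rw [if_pos h, if_neg]
      rintro ⟨u | ⟨o', j⟩, h1, h2⟩
      · have := h1.2; simp only at this; omega
      · obtain ⟨rfl, h1⟩ := h1
        simp only [xpos] at h1 h2
        have := j.2
        rcases td_cases o with h' | h' <;> rw [h'] at h2 <;> omega
    · rw [if_neg h, if_pos]
      refine ⟨.inr (o, ⟨i + 1, by omega⟩), ⟨rfl, .inl rfl⟩, ?_⟩
      simp only [xpos]; push_cast; ring
  · rw [xdeg, if_pos]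
    rcases i with ⟨_ | i, hi⟩
    · exact ⟨.inl o.1, ⟨rfl, rfl⟩, by simp [xpos]⟩
    · refine ⟨.inr (o, ⟨i, by omega⟩), ⟨rfl, .inr rfl⟩, ?_⟩
      simp only [xpos]; push_cast; ring

theorem xrr {o o' : S.T} {i j : Fin 4} (h : xadj (S := S) (.inr (o, i)) (.inr (o', j))) : 
    o = o' ∧ (j.val = i.val + 1 ∨ i.val = j.val + 1) := h
theorem xar (x : S.T × Fin 4) : xa (S := S) (.inr x) = 0 ∧ x.2.val ≠ 3 ∨ xa (S := S) (.inr x) = 1 ∧ x.2.val = 3 := by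
  by_cases h : x.2.val = 3
  · exact .inr ⟨by simp [xa, h], h⟩
  · exact .inl ⟨by simp [xa, h], h⟩
/-- a neighbour of positive vertex 'inl' is 'inl' -/
theorem xpl {u : V} {y : V ⊕ (S.T × Fin 4)} (h : xadj (.inl u) y) (hu : 0 < S.a u) :
    ∃ v, y = .inl v ∧ S.adj u v := by
  rcases y with v | x
  · exact ⟨v, rfl, h⟩
  · have := xa_lr h; omega
/-- a tail vertex of positive weight has only weight zero neighbours -/
theorem xpr {x : S.T × Fin 4} {y : V ⊕ (S.T × Fin 4)} (h : xadj (.inr x) y) (hx : 0 < xa (S := S) (.inr x)) :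
    ∃ z : S.T × Fin 4, y = .inr z ∧ z.1 = x.1 ∧ x.2.val = 3 ∧ z.2.val = 2 := by
  have := xar x
  rcases y with v | z
  · have := h.2; omega
  · obtain ⟨h1, h2⟩ := h
    exact ⟨z, rfl, h1.symm, by omega, by have := z.2.2; omega⟩
theorem x2 {y : V ⊕ (S.T × Fin 4)} (h : 1 < xa y) : ∃ v, y = .inl v ∧ 1 < S.a v := by
  rcases y with v | x
  · exact ⟨v, rfl, h⟩
  · have := xar x; omega
/-- adjacent positive vertices are both old -/
theorem xpp {x y : V ⊕ (S.T × Fin 4)} (h : xadj x y) (hx : 0 < xa x) (hy : 0 < xa y) :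
    ∃ u v, x = .inl u ∧ y = .inl v ∧ S.adj u v := by
  rcases x with u | x
  · obtain ⟨v, h1, h2⟩ := xpl h hx
    exact ⟨u, v, rfl, h1, h2⟩
  · obtain ⟨z, rfl, h1, h2, h3⟩ := xpr h hx
    have := xar z; omega
/-- three in a row: old ends with same direction -/
theorem xmid {u w : V} {x : S.T × Fin 4} (h : xadj (.inl u) (.inr x)) (h' : xadj (S := S) (.inr x) (.inl w)) :
    u = w := by rw [h.1, h'.1]
theorem xstep2 {s : ℤ} (hs : s = 1 ∨ s = -1) {x y : V ⊕ (S.T × Fin 4)} {z : V ⊕ (S.T × Fin 4)}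
   (h : xpos y = xpos x + s) (h' : xpos z = xpos y + s) : x ≠ z := by
  rintro rfl; omega
/-- a positive vertex followed by three steps of which the first two are zeros and the third is old
must be all old -/
theorem xthree {s : ℤ} (hs : s = 1 ∨ s = -1) {x y z : V ⊕ (S.T × Fin 4)} {w : V}
    (h1 : xadj x y) (h2 : xadj y z) (h3 : xadj z (.inl w)) (q1 : xpos y = xpos x + s)
    (q2 : xpos z = xpos y + s) (q3 : xpos (S := S) (.inl w) = xpos z + s) (hx : 0 < xa x) :
    ∃ u v v', x = .inl u ∧ y = .inl v ∧ z = .inl v' := by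
  rcases x with u | x
  · obtain ⟨v, rfl, h⟩ := xpl h1 hx
    rcases z with v' | z
    · exact ⟨_, _, _, rfl, rfl, rfl⟩
    · exact (xstep2 hs q2 q3 (by rw [xmid h2 h3])).elim
  · obtain ⟨y, rfl, h⟩ := xpr h1 hx
    rcases z with v' | z
    · have := h2.2; omega
    · have := h2.2; have := h3.2; omega

theorem xlift {n : ℕ} {s : ℤ} {z : ℕ → V ⊕ (S.T × Fin 4)} {y : ℕ → V}
    (hz : ∀ i < n, xadj (z i) (z (i+1)) ∧ xpos (z (i+1)) = xpos (z i) + s)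
    (hy : ∀ i ≤ n, z i = .inl (y i)) : 
    ∀ i < n, S.adj (y i) (y (i+1)) ∧ S.pos (y (i+1)) = S.pos (y i) + s := by
  intro i hi
  have := hz i hi
  rw [hy i (by omega), hy (i+1) (by omega)] at this
  exact this

theorem xex {n : ℕ} {z : ℕ → V ⊕ (S.T × Fin 4)} (h : ∀ i ≤ n, ∃ v, z i = .inl v) :
    ∃ y : ℕ → V, ∀ i ≤ n, z i = .inl (y i) := by
  obtain ⟨v0, -⟩ := h 0 (by omega)
  have : ∀ i, ∃ v, i ≤ n → z i = .inl v := fun i => by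
    by_cases hi : i ≤ n
    · obtain ⟨v, hv⟩ := h i hi; exact ⟨v, fun _ => hv⟩
    · exact ⟨v0, fun h => (hi h).elim⟩
  choose y hy using this
  exact ⟨y, hy⟩

noncomputable def ext [Finite V] [Fintype S.T] : Sys (V ⊕ (S.T × Fin 4)) (ι ⊕ (S.T × Fin 4)) where
  adj := xadj
  pos := xpos
  φ := xφ
  a := xa
  O := fun _ _ => False
  symm := xsymm
  p1 := xp1
  p2 := xp2
  gadj := by
    rintro (u | x) (v | y) h
    · rw [ip_ll]; exact S.gadj _ _ h
    · rw [ip_lr]; exact if_pos h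
    · rw [ip_comm, ip_lr]; exact if_pos h
    · have := h.2
      rw [ip_rr, if_pos h.1, if_neg (by omega), if_pos h.2]
  gnon := by
    rintro (u | x) (v | y) hne h
    · rw [ip_ll]; exact S.gnon _ _ (fun e => hne (by rw [e])) h
    · rw [ip_lr]; exact if_neg h
    · rw [ip_comm, ip_lr]; exact if_neg h
    · rw [ip_rr]
      split_ifs with a1 a2 a3
      · exact (hne (congrArg _ (Prod.ext a1 (Fin.ext a2)))).elim
      · exact (h ⟨a1, a3⟩).elim
      · rfl
      · rfl
  bdd := by
    obtain ⟨B, hB⟩ := S.bdd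
    refine ⟨B + 4, ?_⟩
    rintro (u | ⟨o, i⟩)
    · have := hB u; simp only [xpos]; omega
    · have := hB o.1
      have := i.2
      simp only [xpos]
      rcases td_cases o with h | h <;> rw [h] <;> omega
  deg := xdeg
  deg1 := by
    intro v d h
    simp only [or_false] at h
    rw [xdeg, if_pos h]
  deg0 := by
    intro v d h
    simp only [or_false] at h
    rw [xdeg, if_neg h]
  wt := by
    rintro (v | ⟨o, i⟩)
    · rw [ip_ll, xdeg_l, xdeg_l]; exact S.wt v
    · rw [ip_rr, if_pos rfl, if_pos rfl]
      have h := xdeg_r o i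
      simp only [xa]
      rcases td_cases o with h' | h' <;> rw [h'] at h
      · rw [h.1, h.2]; split_ifs <;> omega
      · rw [neg_neg] at h; rw [h.1, h.2]; split_ifs <;> omega
  two := by
    rintro (v | ⟨o, i⟩)
    · rw [ip_ll]; exact S.two v
    · rw [ip_rr, if_pos rfl, if_pos rfl]
  a3 := by
    rintro (v | x)
    · exact S.a3 v
    · have := xar x; omega
  big := by
    intro x y hx hy
    obtain ⟨u, rfl, h1⟩ := x2 hx
    obtain ⟨v, rfl, h2⟩ := x2 hy
    rw [S.big _ _ h1 h2]
  nb := by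
    rintro b (u | x) (v | y) h1 h2 hne hu hv
    · obtain ⟨b, rfl, h⟩ := xpl (xsymm _ _ h1) hu
      exact S.nb b u v (S.symm _ _ h) h2 (fun e => hne (by rw [e])) hu hv
    · obtain ⟨b, rfl, h⟩ := xpl (xsymm _ _ h1) hu
      have := h2.2; have := xar y; omega
    · obtain ⟨b, rfl, h⟩ := xpl (xsymm _ _ h2) hv
      have := h1.2; have := xar x; omega
    · obtain ⟨z, rfl, a1, a2, a3⟩ := xpr (xsymm _ _ h1) hu
      obtain ⟨z', e, b1, b2, b3⟩ := xpr (xsymm _ _ h2) hv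
      cases e
      exact hne (congrArg _ (Prod.ext (by rw [← a1, ← b1]) (Fin.ext (by omega))))
  iv := by
    intro t x y ht h hx hy
    obtain ⟨t, rfl, h1⟩ := x2 (y := t) (by omega)
    obtain ⟨u, v, rfl, rfl, h2⟩ := xpp h (by omega) (by omega)
    exact S.iv t u v ht h2 hx hy
  f1 := by
    intro s hs z hz a0 a1 a2 a3
    obtain ⟨w, e3, -⟩ := x2 (y := z 3) (by omega)
    have b0 := hz 0 (by omega); have b1 := hz 1 (by omega); have b2 := hz 2 (by omega)
    simp only [zero_add, Nat.reduceAdd] at b0 b1 b2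
    rw [e3] at b2
    obtain ⟨u, v, v', e0, e1, e2⟩ := xthree hs b0.1 b1.1 b2.1 b0.2 b1.2 b2.2 (by omega)
    obtain ⟨y, hy⟩ := xex (n := 3) (z := z) (fun i hi => by interval_cases i <;> exact ⟨_, by assumption⟩)
    rw [hy _ (by omega)] at a0 a1 a2 a3
    exact S.f1 s hs y (xlift hz hy) a0 a1 a2 a3
  f2 := by
    intro s hs z hz a0 a1 a2 a3 a4
    obtain ⟨w, e4, -⟩ := x2 (y := z 4) (by omega)
    have b0 := hz 0 (by omega); have b1 := hz 1 (by omega); have b2 := hz 2 (by omega)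
    have b3 := hz 3 (by omega)
    simp only [zero_add, Nat.reduceAdd] at b0 b1 b2 b3
    rw [e4] at b3 a4
    obtain ⟨w', e3, -⟩ := xpl (xsymm _ _ b3.1) (by change S.a w = 3 at a4; omega)
    rw [e3] at b2
    obtain ⟨u, v, v', e0, e1, e2⟩ := xthree hs b0.1 b1.1 b2.1 b0.2 b1.2 b2.2 (by omega)
    obtain ⟨y, hy⟩ := xex (n := 4) (z := z) (fun i hi => by interval_cases i <;> exact ⟨_, by assumption⟩)
    rw [← e4] at a4
    rw [hy _ (by omega)] at a0 a1 a2 a3 a4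
    exact S.f2 s hs y (xlift hz hy) a0 a1 a2 a3 a4
  f3 := by
    intro s hs z hz a0 a1 a2 a3 a4 a5
    have b0 := hz 0 (by omega); have b1 := hz 1 (by omega); have b2 := hz 2 (by omega)
    have b3 := hz 3 (by omega); have b4 := hz 4 (by omega)
    simp only [zero_add, Nat.reduceAdd] at b0 b1 b2 b3 b4
    obtain ⟨u0, u1, e0, e1, -⟩ := xpp b0.1 (by omega) (by omega)
    obtain ⟨u4, u5, e4, e5, -⟩ := xpp b4.1 (by omega) (by omega)
    rw [e4] at b3
    obtain ⟨u, v, v', -, e2, e3⟩ := xthree hs b1.1 b2.1 b3.1 b1.2 b2.2 b3.2 (by omega)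
    obtain ⟨y, hy⟩ := xex (n := 5) (z := z) (fun i hi => by interval_cases i <;> exact ⟨_, by assumption⟩)
    rw [hy _ (by omega)] at a0 a1 a2 a3 a4 a5
    exact S.f3 s hs y (xlift hz hy) a0 a1 a2 a3 a4 a5
  f4 := by
    intro s hs z hz a0 a1 a2 a3 a4
    have b0 := hz 0 (by omega); have b1 := hz 1 (by omega); have b2 := hz 2 (by omega)
    have b3 := hz 3 (by omega)
    simp only [zero_add, Nat.reduceAdd] at b0 b1 b2 b3
    obtain ⟨u3, u4, e3, e4, -⟩ := xpp b3.1 (by omega) (by omega)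
    rw [e3] at b2
    obtain ⟨u, v, v', e0, e1, e2⟩ := xthree hs b0.1 b1.1 b2.1 b0.2 b1.2 b2.2 (by omega)
    obtain ⟨y, hy⟩ := xex (n := 4) (z := z) (fun i hi => by interval_cases i <;> exact ⟨_, by assumption⟩)
    rw [hy _ (by omega)] at a0 a1 a2 a3 a4
    exact S.f4 s hs y (xlift hz hy) a0 a1 a2 a3 a4
  o1 := fun _ _ h => h.elim
  o2 := fun _ _ _ h => h.elim
  o3 := fun _ _ h => h.elim
  o4 := fun _ _ _ h => h.elim
  o5 := fun _ _ h => h.elim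

theorem main' [Finite V] (S : Sys V ι) (l : ι) : (∀ u v, u ≠ v → S.φ u l * S.φ v l ≤ 0) ∧
    ∀ u, S.φ u l * S.φ u l ≤ 1 := by
  classical
  have : Finite S.T := inferInstanceAs (Finite {v : V // ∃ d, S.O v d})
  have : Fintype S.T := Fintype.ofFinite _
  obtain ⟨h1, h2⟩ := main (S := S.ext) (fun _ _ h => h) (.inl l)
  exact ⟨fun u v h => h1 (.inl u) (.inl v) (fun e => h (by cases e; rfl)), fun u => h2 (.inl u)⟩
end Sys
end

section
def GoodPos {V : Type} (G : SimpleGraph V) (pos : V → ℤ) : Prop :=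
  (∀ u v, G.Adj u v → pos v = pos u + 1 ∨ pos v = pos u - 1) ∧
  (∀ u v v', G.Adj u v → G.Adj u v' → pos v = pos v' → v = v')

theorem exists_pos {V : Type} [Finite V] : ∀ (n : ℕ) (G : SimpleGraph V), G.edgeSet.ncard ≤ n → G.IsAcyclic →
    (∀ x a b c, G.Adj x a → G.Adj x b → G.Adj x c → a = b ∨ a = c ∨ b = c) →
    ∃ pos : V → ℤ, GoodPos G pos := by
  classical
  intro n
  induction n with
  | zero =>
    intro G hn _ _
    have h0 : G.edgeSet = ∅ := by
      rw [← Set.ncard_eq_zero (Set.toFinite _)]; omega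
    have : ∀ u v, ¬ G.Adj u v := fun u v h => by
      have : s(u, v) ∈ G.edgeSet := h
      rw [h0] at this; exact this
    exact ⟨fun _ => 0, fun u v h => (this u v h).elim, fun u v _ h => (this u v h).elim⟩
  | succ n ih =>
    intro G hn hac hd
    by_cases hE : ∃ u v, G.Adj u v
    swap
    · push Not at hE
      exact ⟨fun _ => 0, fun u v h => (hE u v h).elim, fun u v _ h => (hE u v h).elim⟩
    obtain ⟨u, v, huv⟩ := hE
    set G' := G.deleteEdges {s(u, v)} with hG'
    have hle : G' ≤ G := G.deleteEdges_le _
    have adj' : ∀ x y, G'.Adj x y ↔ G.Adj x y ∧ s(x, y) ≠ s(u, v) := by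
      intro x y; simp [hG', SimpleGraph.deleteEdges_adj]
    have hbr : ¬ G'.Reachable u v := by
      have := SimpleGraph.isAcyclic_iff_forall_edge_isBridge.1 hac (e := s(u, v)) huv
      rw [SimpleGraph.isBridge_iff] at this
      exact this
    have hcard : G'.edgeSet.ncard ≤ n := by
      have : G'.edgeSet ⊂ G.edgeSet := by
        rw [Set.ssubset_iff_of_subset (SimpleGraph.edgeSet_mono hle)]
        exact ⟨s(u, v), huv, fun h => ((adj' u v).1 h).2 rfl⟩
      have := Set.ncard_lt_ncard this (Set.toFinite _)
      omega
    obtain ⟨q, hq1, hq2⟩ := ih G' hcard (hac.anti hle)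
      (fun x a b c h1 h2 h3 => hd x a b c (hle h1) (hle h2) (hle h3))
    have uu : ∀ y y', G'.Adj u y → G'.Adj u y' → y = y' := by
      intro y y' h h'
      rcases hd u y y' v (hle h) (hle h') huv with h1 | h1 | h1
      · exact h1
      · exact (((adj' _ _).1 h).2 (by rw [h1])).elim
      · exact (((adj' _ _).1 h').2 (by rw [h1])).elim
    have vv : ∀ y y', G'.Adj v y → G'.Adj v y' → y = y' := by
      intro y y' h h'
      rcases hd v y y' u (hle h) (hle h') huv.symm with h1 | h1 | h1
      · exact h1
      · exact (((adj' _ _).1 h).2 (by rw [h1, Sym2.eq_swap])).elim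
      · exact (((adj' _ _).1 h').2 (by rw [h1, Sym2.eq_swap])).elim
    have hs : ∃ s : ℤ, (s = 1 ∨ s = -1) ∧ ∀ y, G'.Adj u y → q y = q u - s := by
      by_cases h : ∃ y, G'.Adj u y
      · obtain ⟨y, hy⟩ := h
        refine ⟨q u - q y, by have := hq1 _ _ hy; omega, fun y' hy' => by rw [uu _ _ hy' hy]; ring⟩
      · exact ⟨1, .inl rfl, fun y hy => (h ⟨y, hy⟩).elim⟩
    obtain ⟨s, hs, su⟩ := hs
    have ht : ∃ t : ℤ, (t = 1 ∨ t = -1) ∧ ∀ y, G'.Adj v y → t * q y = t * q v + s := by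
      by_cases h : ∃ y, G'.Adj v y
      · obtain ⟨y, hy⟩ := h
        refine ⟨s * (q y - q v), ?_, fun y' hy' => ?_⟩
        · rcases hq1 _ _ hy with h | h <;> rw [h] <;> rcases hs with rfl | rfl <;> simp
        · rw [vv _ _ hy' hy]
          have : (q y - q v) * (q y - q v) = 1 := by
            rcases hq1 _ _ hy with h | h <;> rw [h] <;> ring
          linear_combination s * this
      · exact ⟨1, .inl rfl, fun y hy => (h ⟨y, hy⟩).elim⟩
    obtain ⟨t, ht, tv⟩ := ht
    let P : V → ℤ := fun x => if G'.Reachable v x then t * (q x - q v) + (q u + s) else q x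
    have Pu : P u = q u := if_neg (fun h => hbr h.symm)
    have Pv : P v = q u + s := by
      have : P v = t * (q v - q v) + (q u + s) := if_pos (SimpleGraph.Reachable.refl _)
      rw [this]; ring
    have PP : ∀ x y, G'.Adj x y → P y - P x = t * (q y - q x) ∨ P y - P x = q y - q x := by
      intro x y h
      by_cases hx : G'.Reachable v x
      · have hy : G'.Reachable v y := hx.trans h.reachable
        left; simp only [P, if_pos hx, if_pos hy]; ring
      · have hy : ¬ G'.Reachable v y := fun hy => hx (hy.trans h.symm.reachable)
        right; simp only [P, if_neg hx, if_neg hy]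
    have PuN : ∀ y, G'.Adj u y → P y = q u - s := by
      intro y h
      have hy : ¬ G'.Reachable v y := fun hy => hbr (hy.trans h.symm.reachable).symm
      rw [show P y = q y from if_neg hy, su y h]
    have PvN : ∀ y, G'.Adj v y → P y = q u + s + s := by
      intro y h
      have hy : G'.Reachable v y := h.reachable
      rw [show P y = t * (q y - q v) + (q u + s) from if_pos hy]
      have := tv y h
      linear_combination this
    have PI : ∀ x y y', G'.Adj x y → G'.Adj x y' → P y = P y' → y = y' := by
      intro x y y' h h' e
      apply hq2 x y y' h h'
      by_cases hx : G'.Reachable v x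
      · have hy : G'.Reachable v y := hx.trans h.reachable
        have hy' : G'.Reachable v y' := hx.trans h'.reachable
        simp only [P, if_pos hy, if_pos hy'] at e
        rcases ht with rfl | rfl <;> linarith
      · have hy : ¬ G'.Reachable v y := fun hy => hx (hy.trans h.symm.reachable)
        have hy' : ¬ G'.Reachable v y' := fun hy => hx (hy.trans h'.symm.reachable)
        simpa only [P, if_neg hy, if_neg hy'] using e
    have cases : ∀ x y, G.Adj x y → G'.Adj x y ∨ (x = u ∧ y = v) ∨ (x = v ∧ y = u) := by
      intro x y h
      by_cases hc : s(x, y) = s(u, v)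
      · right; simpa using hc
      · exact .inl ((adj' _ _).2 ⟨h, hc⟩)
    refine ⟨P, fun x y h => ?_, fun x y y' h h' e => ?_⟩
    · rcases cases x y h with h1 | ⟨rfl, rfl⟩ | ⟨rfl, rfl⟩
      · have := hq1 _ _ h1
        have h2 := PP _ _ h1
        rcases ht with rfl | rfl <;> omega
      · omega
      · omega
    · rcases cases x y h with h1 | ⟨rfl, rfl⟩ | ⟨rfl, rfl⟩ <;>
        rcases cases _ y' h' with h2 | ⟨h3, rfl⟩ | ⟨h3, rfl⟩
      · exact PI _ _ _ h1 h2 e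
      · subst h3; have := PuN _ h1; omega
      · subst h3; have := PvN _ h1; omega
      · have := PuN _ h2; omega
      · rfl
      · exact (huv.ne h3).elim
      · have := PvN _ h2; omega
      · exact (huv.ne h3.symm).elim
      · rfl

theorem finset_three {V : Type} [Finite V] (s : Set V) (h : s.ncard ≤ 2) (a b c : V) (ha : a ∈ s) (hb : b ∈ s) (hc : c ∈ s) :
    a = b ∨ a = c ∨ b = c := by
  by_contra hn
  push Not at hn
  have h1 : ({a, b, c} : Set V).ncard = 3 := Set.ncard_eq_three.2 ⟨a, b, c, hn.1, hn.2.1, hn.2.2, rfl⟩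
  have h2 : ({a, b, c} : Set V) ⊆ s := by
    rintro x (rfl | rfl | rfl) <;> assumption
  have := Set.ncard_le_ncard h2 (Set.toFinite _)
  omega

theorem Config.ex_pos (C : Config) (h : C.IsLinear) : ∃ pos : C.V → ℤ, GoodPos C.graph pos :=
  exists_pos _ C.graph le_rfl h.2 fun x a b c ha hb hc => finset_three _ (h.1 x) a b c ha hb hc

open Classical in
theorem Config.deg_eq (C : Config) {pos : C.V → ℤ} (h : GoodPos C.graph pos) (v : C.V) :
    (C.deg v : ℤ) = (if ∃ u, C.graph.Adj v u ∧ pos u = pos v + 1 then 1 else 0) +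
      (if ∃ u, C.graph.Adj v u ∧ pos u = pos v + -1 then 1 else 0) := by
  have h1 : C.graph.neighborSet v = {u | C.graph.Adj v u ∧ pos u = pos v + 1} ∪
      {u | C.graph.Adj v u ∧ pos u = pos v + -1} := by
    ext u
    simp only [SimpleGraph.mem_neighborSet, Set.mem_union, Set.mem_setOf_eq]
    constructor
    · intro hu
      rcases h.1 _ _ hu with h1 | h1
      · exact .inl ⟨hu, h1⟩
      · exact .inr ⟨hu, by omega⟩
    · rintro (h | h) <;> exact h.1
  have key : ∀ d, ({u | C.graph.Adj v u ∧ pos u = pos v + d} : Set C.V).ncard =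
      if ∃ u, C.graph.Adj v u ∧ pos u = pos v + d then 1 else 0 := by
    intro d
    split_ifs with hc
    · obtain ⟨u, hu⟩ := hc
      rw [Set.ncard_eq_one]
      refine ⟨u, ?_⟩
      ext x
      simp only [Set.mem_setOf_eq, Set.mem_singleton_iff]
      constructor
      · intro hx; exact h.2 _ _ _ hx.1 hu.1 (by omega)
      · rintro rfl; exact hu
    · rw [Set.ncard_eq_zero (Set.toFinite _), Set.eq_empty_iff_forall_notMem]
      intro x hx; exact hc ⟨x, hx⟩
  rw [Config.deg, h1, Set.ncard_union_eq _ (Set.toFinite _) (Set.toFinite _), key, key]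
  · push_cast; rfl
  · rw [Set.disjoint_left]
    rintro x ⟨-, hx⟩ ⟨-, hx'⟩
    omega
end

section
namespace Config

theorem hasPat (C : Config) {pos : C.V → ℤ} {s : ℤ} (hs : s = 1 ∨ s = -1)
    (n : ℕ) (z : ℕ → C.V) (hz : ∀ i < n, C.graph.Adj (z i) (z (i+1)) ∧ pos (z (i+1)) = pos (z i) + s)
    (p : List ℤ) (hp : n + 1 = p.length) (hw : ∀ i : Fin p.length, C.adjw (z i) = p.get i) : C.HasPattern p := by
  have hpos : ∀ i ≤ n, pos (z i) = pos (z 0) + s * i := by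
    intro i
    induction i with
    | zero => simp
    | succ i ih =>
      intro hi
      rw [(hz i (by omega)).2, ih (by omega)]; push_cast; ring
  refine ⟨n, z, ⟨⟨fun i hi j hj e => ?_, fun i hi => (hz i hi).1⟩, hp, hw⟩⟩
  have h1 := hpos i hi
  have h2 := hpos j hj
  rw [e] at h1
  rcases hs with rfl | rfl <;> omega

theorem chain_mono (C : Config) {pos : C.V → ℤ} (hp : GoodPos C.graph pos) {m : ℕ} {v : ℕ → C.V}
    (h : C.IsChain m v) : ∃ s : ℤ, (s = 1 ∨ s = -1) ∧ ∀ i ≤ m, pos (v i) = pos (v 0) + s * i := by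
  by_cases hm : m = 0
  · subst hm
    exact ⟨1, .inl rfl, fun i hi => by
      have : i = 0 := by omega
      subst this; simp⟩
  have h0 := hp.1 _ _ (h.2 0 (by omega))
  have key : ∀ i < m, pos (v (i+1)) = pos (v i) + (pos (v 1) - pos (v 0)) := by
    intro i
    induction i with
    | zero => intro _; simp
    | succ i ih =>
      intro hi
      have h1 := ih (by omega)
      have h2 := hp.1 _ _ (h.2 (i+1) hi)
      have h3 : pos (v (i+1+1)) ≠ pos (v i) := by
        intro e
        have := hp.2 _ _ _ (h.2 (i+1) hi) (h.2 i (by omega)).symm e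
        have := h.1 _ (by omega) _ (by omega) this
        omega
      simp only [zero_add] at h0
      omega
  refine ⟨pos (v 1) - pos (v 0), by simp only [zero_add] at h0; omega, ?_⟩
  intro i
  induction i with
  | zero => simp
  | succ i ih =>
    intro hi
    rw [key i (by omega), ih (by omega)]; push_cast; ring

theorem bad_flag : ∀ p ∈ badPatterns, ∀ i : Fin p.length, (p.get i).2 = true → 0 < i.val ∧ i.val + 1 < p.length := by
  decide

theorem not_leaf (C : Config) {x u v : C.V} (h : C.IsLeaf x) (hu : C.graph.Adj x u) (hv : C.graph.Adj x v) : u = v := by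
  have h1 : (C.graph.neighborSet x).ncard ≤ 1 := h
  exact (Set.ncard_le_one (Set.toFinite _)).1 h1 _ hu _ hv

theorem three (C : Config) (h : C.IsLinear) {x a b c : C.V} (ha : C.graph.Adj x a) (hb : C.graph.Adj x b)
    (hc : C.graph.Adj x c) : a = b ∨ a = c ∨ b = c :=
  finset_three _ (h.1 x) a b c ha hb hc

/-- location of bad vertices in the chain -/
theorem bad_loc (C : Config) (hlin : C.IsLinear) (hwc : C.WorkingConditions) {m : ℕ} {v : ℕ → C.V}
    (hc : C.IsEBPCand m v) {x : C.V} (hx : C.IsBad x) : ∃ j, 0 < j ∧ j < m ∧ v j = x ∧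
      (¬ C.IsLeaf (v 0) → 4 ≤ j) ∧ (¬ C.IsLeaf (v m) → j + 4 ≤ m) := by
  obtain ⟨pos, hp⟩ := C.ex_pos hlin
  obtain ⟨-, -, -, -, -, -, -, h8⟩ := hwc
  obtain ⟨p, hpb, mb, vb, hbp⟩ := h8 ⟨x, hx⟩
  obtain ⟨h1, h2, h3, h4⟩ := hc
  have hb4 := (hbp.2.2.2 x).1 hx
  obtain ⟨i, fi, rfl⟩ := hb4
  have hi := bad_flag p hpb i fi
  have hl := hbp.2.1
  obtain ⟨j, hj, ej⟩ := h2 p hpb mb vb hbp i (by omega)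
  obtain ⟨k, hk, ek⟩ := h2 p hpb mb vb hbp (i - 1) (by omega)
  obtain ⟨l, hl', el⟩ := h2 p hpb mb vb hbp (i + 1) (by omega)
  have a1 : C.graph.Adj (vb i) (vb (i+1)) := hbp.1.2 _ (by omega)
  have a2 : C.graph.Adj (vb i) (vb (i-1)) := by
    have := hbp.1.2 (i - 1) (by omega)
    rw [show i.val - 1 + 1 = i by omega] at this
    exact this.symm
  have ne : vb (i+1) ≠ vb (i-1) := fun e => by
    have := hbp.1.1 _ (by omega) _ (by omega) e; omega
  obtain ⟨s, hs, hmono⟩ := C.chain_mono hp h1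
  rw [← ej, ← el] at a1
  rw [← ej, ← ek] at a2
  rw [← ek, ← el] at ne
  have b1 := hp.1 _ _ a1
  have b2 := hp.1 _ _ a2
  rw [hmono _ hj, hmono _ hl'] at b1
  rw [hmono _ hj, hmono _ hk] at b2
  have c1 : l = j + 1 ∨ l + 1 = j := by rcases hs with rfl | rfl <;> omega
  have c2 : k = j + 1 ∨ k + 1 = j := by rcases hs with rfl | rfl <;> omega
  have c3 : k ≠ l := by rintro rfl; exact ne rfl
  obtain ⟨u, w, huw, au, aw, pu, pw⟩ := hx
  rw [← ej] at au aw
  have d1 : u = v l ∨ u = v k := by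
    rcases C.three hlin au a1 a2 with h | h | h
    · exact .inl h
    · exact .inr h
    · exact (ne h).elim
  have d2 : w = v l ∨ w = v k := by
    rcases C.three hlin aw a1 a2 with h | h | h
    · exact .inl h
    · exact .inr h
    · exact (ne h).elim
  have dd : 0 < C.adjw (v l) ∧ 0 < C.adjw (v k) := by
    rcases d1 with rfl | rfl <;> rcases d2 with rfl | rfl
    · exact (huw rfl).elim
    · exact ⟨pu, pw⟩
    · exact ⟨pw, pu⟩
    · exact (huw rfl).elim
  refine ⟨j, by omega, by omega, ej, fun hf => ?_, fun hf => ?_⟩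
  · obtain ⟨-, z1, z2⟩ := h3.resolve_left hf
    have : k ≠ 1 ∧ k ≠ 2 ∧ l ≠ 1 ∧ l ≠ 2 := by
      refine ⟨?_, ?_, ?_, ?_⟩ <;> rintro rfl <;> omega
    omega
  · obtain ⟨-, z1, z2⟩ := h4.resolve_left hf
    have : k ≠ m-1 ∧ k ≠ m-2 ∧ l ≠ m-1 ∧ l ≠ m-2 := by
      refine ⟨?_, ?_, ?_, ?_⟩ <;> rintro rfl <;> omega
    omega

theorem mem_out (C : Config) {m : ℕ} {v : ℕ → C.V} (h : C.IsChain m v) (h5 : ¬ C.IsLeaf (v 0) ∨ ¬ C.IsLeaf (v m) → 5 ≤ m) {i : ℕ} (hi : i ≤ m) :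
    v i ∈ C.OutsidePart m v ↔ (¬ C.IsLeaf (v 0) ∧ i ≤ 2) ∨ (¬ C.IsLeaf (v m) ∧ m ≤ i + 2) := by
  constructor
  · rintro ((hx | ⟨hf, hx⟩) | ⟨hf, hx⟩)
    · exact (hx i hi rfl).elim
    · left
      have := h5 (.inl hf)
      refine ⟨hf, ?_⟩
      rcases hx with hx | hx | hx <;> have := h.1 _ hi _ (by omega) hx <;> omega
    · right
      have := h5 (.inr hf)
      refine ⟨hf, ?_⟩
      rcases hx with hx | hx | hx <;> have := h.1 _ hi _ (by omega) hx <;> omega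
  · rintro (⟨hf, hx⟩ | ⟨hf, hx⟩)
    · refine .inl (.inr ⟨hf, ?_⟩)
      interval_cases i <;> simp
    · refine .inr ⟨hf, ?_⟩
      have := h5 (.inr hf)
      have : i = m ∨ i = m - 1 ∨ i = m - 2 := by omega
      rcases this with h | h | h <;> simp [h]

theorem len5 (C : Config) (hlin : C.IsLinear) (hwc : C.WorkingConditions) (hbad : ∃ x : C.V, C.IsBad x) {m : ℕ} {v : ℕ → C.V}
    (hc : C.IsEBPCand m v) : 2 ≤ m ∧ (¬ C.IsLeaf (v 0) ∨ ¬ C.IsLeaf (v m) → 5 ≤ m) := by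
  obtain ⟨x, hx⟩ := hbad
  obtain ⟨j, h1, h2, -, h3, h4⟩ := C.bad_loc hlin hwc hc hx
  refine ⟨by omega, ?_⟩
  rintro (h | h)
  · have := h3 h; omega
  · have := h4 h; omega

theorem out_not_bad (C : Config) (hlin : C.IsLinear) (hwc : C.WorkingConditions) {m : ℕ} {v : ℕ → C.V}
    (hc : C.IsEBPCand m v) {x : C.V} (hx : x ∈ C.OutsidePart m v) : ¬ C.IsBad x := by
  intro hb
  have h5 := C.len5 hlin hwc ⟨x, hb⟩ hc
  obtain ⟨j, h1, h2, rfl, h3, h4⟩ := C.bad_loc hlin hwc hc hb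
  rcases (C.mem_out hc.1 h5.2 h2.le).1 hx with ⟨h, h'⟩ | ⟨h, h'⟩
  · have := h3 h; omega
  · have := h4 h; omega

theorem cut (C : Config) (hlin : C.IsLinear) (hwc : C.WorkingConditions) (hbad : ∃ x : C.V, C.IsBad x) {m : ℕ} {v : ℕ → C.V}
    (hc : C.IsEBPCand m v) {x y : C.V} (hx : x ∈ C.OutsidePart m v) (hy : y ∉ C.OutsidePart m v) (hxy : C.graph.Adj x y) :
    5 ≤ m ∧ C.adjw x = 0 ∧ ((¬ C.IsLeaf (v 0) ∧ x = v 2 ∧ y = v 3) ∨ (¬ C.IsLeaf (v m) ∧ x = v (m-2) ∧ y = v (m-3))) := by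
  obtain ⟨h2, h5⟩ := C.len5 hlin hwc hbad hc
  obtain ⟨pos, hp⟩ := C.ex_pos hlin
  obtain ⟨s, hs, hmono⟩ := C.chain_mono hp hc.1
  have hk : ∃ k ≤ m, v k = y := by
    by_contra hn
    push Not at hn
    exact hy (.inl (.inl hn))
  obtain ⟨k, hk, rfl⟩ := hk
  have hk2 := (not_congr (C.mem_out hc.1 h5 hk)).1 hy
  have hi : ∃ i ≤ m, v i = x := by
    by_contra hn
    push Not at hn
    by_cases k0 : k = 0
    · subst k0
      have hl : C.IsLeaf (v 0) := by
        by_contra hl; exact hk2 (.inl ⟨hl, by omega⟩)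
      exact hn 1 (by omega) (C.not_leaf hl (hc.1.2 0 (by omega)) hxy.symm)
    have a1 : C.graph.Adj (v k) (v (k-1)) := by
      have := hc.1.2 (k - 1) (by omega)
      rw [show k - 1 + 1 = k by omega] at this
      exact this.symm
    by_cases km : k = m
    · subst km
      have hl : C.IsLeaf (v k) := by
        by_contra hl; exact hk2 (.inr ⟨hl, by omega⟩)
      exact hn (k-1) (by omega) (C.not_leaf hl a1 hxy.symm)
    have a2 : C.graph.Adj (v k) (v (k+1)) := hc.1.2 k (by omega)
    rcases C.three hlin hxy.symm a1 a2 with h | h | h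
    · exact hn _ (by omega) h.symm
    · exact hn _ (by omega) h.symm
    · have := hc.1.1 _ (by omega) _ (by omega) h; omega
  obtain ⟨i, hi, rfl⟩ := hi
  have hi2 := (C.mem_out hc.1 h5 hi).1 hx
  have b := hp.1 _ _ hxy
  rw [hmono _ hk, hmono _ hi] at b
  have ik : k = i + 1 ∨ k + 1 = i := by rcases hs with rfl | rfl <;> omega
  push Not at hk2
  rcases hi2 with ⟨hf, h⟩ | ⟨hf, h⟩
  · have m5 := h5 (.inl hf)
    have := hk2.1 hf
    have e1 : i = 2 := by omega
    have e2 : k = 3 := by omega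
    subst e1; subst e2
    exact ⟨m5, (hc.2.2.1.resolve_left hf).2.2, .inl ⟨hf, rfl, rfl⟩⟩
  · have m5 := h5 (.inr hf)
    have := hk2.2 hf
    have e1 : i = m - 2 := by omega
    have e2 : k = m - 3 := by omega
    subst e1; subst e2
    exact ⟨m5, (hc.2.2.2.resolve_left hf).2.2, .inr ⟨hf, rfl, rfl⟩⟩

theorem screw (C : Config) (hlin : C.IsLinear) {N : ℕ} {φ : C.V → Fin N → ℤ} (hφ : C.IsEmbedding N φ)
    {x y : C.V} (hxy : C.graph.Adj x y) (ax : C.adjw x = 0) :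
    ∃ e, φ x e ≠ 0 ∧ φ y e ≠ 0 ∧ φ x e * φ x e = 1 := by
  have h1 := hφ x y
  rw [if_neg hxy.ne, if_pos hxy] at h1
  have : ∃ e, φ x e * φ y e ≠ 0 := by
    by_contra hn
    push Not at hn
    have : dot (φ x) (φ y) = 0 := Finset.sum_eq_zero fun i _ => hn i
    omega
  obtain ⟨e, he⟩ := this
  have hx := left_ne_zero_of_mul he
  refine ⟨e, hx, right_ne_zero_of_mul he, ?_⟩
  have h2 := hφ x x
  rw [if_pos rfl] at h2
  have h3 : φ x e * φ x e ≤ dot (φ x) (φ x) :=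
    Finset.single_le_sum (f := fun i => φ x i * φ x i) (fun i _ => mul_self_nonneg _) (Finset.mem_univ e)
  have h4 := hlin.1 x
  have h5 : φ x e * φ x e ≤ 2 := by
    unfold adjw at ax; omega
  have : φ x e < 2 := by nlinarith
  have : -2 < φ x e := by nlinarith
  have : φ x e = 1 ∨ φ x e = -1 := by omega
  rcases this with h | h <;> rw [h] <;> norm_num
end Config
end

section
namespace Config

open Classical in
noncomputable def toSys (C : Config) (hlin : C.IsLinear) (hwc : C.WorkingConditions)
    (hbad : ∃ x : C.V, C.IsBad x) (N : ℕ) (φ : C.V → Fin N → ℤ)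
    (hφ : C.IsEmbedding N φ) (m : ℕ) (vc : ℕ → C.V)
    (hc : C.IsEBPCand m vc) (hclean : C.AllScrewsClean N φ m vc) (pos : C.V → ℤ)
    (hp : GoodPos C.graph pos) : Sys {x // x ∈ C.OutsidePart m vc} (Fin N) where
  adj x y := C.graph.Adj x.1 y.1
  pos x := pos x.1
  φ x := φ x.1
  a x := C.adjw x.1
  O x d := ∃ y, y ∉ C.OutsidePart m vc ∧ C.graph.Adj x.1 y ∧ pos y = pos x.1 + d
  symm _ _ h := h.symm
  p1 _ _ h := hp.1 _ _ h
  p2 _ _ _ h h' e := Subtype.ext (hp.2 _ _ _ h h' e)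
  gadj u v h := by
    have := hφ u.1 v.1
    rwa [if_neg h.ne, if_pos h] at this
  gnon u v h h' := by
    have := hφ u.1 v.1
    rwa [if_neg (fun e => h (Subtype.ext e)), if_neg h'] at this
  bdd := by
    refine ⟨∑ v, |pos v|, fun v => ?_⟩
    have := Finset.single_le_sum (f := fun v => |pos v|) (fun v _ => abs_nonneg _) (Finset.mem_univ v.1)
    have := abs_le.1 this
    constructor <;> linarith
  deg x d := if ∃ u, C.graph.Adj x.1 u ∧ pos u = pos x.1 + d then 1 else 0
  deg1 v d h := by
    rw [if_pos]
    rcases h with ⟨u, h⟩ | ⟨u, -, h⟩ <;> exact ⟨u, h⟩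
  deg0 v d h := by
    rw [if_neg]
    rintro ⟨u, hu⟩
    apply h
    by_cases h' : u ∈ C.OutsidePart m vc
    · exact .inl ⟨⟨u, h'⟩, hu⟩
    · exact .inr ⟨u, h', hu⟩
  wt v := by
    have h1 := hφ v.1 v.1
    rw [if_pos rfl] at h1
    have h2 := C.deg_eq hp v.1
    change dot (φ v.1) (φ v.1) = _
    rw [h1, add_assoc, ← h2, adjw]; ring
  two v := by
    have h1 := hφ v.1 v.1
    rw [if_pos rfl] at h1
    change 2 ≤ dot (φ v.1) (φ v.1)
    rw [h1]; exact hwc.1 _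
  a3 v := hwc.2.1 _
  big u v h h' := Subtype.ext (hwc.2.2.1 _ _ h h')
  nb b u v h h' hne pu pv :=
    C.out_not_bad hlin hwc hc b.2 ⟨u.1, v.1, fun e => hne (Subtype.ext e), h, h', pu, pv⟩
  iv t u v ht h hu hv := hwc.2.2.2.2.1 ⟨t.1, ht⟩ u.1 v.1 h hu hv
  f1 s hs z hz a0 a1 a2 a3 := by
    have := hwc.2.1 (z 3).1
    have h7 := hwc.2.2.2.2.2.2.1
    have : C.adjw (z 3).1 = 2 ∨ C.adjw (z 3).1 = 3 := by omega
    rcases this with h | h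
    · exact h7 [1, 0, 0, 2] (by simp [forbiddenPatterns]) (C.hasPat hs 3 (fun i => (z i).1) hz _ rfl (by
        intro i; fin_cases i <;> assumption))
    · exact h7 [1, 0, 0, 3] (by simp [forbiddenPatterns]) (C.hasPat hs 3 (fun i => (z i).1) hz _ rfl (by
        intro i; fin_cases i <;> assumption))
  f2 s hs z hz a0 a1 a2 a3 a4 := by
    have h7 := hwc.2.2.2.2.2.2.1
    exact h7 [1, 0, 0, 0, 3] (by simp [forbiddenPatterns]) (C.hasPat hs 4 (fun i => (z i).1) hz _ rfl (by
        intro i; fin_cases i <;> assumption))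
  f3 s hs z hz a0 a1 a2 a3 a4 a5 := by
    have h7 := hwc.2.2.2.2.2.2.1
    exact h7 [1, 1, 0, 0, 1, 2] (by simp [forbiddenPatterns]) (C.hasPat hs 5 (fun i => (z i).1) hz _ rfl (by
        intro i; fin_cases i <;> assumption))
  f4 s hs z hz a0 a1 a2 a3 a4 := by
    have h7 := hwc.2.2.2.2.2.2.1
    refine h7 [3, 1, 0, 0, 1] (by simp [forbiddenPatterns]) (C.hasPat (pos := pos) (s := -s) (by omega) 4 (fun i => (z (4 - i)).1) ?_ _ rfl (by
        intro i; fin_cases i <;> assumption))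
    intro i hi
    have := hz (4 - (i + 1)) (by omega)
    rw [show 4 - (i+1) + 1 = 4 - i by omega] at this
    exact ⟨this.1.symm, by omega⟩
  o1 v d h := by
    obtain ⟨y, -, h1, h2⟩ := h
    have := hp.1 _ _ h1
    omega
  o2 v d u h h' e := by
    obtain ⟨y, hy, h1, h2⟩ := h
    have : y = u.1 := hp.2 _ _ _ h1 h' (by omega)
    exact hy (this ▸ u.2)
  o3 v d h := by
    obtain ⟨y, hy, h1, h2⟩ := h
    exact (C.cut hlin hwc hbad hc v.2 hy h1).2.1
  o4 v d d' h h' := by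
    obtain ⟨y, hy, h1, h2⟩ := h
    obtain ⟨y', hy', h1', h2'⟩ := h'
    obtain ⟨m5, -, q⟩ := C.cut hlin hwc hbad hc v.2 hy h1
    obtain ⟨-, -, q'⟩ := C.cut hlin hwc hbad hc v.2 hy' h1'
    have : y = y' := by
      rcases q with ⟨-, e1, e2⟩ | ⟨-, e1, e2⟩ <;> rcases q' with ⟨-, e1', e2'⟩ | ⟨-, e1', e2'⟩
      · rw [e2, e2']
      · have := hc.1.1 _ (by omega) _ (by omega) (e1.symm.trans e1'); omega
      · have := hc.1.1 _ (by omega) _ (by omega) (e1.symm.trans e1'); omega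
      · rw [e2, e2']
    subst this
    omega
  o5 v d h := by
    obtain ⟨y, hy, h1, h2⟩ := h
    obtain ⟨m5, ax, q⟩ := C.cut hlin hwc hbad hc v.2 hy h1
    obtain ⟨e, e1, e2, e3⟩ := C.screw hlin hφ h1 ax
    have cl : ∀ u, u ≠ v.1 → u ≠ y → φ u e = 0 := by
      rcases q with ⟨hf, q1, q2⟩ | ⟨hf, q1, q2⟩
      · rw [q1, q2]
        rw [q1] at e1; rw [q2] at e2
        exact hclean.1 e ⟨hf, by omega, e1, e2⟩
      · rw [q1, q2]
        rw [q1] at e1; rw [q2] at e2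
        exact hclean.2 e ⟨hf, by omega, e1, e2⟩
    have key : ∀ (c : ℤ) (f : Fin N → ℤ), ip f (Pi.single e c) = f e * c := by
      intro c f; simp [ip, Pi.single_apply]
    refine ⟨Pi.single e (-φ v.1 e), ?_, ?_, fun u hu => ?_⟩
    · rw [key]; simp [e3]
    · rw [key]; linarith
    · rw [key, cl u.1 (fun e => hu (Subtype.ext e)) (by rintro rfl; exact hy u.2), zero_mul]

theorem final (C : Config) (hlin : C.IsLinear) (hwc : C.WorkingConditions)
    (hbad : ∃ x : C.V, C.IsBad x) (N : ℕ) (φ : C.V → Fin N → ℤ)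
    (hφ : C.IsEmbedding N φ) (m : ℕ) (vc : ℕ → C.V)
    (hebp : C.IsExtBadPart m vc) (hclean : C.AllScrewsClean N φ m vc) :
    C.IsStandardOn N φ (C.OutsidePart m vc) := by
  obtain ⟨pos, hp⟩ := C.ex_pos hlin
  have M := Sys.main' (C.toSys hlin hwc hbad N φ hφ m vc hebp.1 hclean pos hp)
  have M1 : ∀ l, ∀ u ∈ C.OutsidePart m vc, ∀ v ∈ C.OutsidePart m vc, u ≠ v → φ u l * φ v l ≤ 0 :=
    fun l u hu v hv h => (M l).1 ⟨u, hu⟩ ⟨v, hv⟩ (fun e => h (congrArg Subtype.val e))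
  have M2 : ∀ l, ∀ u ∈ C.OutsidePart m vc, φ u l = 0 ∨ φ u l = 1 ∨ φ u l = -1 := by
    intro l u hu
    have := (M l).2 ⟨u, hu⟩
    change φ u l * φ u l ≤ 1 at this
    exact abs_le_of 1 (by rw [sq]; exact this) (by norm_num)
  intro u hu v hv
  have hcard : ((supp (φ u) ∩ supp (φ v)).card : ℤ) = ∑ i, if φ u i ≠ 0 ∧ φ v i ≠ 0 then 1 else 0 := by
    rw [supp, supp, ← Finset.filter_and, Finset.card_filter]; push_cast; rfl
  have hd := hφ u v
  rw [hcard]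
  by_cases h : u = v
  · subst h
    rw [if_pos rfl] at hd ⊢
    rw [← hd, dot]
    refine Finset.sum_congr rfl fun i _ => ?_
    rcases M2 i u hu with h | h | h <;> simp [h]
  · rw [if_neg h] at hd ⊢
    have : (∑ i, if φ u i ≠ 0 ∧ φ v i ≠ 0 then (1:ℤ) else 0) = - dot (φ u) (φ v) := by
      rw [dot, ← Finset.sum_neg_distrib]
      refine Finset.sum_congr rfl fun i _ => ?_
      have := M1 i u hu v hv h
      rcases M2 i u hu with h1 | h1 | h1 <;> rcases M2 i v hv with h2 | h2 | h2 <;>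
        simp [h1, h2] at this ⊢
    rw [this, hd]
    split_ifs <;> simp
end Config
end

/-- Lemma 4.8: if all screws are clean, then the outside part is embedded standardly. -/
theorem statement2 (C : Config) (hlin : C.IsLinear) (hwc : C.WorkingConditions)
    (hbad : ∃ x : C.V, C.IsBad x) (N : ℕ) (φ : C.V → Fin N → ℤ)
    (hφ : C.IsEmbedding N φ) (m : ℕ) (vc : ℕ → C.V)
    (hebp : C.IsExtBadPart m vc) (hclean : C.AllScrewsClean N φ m vc) :
    C.IsStandardOn N φ (C.OutsidePart m vc) := by
  exact C.final hlin hwc hbad N φ hφ m vc hebp hclean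

end LensPaper
end
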